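/- Let k be a field, Z a quasicompact separated scheme over k, and A_Z a quasicoherent sheaf of k-algebras on Z. Let W be a full subcategory of the category Aff(Z) of affine open subsets of Z that is closed under pairwise intersections and whose objects cover Z, and let A_W be the presheaf of k-algebras on W given by the sections of A_Z. Let j* : μ(A_Z) → A_W-mod be the (exact) restriction functor sending a sheaf to the presheaf of its sections over objects of W. Then for all M, N in μ(A_Z) and all n ≥ 0, the induced map on Yoneda Ext groups Ext^n_{μ(A_Z)}(M, N) → Ext^n_{A_W-mod}(j*M, j*N) is an isomorphism, where Ext on the left is computed in the abelian category μ(A_Z) and Ext on the right in the abelian category of presheaves of left A_W-modules on W. -/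

import Mathlib

/-!
# Statement 16

Let `k` be a field, `Z` a quasicompact separated scheme over `k`, and `A_Z` a quasicoherent
sheaf of `k`-algebras on `Z`.  Let `W` be a full subcategory of the category `Aff(Z)` of
affine open subsets of `Z`, closed under pairwise intersections and whose objects cover
`Z`, and let `A_W` be the presheaf of `k`-algebras on `W` given by the sections of `A_Z`.
Let `j* : μ(A_Z) → A_W-mod` be the (exact) restriction functor, where `μ(A_Z)` is the
category of sheaves of left `A_Z`-modules quasicoherent as `O_Z`-modules and `A_W-mod` the
category of presheaves of left `A_W`-modules on `W`.  Then for all `M, N ∈ μ(A_Z)` and all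
`n ≥ 0`, the induced map on Yoneda Ext groups
`Ext^n_{μ(A_Z)}(M, N) → Ext^n_{A_W-mod}(j*M, j*N)` is an isomorphism.

Formalization.  Sheaves/presheaves of modules are formalized concretely (`AlgData`,
`LModData`, `LModHom` below).  Yoneda `Ext^n` for `n ≥ 1` is the set of `n`-extensions
`0 → N → E_n → ... → E_1 → M → 0` — with all objects in the relevant category: in
`μ(A_Z)`, sheaves quasicoherent over `O_Z` with sheaf-exactness; in `A_W-mod`, arbitrary
presheaves on `W` with sectionwise exactness — modulo the equivalence relation generated by
morphisms of `n`-extensions; `j*` acts on extensions by componentwise restriction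
(`NExt.reindex`), and that this lands in sectionwise exact sequences (exactness of `j*`) is
part of the statement.  For `n = 0`, `Ext⁰ = Hom` and the induced map is
`φ ↦ j*φ = φ.reindex`.  Quasicoherence is encoded by the localization criterion on basic
opens of affine opens, as before.
-/

set_option linter.unusedVariables false

open AlgebraicGeometry CategoryTheory TopologicalSpace

noncomputable section

variable (k : Type) [Field k] (X : Scheme.{0}) (G : Set X.Opens)

/-- A presheaf of `k`-algebras on the family `G` of open subsets of the scheme `X`
(for `G = Set.univ`, on all open subsets). -/
structure AlgData : Type 1 where
  sec : G → Type
  [ringSec : ∀ U, Ring (sec U)]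
  [algSec : ∀ U, Algebra k (sec U)]
  res : ∀ {U V : G}, (V : X.Opens) ≤ (U : X.Opens) → sec U →ₐ[k] sec V
  res_id : ∀ (U : G) (x : sec U), res (le_refl (U : X.Opens)) x = x
  res_comp : ∀ {U V W : G} (h1 : (W : X.Opens) ≤ V) (h2 : (V : X.Opens) ≤ U) (x : sec U),
    res h1 (res h2 x) = res (h1.trans h2) x

attribute [instance] AlgData.ringSec AlgData.algSec

variable {k X G}

/-- Reindexing a presheaf of algebras along an inclusion `G' ⊆ G` of families of opens. -/
def AlgData.reindex (A : AlgData k X G) {G' : Set X.Opens} (hG : G' ⊆ G) :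
    AlgData k X G' where
  sec U := A.sec ⟨U.1, hG U.2⟩
  res {U V} h := A.res (U := ⟨U.1, hG U.2⟩) (V := ⟨V.1, hG V.2⟩) h
  res_id U x := A.res_id _ x
  res_comp h1 h2 x := A.res_comp h1 h2 x

variable (k X G) in
/-- A presheaf of left `A`-modules over the presheaf of `k`-algebras `A`, on the family `G`
of open subsets of `X`. -/
structure LModData (A : AlgData k X G) : Type 1 where
  sec : G → Type
  [acgSec : ∀ U, AddCommGroup (sec U)]
  [modSec : ∀ U, Module k (sec U)]
  res : ∀ {U V : G}, (V : X.Opens) ≤ (U : X.Opens) → sec U →ₗ[k] sec V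
  res_id : ∀ (U : G) (x : sec U), res (le_refl (U : X.Opens)) x = x
  res_comp : ∀ {U V W : G} (h1 : (W : X.Opens) ≤ V) (h2 : (V : X.Opens) ≤ U) (x : sec U),
    res h1 (res h2 x) = res (h1.trans h2) x
  lsmul : ∀ U : G, A.sec U → sec U → sec U
  lsmul_one : ∀ U m, lsmul U 1 m = m
  lsmul_mul : ∀ U a b m, lsmul U a (lsmul U b m) = lsmul U (a * b) m
  lsmul_add : ∀ U a m m', lsmul U a (m + m') = lsmul U a m + lsmul U a m'
  add_lsmul : ∀ U a a' m, lsmul U (a + a') m = lsmul U a m + lsmul U a' m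
  lsmul_k : ∀ U (c : k) a m, lsmul U (c • a) m = c • lsmul U a m
  lsmul_res : ∀ {U V : G} (h : (V : X.Opens) ≤ U) a m,
    res h (lsmul U a m) = lsmul V (A.res h a) (res h m)

attribute [instance] LModData.acgSec LModData.modSec

namespace LModData

variable {A : AlgData k X G}

/-- The sheaf axiom: unique gluing of compatible local sections (compatibility measured on
all common refinements belonging to `G`; for `G = Set.univ` the usual sheaf condition). -/
def IsSheafCond (M : LModData k X G A) : Prop :=
  ∀ (U : G) (ι : Type) (V : ι → G) (hle : ∀ i, (V i : X.Opens) ≤ (U : X.Opens)),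
    ((⨆ i, (V i : X.Opens)) = (U : X.Opens)) →
    ∀ s : ∀ i, M.sec (V i),
      (∀ (i j : ι) (W : G) (h1 : (W : X.Opens) ≤ V i) (h2 : (W : X.Opens) ≤ V j),
        M.res h1 (s i) = M.res h2 (s j)) →
      ∃! t : M.sec U, ∀ i, M.res (hle i) t = s i

/-- Reindexing along an inclusion `G' ⊆ G` (e.g. restriction of a sheaf to the affine
open subsets). -/
def reindex (M : LModData k X G A) {G' : Set X.Opens} (hG : G' ⊆ G) :
    LModData k X G' (A.reindex hG) where
  sec U := M.sec ⟨U.1, hG U.2⟩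
  res {U V} h := M.res (U := ⟨U.1, hG U.2⟩) (V := ⟨V.1, hG V.2⟩) h
  res_id U x := M.res_id _ x
  res_comp h1 h2 x := M.res_comp h1 h2 x
  lsmul U := M.lsmul ⟨U.1, hG U.2⟩
  lsmul_one U := M.lsmul_one _
  lsmul_mul U := M.lsmul_mul _
  lsmul_add U := M.lsmul_add _
  add_lsmul U := M.add_lsmul _
  lsmul_k U := M.lsmul_k _
  lsmul_res h a m := M.lsmul_res h a m

end LModData

/-- A morphism of presheaves of left `A`-modules. -/
structure LModHom {k : Type} [Field k] {X : Scheme.{0}} {G : Set X.Opens}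
    {A : AlgData k X G} (P Q : LModData k X G A) where
  app : ∀ U : G, P.sec U →ₗ[k] Q.sec U
  comm_res : ∀ {U V : G} (h : (V : X.Opens) ≤ U) (x : P.sec U),
    app V (P.res h x) = Q.res h (app U x)
  comm_lsmul : ∀ (U : G) (a : A.sec U) (x : P.sec U),
    app U (P.lsmul U a x) = Q.lsmul U a (app U x)

/-- Reindexing a morphism along an inclusion `G' ⊆ G`. -/
def LModHom.reindex {A : AlgData k X G} {P Q : LModData k X G A} (f : LModHom P Q)
    {G' : Set X.Opens} (hG : G' ⊆ G) : LModHom (P.reindex hG) (Q.reindex hG) where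
  app U := f.app ⟨U.1, hG U.2⟩
  comm_res h x := f.comm_res h x
  comm_lsmul U a x := f.comm_lsmul _ a x

/-- An `n`-extension `0 → N → E_{n} → ... → E_1 → P → 0` of `P` by `N` in the category of
presheaves of left `A`-modules: a chain `obj (n+1) → obj n → ... → obj 0` together with
identifications `obj 0 ≅ P` and `N ≅ obj (n+1)` (the objects `obj i` for `i > n + 1` are
irrelevant padding).  Exactness of the resulting sequence
`0 → N ≅ obj (n+1) → obj n → ... → obj 1 → obj 0 ≅ P → 0` is imposed separately, either
sectionwise (for presheaf categories) or locally (for sheaf categories). -/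
structure NExt {k : Type} [Field k] {X : Scheme.{0}} {G : Set X.Opens} (n : ℕ)
    {A : AlgData k X G} (P N : LModData k X G A) : Type 1 where
  obj : ℕ → LModData k X G A
  d : ∀ i : ℕ, LModHom (obj (i + 1)) (obj i)
  isoP : LModHom (obj 0) P
  isoP_bij : ∀ U : G, Function.Bijective (isoP.app U)
  isoN : LModHom N (obj (n + 1))
  isoN_bij : ∀ U : G, Function.Bijective (isoN.app U)

namespace NExt

variable {A : AlgData k X G} {P N : LModData k X G A} {n : ℕ}

/-- Exactness of the `n`-extension as a sequence of *presheaves*: sectionwise exactness. -/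
def SectionwiseExact (E : NExt n P N) : Prop :=
  (∀ U : G, Function.Injective ((E.d n).app U)) ∧
  (∀ j < n, ∀ (U : G) (x : (E.obj (j + 1)).sec U),
    (E.d j).app U x = 0 ↔ x ∈ Set.range ((E.d (j + 1)).app U)) ∧
  (∀ U : G, Function.Surjective ((E.d 0).app U))

/-- Exactness of the `n`-extension as a sequence of *sheaves*: injectivity at the left end,
complexes with locally vanishing homology in the middle, local surjectivity at the right
end. -/
def LocallyExact (E : NExt n P N) : Prop :=
  (∀ U : G, Function.Injective ((E.d n).app U)) ∧
  (∀ j < n, ∀ (U : G) (y : (E.obj (j + 2)).sec U),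
    (E.d j).app U ((E.d (j + 1)).app U y) = 0) ∧
  (∀ j < n, ∀ (U : G) (x : (E.obj (j + 1)).sec U), (E.d j).app U x = 0 →
    ∀ p : X, p ∈ (U : X.Opens) → ∃ (V : G) (hV : (V : X.Opens) ≤ U), p ∈ (V : X.Opens) ∧
      (E.obj (j + 1)).res hV x ∈ Set.range ((E.d (j + 1)).app V)) ∧
  (∀ (U : G) (x : (E.obj 0).sec U) (p : X), p ∈ (U : X.Opens) →
    ∃ (V : G) (hV : (V : X.Opens) ≤ U), p ∈ (V : X.Opens) ∧
      (E.obj 0).res hV x ∈ Set.range ((E.d 0).app V))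

/-- A morphism of `n`-extensions inducing the identity on `P` and on `N`; the equivalence
relation generated by these is the Yoneda equivalence of `n`-extensions. -/
def MorRel (E E' : NExt n P N) : Prop :=
  ∃ f : ∀ i : ℕ, LModHom (E.obj i) (E'.obj i),
    (∀ (i : ℕ) (U : G) (x : (E.obj (i + 1)).sec U),
      (f i).app U ((E.d i).app U x) = (E'.d i).app U ((f (i + 1)).app U x)) ∧
    (∀ (U : G) (x : (E.obj 0).sec U), E'.isoP.app U ((f 0).app U x) = E.isoP.app U x) ∧
    (∀ (U : G) (m : N.sec U), (f (n + 1)).app U (E.isoN.app U m) = E'.isoN.app U m)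

/-- Reindexing an `n`-extension along an inclusion `G' ⊆ G` (restriction to a subfamily of
opens). -/
def reindex (E : NExt n P N) {G' : Set X.Opens} (hG : G' ⊆ G) :
    NExt n (P.reindex hG) (N.reindex hG) where
  obj i := (E.obj i).reindex hG
  d i := (E.d i).reindex hG
  isoP := E.isoP.reindex hG
  isoP_bij U := E.isoP_bij _
  isoN := E.isoN.reindex hG
  isoN_bij U := E.isoN_bij _

end NExt

/-- The Yoneda `Ext^n`-set of `n`-extensions of `P` by `N` satisfying the condition `Cond`
(membership of the objects in the relevant abelian category, and the relevant exactness),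
modulo the equivalence relation generated by morphisms of `n`-extensions. -/
def YExt (n : ℕ) {A : AlgData k X G} (P N : LModData k X G A)
    (Cond : NExt n P N → Prop) : Type 1 :=
  Quot (fun (E E' : {E : NExt n P N // Cond E}) => NExt.MorRel E.1 E'.1)

end

noncomputable section

variable {k : Type} [Field k] {Z : Scheme.{0}}

/-- The left `O_Z`-module sheaf underlying `M` (via `str : O_Z → A_Z` and the `A_Z`-action)
is quasicoherent: for every affine open `U` and `f ∈ O_Z(U)`, the restriction
`M(U) → M(U_f)` is the localization of `M(U)` at the powers of `f`. -/
def IsQCohMod {A : AlgData k Z Set.univ}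
    (str : ∀ U : Z.Opens, Γ(Z, U) →+* A.sec ⟨U, trivial⟩)
    (M : LModData k Z Set.univ A) : Prop :=
  ∀ (U : Z.Opens), IsAffineOpen U → ∀ f : Γ(Z, U),
    (∀ y : M.sec ⟨Z.basicOpen f, trivial⟩, ∃ (p : ℕ) (m : M.sec ⟨U, trivial⟩),
      M.lsmul ⟨Z.basicOpen f, trivial⟩
          ((str (Z.basicOpen f) (Z.presheaf.map (homOfLE (Z.basicOpen_le f)).op f)) ^ p) y =
        M.res (U := ⟨U, trivial⟩) (V := ⟨Z.basicOpen f, trivial⟩) (Z.basicOpen_le f) m) ∧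
    (∀ m : M.sec ⟨U, trivial⟩,
      M.res (U := ⟨U, trivial⟩) (V := ⟨Z.basicOpen f, trivial⟩) (Z.basicOpen_le f) m = 0 →
        ∃ p : ℕ, M.lsmul ⟨U, trivial⟩ ((str U f) ^ p) m = 0)

noncomputable section

variable {k : Type} [Field k] {X : Scheme.{0}} {G : Set X.Opens} {A : AlgData k X G}

namespace LModData

/-- The module structure over the sections of `A` carried by the sections of `P`. -/
instance instModuleSec (P : LModData k X G A) (U : G) : Module (A.sec U) (P.sec U) where
  smul a m := P.lsmul U a m
  one_smul m := P.lsmul_one U m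
  mul_smul a b m := (P.lsmul_mul U a b m).symm
  smul_zero a := by
    have h := P.lsmul_add U a 0 0
    rw [add_zero] at h
    exact left_eq_add.1 h
  smul_add a m m' := P.lsmul_add U a m m'
  add_smul a b m := P.add_lsmul U a b m
  zero_smul m := by
    have h := P.add_lsmul U 0 0 m
    rw [add_zero] at h
    exact left_eq_add.1 h

lemma lsmul_eq_smul (P : LModData k X G A) (U : G) (a : A.sec U) (m : P.sec U) :
    P.lsmul U a m = a • m := rfl

lemma res_smul (P : LModData k X G A) {U V : G} (h : (V : X.Opens) ≤ U) (a : A.sec U)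
    (m : P.sec U) : P.res h (a • m) = A.res h a • P.res h m := P.lsmul_res h a m

lemma algebraMap_smul_sec (P : LModData k X G A) (U : G) (c : k) (m : P.sec U) :
    algebraMap k (A.sec U) c • m = c • m := by
  rw [Algebra.algebraMap_eq_smul_one, ← lsmul_eq_smul, P.lsmul_k, P.lsmul_one]

/-- Build a presheaf of modules from modules over the sections of `A`. -/
@[reducible] def ofModules (sec : G → Type) [∀ U, AddCommGroup (sec U)]
    [∀ U, Module (A.sec U) (sec U)]
    (res : ∀ {U V : G}, (V : X.Opens) ≤ (U : X.Opens) → sec U →+ sec V)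
    (res_id : ∀ (U : G) (x : sec U), res (le_refl (U : X.Opens)) x = x)
    (res_comp : ∀ {U V W : G} (h1 : (W : X.Opens) ≤ V) (h2 : (V : X.Opens) ≤ U) (x : sec U),
      res h1 (res h2 x) = res (h1.trans h2) x)
    (res_smul : ∀ {U V : G} (h : (V : X.Opens) ≤ U) (a : A.sec U) (m : sec U),
      res h (a • m) = A.res h a • res h m) : LModData k X G A where
  sec := sec
  modSec U := Module.compHom (sec U) (algebraMap k (A.sec U))
  res {U V} h :=
    letI := Module.compHom (sec U) (algebraMap k (A.sec U))
    letI := Module.compHom (sec V) (algebraMap k (A.sec V))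
    { toFun := res h
      map_add' := map_add _
      map_smul' := fun c x => by
        change res h (algebraMap k (A.sec U) c • x) = algebraMap k (A.sec V) c • res h x
        rw [res_smul, AlgHom.commutes] }
  res_id U x := res_id U x
  res_comp h1 h2 x := res_comp h1 h2 x
  lsmul U a m := a • m
  lsmul_one U m := one_smul _ m
  lsmul_mul U a b m := (mul_smul a b m).symm
  lsmul_add U a m m' := smul_add a m m'
  add_lsmul U a b m := add_smul a b m
  lsmul_k U c a m := by
    change (c • a) • m = algebraMap k (A.sec U) c • a • m
    rw [smul_smul, Algebra.smul_def]
  lsmul_res h a m := res_smul h a m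

end LModData

namespace LModHom

variable {P Q R S : LModData k X G A}

@[ext] lemma ext {f g : LModHom P Q} (h : ∀ U x, f.app U x = g.app U x) : f = g := by
  cases f; cases g
  congr
  funext U
  exact LinearMap.ext (h U)

@[simp] lemma map_smul (f : LModHom P Q) (U : G) (a : A.sec U) (x : P.sec U) :
    f.app U (a • x) = a • f.app U x := f.comm_lsmul U a x

/-- Build a morphism from additive maps. -/
def ofAddHom (app : ∀ U : G, P.sec U →+ Q.sec U)
    (comm_res : ∀ {U V : G} (h : (V : X.Opens) ≤ U) (x : P.sec U),
      app V (P.res h x) = Q.res h (app U x))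
    (comm_smul : ∀ (U : G) (a : A.sec U) (x : P.sec U), app U (a • x) = a • app U x) :
    LModHom P Q where
  app U :=
    { toFun := app U
      map_add' := map_add _
      map_smul' := fun c x => by
        simp only [RingHom.id_apply]
        rw [← P.algebraMap_smul_sec, comm_smul, Q.algebraMap_smul_sec] }
  comm_res h x := comm_res h x
  comm_lsmul U a x := comm_smul U a x

@[simp] lemma ofAddHom_app (app : ∀ U : G, P.sec U →+ Q.sec U) (h1) (h2) (U : G) (x : P.sec U) :
    (ofAddHom app h1 h2).app U x = app U x := rfl

/-- The components of a morphism as linear maps over the sections of `A`. -/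
def lin (f : LModHom P Q) (U : G) : P.sec U →ₗ[A.sec U] Q.sec U where
  toFun := f.app U
  map_add' := map_add _
  map_smul' a x := f.map_smul U a x

@[simp] lemma lin_apply (f : LModHom P Q) (U : G) (x : P.sec U) : f.lin U x = f.app U x := rfl

/-- The identity morphism. -/
def id (P : LModData k X G A) : LModHom P P where
  app _ := LinearMap.id
  comm_res _ _ := rfl
  comm_lsmul _ _ _ := rfl

@[simp] lemma id_app (U : G) (x : P.sec U) : (id P).app U x = x := rfl

/-- Composition of morphisms, in the order of functions. -/
def comp (g : LModHom Q R) (f : LModHom P Q) : LModHom P R where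
  app U := (g.app U).comp (f.app U)
  comm_res h x := by simp [f.comm_res, g.comm_res]
  comm_lsmul U a x := by simp [f.comm_lsmul, g.comm_lsmul]

@[simp] lemma comp_app (g : LModHom Q R) (f : LModHom P Q) (U : G) (x : P.sec U) :
    (g.comp f).app U x = g.app U (f.app U x) := rfl

instance : Zero (LModHom P Q) :=
  ⟨ofAddHom (fun _ => 0) (fun _ _ => by simp) (fun _ _ _ => by simp)⟩

@[simp] lemma zero_app (U : G) (x : P.sec U) : (0 : LModHom P Q).app U x = 0 := rfl

instance : Add (LModHom P Q) :=
  ⟨fun f g => ofAddHom (fun U => (f.app U : P.sec U →+ Q.sec U) + (g.app U : P.sec U →+ Q.sec U))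
    (fun h x => by simp [f.comm_res, g.comm_res])
    (fun U a x => by simp)⟩

@[simp] lemma add_app (f g : LModHom P Q) (U : G) (x : P.sec U) :
    (f + g).app U x = f.app U x + g.app U x := rfl

instance : Sub (LModHom P Q) :=
  ⟨fun f g => ofAddHom (fun U => (f.app U : P.sec U →+ Q.sec U) - (g.app U : P.sec U →+ Q.sec U))
    (fun h x => by simp [f.comm_res, g.comm_res])
    (fun U a x => by simp [smul_sub])⟩

@[simp] lemma sub_app (f g : LModHom P Q) (U : G) (x : P.sec U) :
    (f - g).app U x = f.app U x - g.app U x := rfl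

/-- Sectionwise injective morphisms. -/
def Inj (f : LModHom P Q) : Prop := ∀ U, Function.Injective (f.app U)

/-- Sectionwise surjective morphisms. -/
def Surj (f : LModHom P Q) : Prop := ∀ U, Function.Surjective (f.app U)

lemma inj_of_eq_zero {f : LModHom P Q} (h : ∀ U x, f.app U x = 0 → x = 0) : f.Inj :=
  fun U => (injective_iff_map_eq_zero _).2 (h U)

lemma id_inj : (id P).Inj := fun _ _ _ h => h

lemma id_surj : (id P).Surj := fun _ x => ⟨x, rfl⟩

/-- A morphism whose image lies in the image of a monomorphism factors through it. -/
lemma exists_lift {f : LModHom P Q} {i : LModHom R Q} (hi : i.Inj)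
    (h : ∀ U x, ∃ y, i.app U y = f.app U x) :
    ∃ g : LModHom P R, ∀ U x, i.app U (g.app U x) = f.app U x := by
  choose g hg using h
  refine ⟨ofAddHom (fun U => ⟨⟨g U, ?_⟩, ?_⟩) ?_ ?_, hg⟩
  · exact hi U (by simp [hg])
  · exact fun x y => hi U (by simp [hg])
  · exact fun {U V} h x => hi V (by simp [hg, f.comm_res, i.comm_res])
  · exact fun U a x => hi U (by simp [hg])

/-- A morphism vanishing on the kernel of an epimorphism descends. -/
lemma exists_desc {f : LModHom P Q} {p : LModHom P R} (hp : p.Surj)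
    (h : ∀ U x, p.app U x = 0 → f.app U x = 0) :
    ∃ g : LModHom R Q, ∀ U x, g.app U (p.app U x) = f.app U x := by
  have key : ∀ U x y, p.app U x = p.app U y → f.app U x = f.app U y := fun U x y e => by
    rw [← sub_eq_zero, ← map_sub]
    exact h U _ (by rw [map_sub, e, sub_self])
  choose s hs using hp
  refine ⟨ofAddHom (fun U => ⟨⟨fun y => f.app U (s U y), ?_⟩, ?_⟩) ?_ ?_, ?_⟩
  · exact h U _ (hs U 0)
  · intro x y
    change f.app U (s U (x + y)) = f.app U (s U x) + f.app U (s U y)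
    rw [← map_add]
    exact key U _ _ (by simp [hs])
  · intro U V h x
    change f.app V (s V _) = Q.res h (f.app U (s U x))
    rw [← f.comm_res]
    exact key V _ _ (by simp [hs, p.comm_res])
  · intro U a x
    change f.app U (s U _) = a • (f.app U (s U x))
    rw [← map_smul]
    exact key U _ _ (by simp [hs])
  · intro U x
    exact key U _ _ (by simp [hs])

lemma exists_inverse {f : LModHom P Q} (hi : f.Inj) (hs : f.Surj) :
    ∃ g : LModHom Q P, (∀ U x, g.app U (f.app U x) = x) ∧ ∀ U y, f.app U (g.app U y) = y := by
  obtain ⟨g, hg⟩ := exists_lift (f := id Q) hi (fun U x => hs U x)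
  exact ⟨g, fun U x => hi U (by rw [hg]; rfl), hg⟩

end LModHom

namespace LModData

variable {P Q R : LModData k X G A}

/-- The subpresheaf defined by a family of submodules stable under restriction. -/
def subObj (P : LModData k X G A) (S : ∀ U, Submodule (A.sec U) (P.sec U))
    (hS : ∀ {U V : G} (h : (V : X.Opens) ≤ U) (x), x ∈ S U → P.res h x ∈ S V) :
    LModData k X G A :=
  ofModules (fun U => S U)
    (fun {U V} h => AddMonoidHom.mk' (fun x => ⟨P.res h x.1, hS h _ x.2⟩)
      (fun x y => by ext; simp))
    (fun U x => Subtype.ext (P.res_id U x.1))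
    (fun h1 h2 x => Subtype.ext (P.res_comp h1 h2 x.1))
    (fun h a m => Subtype.ext (P.res_smul h a m.1))

lemma exists_subObj (P : LModData k X G A) (S : ∀ U, Submodule (A.sec U) (P.sec U))
    (hS : ∀ {U V : G} (h : (V : X.Opens) ≤ U) (x), x ∈ S U → P.res h x ∈ S V) :
    ∃ (K : LModData k X G A) (i : LModHom K P), i.Inj ∧
      ∀ U x, (∃ y, i.app U y = x) ↔ x ∈ S U := by
  refine ⟨subObj P S hS, LModHom.ofAddHom (fun U => (S U).subtype.toAddMonoidHom)
    (fun _ _ => rfl) (fun _ _ _ => rfl), fun U x y h => Subtype.ext h, fun U x => ?_⟩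
  exact ⟨fun ⟨y, hy⟩ => hy ▸ y.2, fun h => ⟨⟨x, h⟩, rfl⟩⟩

/-- Existence of kernels. -/
lemma exists_ker (f : LModHom P Q) :
    ∃ (K : LModData k X G A) (i : LModHom K P), i.Inj ∧
      ∀ U x, f.app U x = 0 ↔ ∃ y, i.app U y = x := by
  obtain ⟨K, i, hi, h⟩ := exists_subObj P (fun U => LinearMap.ker (f.lin U))
    (fun h x hx => by
      rw [LinearMap.mem_ker] at hx ⊢
      rw [LModHom.lin_apply] at hx ⊢
      rw [f.comm_res, hx, map_zero])
  exact ⟨K, i, hi, fun U x => (h U x).symm⟩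

/-- The quotient presheaf by a family of submodules stable under restriction. -/
def quotObj (P : LModData k X G A) (S : ∀ U, Submodule (A.sec U) (P.sec U))
    (hS : ∀ {U V : G} (h : (V : X.Opens) ≤ U), (S U).toAddSubgroup ≤
      (S V).toAddSubgroup.comap (P.res h : P.sec U →+ P.sec V)) :
    LModData k X G A :=
  ofModules (fun U => P.sec U ⧸ S U)
    (fun {U V} h => QuotientAddGroup.map _ _ (P.res h : P.sec U →+ P.sec V) (hS h))
    (by
      rintro U ⟨x⟩
      exact congrArg (Submodule.Quotient.mk) (P.res_id U x))
    (by
      rintro U V W h1 h2 ⟨x⟩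
      exact congrArg (Submodule.Quotient.mk) (P.res_comp h1 h2 x))
    (by
      rintro U V h a ⟨x⟩
      exact congrArg (Submodule.Quotient.mk) (P.res_smul h a x))

/-- Existence of cokernels. -/
lemma exists_coker (f : LModHom P Q) :
    ∃ (C : LModData k X G A) (p : LModHom Q C), p.Surj ∧
      ∀ U x, p.app U x = 0 ↔ ∃ y, f.app U y = x := by
  have hr : ∀ {U V : G} (h : (V : X.Opens) ≤ U),
      (LinearMap.range (f.lin U)).toAddSubgroup ≤
        (LinearMap.range (f.lin V)).toAddSubgroup.comap (Q.res h : Q.sec U →+ Q.sec V) := by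
    rintro U V h _ ⟨y, rfl⟩
    exact ⟨P.res h y, f.comm_res h y⟩
  generalize hS : (fun U => LinearMap.range (f.lin U)) = S
  have hS' : ∀ U x, x ∈ S U ↔ ∃ y, f.app U y = x := fun U x => by subst hS; rfl
  have hr' : ∀ {U V : G} (h : (V : X.Opens) ≤ U), (S U).toAddSubgroup ≤
      (S V).toAddSubgroup.comap (Q.res h : Q.sec U →+ Q.sec V) := by
    subst hS; exact hr
  clear hS hr
  refine ⟨quotObj Q S hr', LModHom.ofAddHom (Q := quotObj Q S hr')
      (fun U => ((S U).mkQ).toAddMonoidHom) ?_ ?_, ?_, ?_⟩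
  · intro U V h x; rfl
  · intro U a x; exact ((S U).mkQ).map_smul a x
  · intro U; exact Submodule.mkQ_surjective _
  · intro U x
    rw [← hS']
    exact Submodule.Quotient.mk_eq_zero _

/-- The product of two presheaves of modules. -/
def prod (P Q : LModData k X G A) : LModData k X G A :=
  ofModules (fun U => P.sec U × Q.sec U)
    (fun {U V} h => AddMonoidHom.mk' (fun x => (P.res h x.1, Q.res h x.2))
      (fun x y => by simp))
    (fun U x => Prod.ext (P.res_id U x.1) (Q.res_id U x.2))
    (fun h1 h2 x => Prod.ext (P.res_comp h1 h2 x.1) (Q.res_comp h1 h2 x.2))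
    (fun h a m => Prod.ext (P.res_smul h a m.1) (Q.res_smul h a m.2))

/-- First projection. -/
def fst (P Q : LModData k X G A) : LModHom (P.prod Q) P :=
  LModHom.ofAddHom (fun U => AddMonoidHom.fst (P.sec U) (Q.sec U)) (fun _ _ => rfl)
    (fun _ _ _ => rfl)

/-- Second projection. -/
def snd (P Q : LModData k X G A) : LModHom (P.prod Q) Q :=
  LModHom.ofAddHom (fun U => AddMonoidHom.snd (P.sec U) (Q.sec U)) (fun _ _ => rfl)
    (fun _ _ _ => rfl)

/-- The morphism into a product with given components. -/
def pair (f : LModHom R P) (g : LModHom R Q) : LModHom R (P.prod Q) :=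
  LModHom.ofAddHom (Q := P.prod Q)
    (fun U => AddMonoidHom.prod (f.app U : R.sec U →+ P.sec U) (g.app U : R.sec U →+ Q.sec U))
    (fun h x => Prod.ext (f.comm_res h x) (g.comm_res h x))
    (fun U a x => Prod.ext (f.map_smul U a x) (g.map_smul U a x))

@[simp] lemma fst_pair (f : LModHom R P) (g : LModHom R Q) (U : G) (x : R.sec U) :
    (fst P Q).app U ((pair f g).app U x) = f.app U x := rfl

@[simp] lemma snd_pair (f : LModHom R P) (g : LModHom R Q) (U : G) (x : R.sec U) :
    (snd P Q).app U ((pair f g).app U x) = g.app U x := rfl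

lemma prod_ext {U : G} {x y : (P.prod Q).sec U}
    (h1 : (fst P Q).app U x = (fst P Q).app U y) (h2 : (snd P Q).app U x = (snd P Q).app U y) :
    x = y := Prod.ext h1 h2

lemma exists_prod_mk {U : G} (x : P.sec U) (y : Q.sec U) :
    ∃ z : (P.prod Q).sec U, (fst P Q).app U z = x ∧ (snd P Q).app U z = y := ⟨(x, y), rfl, rfl⟩

/-- The zero presheaf of modules. -/
def zeroObj (A : AlgData k X G) : LModData k X G A :=
  ofModules (fun _ => PUnit) (fun _ => 0) (fun _ _ => rfl) (fun _ _ _ => rfl) (fun _ _ _ => rfl)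

lemma zeroObj_eq {U : G} (x y : (zeroObj A).sec U) : x = y := rfl

end LModData

end

noncomputable section

variable {k : Type} [Field k] {X : Scheme.{0}} {G : Set X.Opens} {A : AlgData k X G}

namespace LModData

/-- Generators, defined over `V`, of the free presheaf on all sections of `M`. -/
abbrev FreeGen (M : LModData k X G A) (V : G) : Type :=
  {i : Σ V₀ : G, M.sec V₀ // (V : X.Opens) ≤ i.1}

/-- The free presheaf of modules on all sections of `M`. -/
def free (M : LModData k X G A) : LModData k X G A :=
  ofModules (fun V => M.FreeGen V →₀ A.sec V)
    (fun {U V} h => Finsupp.liftAddHom fun i =>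
      (Finsupp.singleAddHom (⟨i.1, h.trans i.2⟩ : M.FreeGen V)).comp
        (A.res h : A.sec U →+ A.sec V))
    (fun U x => by
      induction x using Finsupp.induction_linear with
      | zero => simp
      | add x y hx hy => rw [map_add, hx, hy]
      | single i a =>
        simp [A.res_id])
    (fun {U V W} h1 h2 x => by
      induction x using Finsupp.induction_linear with
      | zero => simp
      | add x y hx hy => simp only [map_add, hx, hy]
      | single i a => simp [A.res_comp])
    (fun {U V} h a x => by
      induction x using Finsupp.induction_linear with
      | zero => simp
      | add x y hx hy => simp only [map_add, smul_add, hx, hy]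
      | single i b =>
        rw [Finsupp.smul_single]
        simp only [Finsupp.liftAddHom_apply_single, AddMonoidHom.comp_apply,
          Finsupp.singleAddHom_apply, smul_eq_mul, AddMonoidHom.coe_coe, map_mul,
          Finsupp.smul_single])

/-- The element `a • e_i` of the free presheaf. -/
def freeSingle (M : LModData k X G A) {V : G} (i : M.FreeGen V) (a : A.sec V) : M.free.sec V :=
  (Finsupp.single i a : M.FreeGen V →₀ A.sec V)

lemma smul_freeSingle (M : LModData k X G A) {V : G} (i : M.FreeGen V) (a b : A.sec V) :
    a • M.freeSingle i b = M.freeSingle i (a * b) :=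
  Finsupp.smul_single a i b

lemma free_res_single (M : LModData k X G A) {U V : G} (h : (V : X.Opens) ≤ U)
    (i : M.FreeGen U) (a : A.sec U) :
    M.free.res h (M.freeSingle i a) = M.freeSingle ⟨i.1, h.trans i.2⟩ (A.res h a) := by
  change Finsupp.liftAddHom (fun i : M.FreeGen U =>
      (Finsupp.singleAddHom (⟨i.1, h.trans i.2⟩ : M.FreeGen V)).comp
        (A.res h : A.sec U →+ A.sec V)) (Finsupp.single i a) = _
  simp [freeSingle]

section Reindex

variable {G' : Set X.Opens} (hG : G' ⊆ G)

/-- The element `a • e_i` of the restriction of a free presheaf to a smaller family. -/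
def freeSingleRes (M : LModData k X G A) {V : G'} (i : M.FreeGen ⟨V.1, hG V.2⟩)
    (a : (A.reindex hG).sec V) : (M.free.reindex hG).sec V :=
  M.freeSingle i (show A.sec ⟨V.1, hG V.2⟩ from a)

lemma smul_freeSingleRes (M : LModData k X G A) {V : G'} (i : M.FreeGen ⟨V.1, hG V.2⟩)
    (a b : (A.reindex hG).sec V) :
    a • M.freeSingleRes hG i b = M.freeSingleRes hG i (a * b) :=
  smul_freeSingle M i _ _

lemma freeRes_res_single (M : LModData k X G A) {U V : G'} (h : (V : X.Opens) ≤ U)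
    (i : M.FreeGen ⟨U.1, hG U.2⟩) (a : (A.reindex hG).sec U) :
    (M.free.reindex hG).res h (M.freeSingleRes hG i a) =
      M.freeSingleRes hG ⟨i.1, h.trans i.2⟩ ((A.reindex hG).res h a) :=
  free_res_single M (U := ⟨U.1, hG U.2⟩) (V := ⟨V.1, hG V.2⟩) h i _

lemma freeRes_induction (M : LModData k X G A) {V : G'} {p : (M.free.reindex hG).sec V → Prop}
    (x : (M.free.reindex hG).sec V) (h0 : p 0) (hadd : ∀ x y, p x → p y → p (x + y))
    (hs : ∀ i a, p (M.freeSingleRes hG i a)) : p x :=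
  Finsupp.induction_linear (motive := p) x h0 (fun x y => hadd x y) hs

/-- Morphisms out of (the restriction to a smaller family of) a free presheaf. -/
lemma exists_free_hom (M : LModData k X G A)
    {m : G → G'} (hm : ∀ (U : G) (V : G'), (V : X.Opens) ≤ U → (V : X.Opens) ≤ m U)
    (Y : LModData k X G' (A.reindex hG)) (y : ∀ i : (Σ V₀ : G, M.sec V₀), Y.sec (m i.1)) :
    ∃ g : LModHom (M.free.reindex hG) Y, ∀ (V : G') (i : M.FreeGen ⟨V.1, hG V.2⟩) a,
      g.app V (M.freeSingleRes hG i a) = a • Y.res (hm i.1.1 V i.2) (y i.1) := by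
  let φ : ∀ V : G', (M.free.reindex hG).sec V →+ Y.sec V := fun V =>
    Finsupp.liftAddHom (fun i : M.FreeGen ⟨V.1, hG V.2⟩ =>
      (AddMonoidHom.flip (smulAddHom ((A.reindex hG).sec V) (Y.sec V)))
        (Y.res (hm i.1.1 V i.2) (y i.1)))
  have hφ : ∀ (V : G') (i : M.FreeGen ⟨V.1, hG V.2⟩) a, φ V (M.freeSingleRes hG i a) =
        a • Y.res (hm i.1.1 V i.2) (y i.1) := by
    intro V i a
    exact Finsupp.liftAddHom_apply_single (fun i : M.FreeGen ⟨V.1, hG V.2⟩ =>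
      (AddMonoidHom.flip (smulAddHom ((A.reindex hG).sec V) (Y.sec V)))
        (Y.res (hm i.1.1 V i.2) (y i.1))) i a
  clear_value φ
  refine ⟨LModHom.ofAddHom φ ?_ ?_, hφ⟩
  · intro U V h x
    refine freeRes_induction hG M
      (p := fun x => φ V ((M.free.reindex hG).res h x) = Y.res h (φ U x))
      x (by simp only [map_zero]) (fun x y hx hy => ?_) (fun i a => ?_)
    · simp only [map_add, hx, hy]
    · rw [freeRes_res_single, hφ, hφ, Y.res_smul, Y.res_comp]
  · intro U a x
    refine freeRes_induction hG M (p := fun x => φ U (a • x) = a • (φ U x))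
      x (by simp only [map_zero, smul_zero]) (fun x y hx hy => ?_) (fun i b => ?_)
    · simp only [smul_add, map_add, hx, hy]
    · rw [smul_freeSingleRes, hφ, hφ, mul_smul]

/-- Free presheaves are projective, also after restriction to suitable smaller families. -/
lemma free_projective (M : LModData k X G A)
    {m : G → G'} (hm : ∀ (U : G) (V : G'), (V : X.Opens) ≤ U → (V : X.Opens) ≤ m U)
    (hm' : ∀ U : G, (m U : X.Opens) ≤ U)
    {Y Y' : LModData k X G' (A.reindex hG)} {p : LModHom Y Y'} (hp : p.Surj)
    (f : LModHom (M.free.reindex hG) Y') :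
    ∃ g : LModHom (M.free.reindex hG) Y, ∀ U x, p.app U (g.app U x) = f.app U x := by
  choose y hy using fun i : (Σ V₀ : G, M.sec V₀) =>
    hp (m i.1) (f.app (m i.1) (M.freeSingleRes hG ⟨i, hm' i.1⟩ 1))
  obtain ⟨g, hg⟩ := exists_free_hom hG M hm Y y
  refine ⟨g, fun U x => ?_⟩
  refine freeRes_induction hG M (p := fun x => p.app U (g.app U x) = f.app U x)
      x (by simp only [map_zero]) (fun x y hx hy => ?_) (fun i a => ?_)
  · simp only [map_add, hx, hy]
  · rw [hg, LModHom.map_smul, p.comm_res, hy, ← f.comm_res, ← LModHom.map_smul,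
      freeRes_res_single, smul_freeSingleRes, map_one, mul_one]

end Reindex

/-- Every presheaf is a quotient of the free presheaf on its sections. -/
lemma exists_freeπ (M : LModData k X G A) : ∃ g : LModHom M.free M, g.Surj := by
  obtain ⟨g, hg⟩ := exists_free_hom (le_refl G) M (m := _root_.id) (fun _ _ h => h) M
    (fun i => i.2)
  refine ⟨g, fun V x => ⟨M.freeSingle ⟨⟨V, x⟩, le_refl _⟩ 1, ?_⟩⟩
  refine (hg V ⟨⟨V, x⟩, le_refl _⟩ 1).trans ?_
  exact (one_smul (A.sec V) _).trans (M.res_id V x)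

lemma free_lift (M : LModData k X G A) {Y Y' : LModData k X G A} {p : LModHom Y Y'} (hp : p.Surj)
    (f : LModHom M.free Y') : ∃ g : LModHom M.free Y, ∀ U x, p.app U (g.app U x) = f.app U x :=
  free_projective (le_refl G) M (m := _root_.id) (fun _ _ h => h) (fun _ => le_refl _) hp f

/-- The canonical morphism from the free presheaf on the sections of `M` to `M`. -/
def freeπ (M : LModData k X G A) : LModHom M.free M := M.exists_freeπ.choose

lemma freeπ_surj (M : LModData k X G A) : M.freeπ.Surj := M.exists_freeπ.choose_spec

/-- The syzygy of `M`: the kernel of `M.freeπ`. -/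
def syz (M : LModData k X G A) : LModData k X G A := (exists_ker M.freeπ).choose

/-- The inclusion of the syzygy. -/
def syzι (M : LModData k X G A) : LModHom M.syz M.free := (exists_ker M.freeπ).choose_spec.choose

lemma syzι_inj (M : LModData k X G A) : M.syzι.Inj :=
  (exists_ker M.freeπ).choose_spec.choose_spec.1

lemma freeπ_eq_zero_iff (M : LModData k X G A) (U : G) (x : M.free.sec U) :
    M.freeπ.app U x = 0 ↔ ∃ y, M.syzι.app U y = x :=
  (exists_ker M.freeπ).choose_spec.choose_spec.2 U x

@[simp] lemma freeπ_syzι (M : LModData k X G A) (U : G) (y : M.syz.sec U) :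
    M.freeπ.app U (M.syzι.app U y) = 0 := (M.freeπ_eq_zero_iff U _).2 ⟨y, rfl⟩

/-- Iterated syzygies. -/
def syzIter : ℕ → LModData k X G A → LModData k X G A
  | 0, M => M
  | n + 1, M => syzIter n M.syz

end LModData

end

noncomputable section

variable {k : Type} [Field k] {X : Scheme.{0}} {G : Set X.Opens} {A : AlgData k X G}

/-- Sectionwise short exact sequences. -/
structure IsSES {K Q R : LModData k X G A} (u : LModHom K Q) (v : LModHom Q R) : Prop where
  inj : u.Inj
  surj : v.Surj
  exact : ∀ U x, v.app U x = 0 ↔ ∃ y, u.app U y = x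

namespace IsSES

variable {K Q R K' Q' R' : LModData k X G A} {u : LModHom K Q} {v : LModHom Q R}
  {u' : LModHom K' Q'} {v' : LModHom Q' R'}

lemma v_u (h : IsSES u v) (U : G) (x : K.sec U) : v.app U (u.app U x) = 0 :=
  (h.exact U _).2 ⟨x, rfl⟩

/-- A morphism on middle terms killing `R'` on the subobject induces one on subobjects. -/
lemma exists_sub (h : IsSES u v) (h' : IsSES u' v') (q : LModHom Q Q') (α : LModHom R R')
    (hq : ∀ U x, v'.app U (q.app U x) = α.app U (v.app U x)) :
    ∃ κ : LModHom K K', ∀ U x, q.app U (u.app U x) = u'.app U (κ.app U x) := by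
  obtain ⟨κ, hκ⟩ := LModHom.exists_lift (f := q.comp u) h'.inj (fun U x => by
    rw [← h'.exact, LModHom.comp_app, hq, h.v_u, map_zero])
  exact ⟨κ, fun U x => (hκ U x).symm⟩

/-- A morphism on middle terms preserving the subobjects induces one on quotients. -/
lemma exists_quot (h : IsSES u v) (h' : IsSES u' v') (q : LModHom Q Q') (κ : LModHom K K')
    (hq : ∀ U x, q.app U (u.app U x) = u'.app U (κ.app U x)) :
    ∃ α : LModHom R R', ∀ U x, v'.app U (q.app U x) = α.app U (v.app U x) := by
  obtain ⟨α, hα⟩ := LModHom.exists_desc (f := v'.comp q) h.surj (fun U x hx => by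
    obtain ⟨y, rfl⟩ := (h.exact U x).1 hx
    rw [LModHom.comp_app, hq, h'.v_u])
  exact ⟨α, fun U x => (hα U x).symm⟩

end IsSES

lemma isSES_syz (M : LModData k X G A) : IsSES M.syzι M.freeπ :=
  ⟨M.syzι_inj, M.freeπ_surj, M.freeπ_eq_zero_iff⟩

/-- A short exact sequence ending in `R`. -/
structure Layer (R : LModData k X G A) : Type 1 where
  K : LModData k X G A
  Q : LModData k X G A
  u : LModHom K Q
  v : LModHom Q R
  ses : IsSES u v

/-- Spliced short exact sequences of length `n` ending in `R`, together with a morphism from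
the last kernel to `N`. -/
def Splice (N : LModData k X G A) : ℕ → LModData k X G A → Type 1
  | 0, R => ULift.{1} (LModHom R N)
  | n + 1, R => Σ L : Layer R, Splice N n L.K

namespace Splice

open LModData

variable {N : LModData k X G A}

/-- Morphisms of spliced sequences, over a given morphism of right ends, identical on `N`. -/
def Mor : ∀ (n : ℕ) {R R' : LModData k X G A}, LModHom R R' → Splice N n R → Splice N n R' → Prop
  | 0, _, _, α, E, E' => ∀ U x, E'.down.app U (α.app U x) = E.down.app U x
  | n + 1, _, _, α, E, E' => ∃ (q : LModHom E.1.Q E'.1.Q) (κ : LModHom E.1.K E'.1.K),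
      (∀ U x, E'.1.v.app U (q.app U x) = α.app U (E.1.v.app U x)) ∧
      (∀ U x, q.app U (E.1.u.app U x) = E'.1.u.app U (κ.app U x)) ∧ Mor n κ E.2 E'.2

/-- Spliced sequences whose last kernel is identified with `N`. -/
def Genuine : ∀ (n : ℕ) {R : LModData k X G A}, Splice N n R → Prop
  | 0, _, E => E.down.Inj ∧ E.down.Surj
  | n + 1, _, E => Genuine n E.2

/-- All objects of the spliced sequence satisfy a predicate. -/
def All (C : LModData k X G A → Prop) : ∀ (n : ℕ) {R : LModData k X G A}, Splice N n R → Prop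
  | 0, R, _ => C R
  | n + 1, R, E => C R ∧ C E.1.Q ∧ All C n E.2

lemma All.right {C : LModData k X G A → Prop} {n : ℕ} {R : LModData k X G A} {E : Splice N n R}
    (h : All C n E) : C R := by
  cases n with
  | zero => exact h
  | succ n => exact h.1

/-- The sequence of a free resolution with a cocycle. -/
def freeSeq : ∀ (n : ℕ) (R : LModData k X G A), LModHom (syzIter n R) N → Splice N n R
  | 0, _, φ => ⟨φ⟩
  | n + 1, R, φ => ⟨⟨R.syz, R.free, R.syzι, R.freeπ, isSES_syz R⟩, freeSeq n R.syz φ⟩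

/-- Cocycles (of positive degree) that are coboundaries. -/
def Null : ∀ (n : ℕ) (R : LModData k X G A), LModHom (syzIter n R.syz) N → Prop
  | 0, R, φ => ∃ g : LModHom R.free N, ∀ U x, g.app U (R.syzι.app U x) =
      (show LModHom R.syz N from φ).app U x
  | n + 1, R, φ => Null n R.syz φ

lemma Mor.refl {n : ℕ} {R : LModData k X G A} (E : Splice N n R) : Mor n (LModHom.id R) E E := by
  induction n generalizing R with
  | zero => exact fun _ _ => rfl
  | succ n ih => exact ⟨LModHom.id _, LModHom.id _, fun _ _ => rfl, fun _ _ => rfl, ih E.2⟩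

lemma Mor.comp {n : ℕ} {R R' R'' : LModData k X G A} {α : LModHom R R'} {β : LModHom R' R''}
    {E : Splice N n R} {E' : Splice N n R'} {E'' : Splice N n R''} (h : Mor n α E E')
    (h' : Mor n β E' E'') : Mor n (β.comp α) E E'' := by
  induction n generalizing R R' R'' with
  | zero => exact fun U x => (h' U _).trans (h U x)
  | succ n ih =>
    obtain ⟨q, κ, h1, h2, h3⟩ := h
    obtain ⟨q', κ', h1', h2', h3'⟩ := h'
    exact ⟨q'.comp q, κ'.comp κ, fun U x => by simp [h1, h1'], fun U x => by simp [h2, h2'],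
      ih h3 h3'⟩

lemma Mor.of_eq {n : ℕ} {R R' : LModData k X G A} {α β : LModHom R R'} {E : Splice N n R}
    {E' : Splice N n R'} (h : Mor n α E E') (e : ∀ U x, α.app U x = β.app U x) : Mor n β E E' := by
  obtain rfl := LModHom.ext e
  exact h

lemma exists_mor_freeSeq {n : ℕ} {R R' : LModData k X G A} (α : LModHom R R') (E : Splice N n R') :
    ∃ φ, Mor n α (freeSeq n R φ) E := by
  induction n generalizing R R' with
  | zero => exact ⟨E.down.comp α, fun _ _ => rfl⟩
  | succ n ih =>
    obtain ⟨q, hq⟩ := free_lift R E.1.ses.surj (α.comp R.freeπ)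
    obtain ⟨κ, hκ⟩ := (isSES_syz R).exists_sub E.1.ses q α hq
    obtain ⟨φ, hφ⟩ := ih κ E.2
    exact ⟨φ, q, κ, hq, hκ, hφ⟩

lemma Mor.sub_freeSeq {n : ℕ} {R R' : LModData k X G A} {α β : LModHom R R'} {E : Splice N n R'}
    {φ ψ : LModHom (syzIter n R) N} (h : Mor n α (freeSeq n R φ) E)
    (h' : Mor n β (freeSeq n R ψ) E) : Mor n (α - β) (freeSeq n R (φ - ψ)) E := by
  induction n generalizing R R' with
  | zero =>
    intro U x
    have e := h U x
    have e' := h' U x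
    simp only [freeSeq] at e e' ⊢
    rw [LModHom.sub_app, map_sub, e, e']
    rfl
  | succ n ih =>
    obtain ⟨q, κ, h1, h2, h3⟩ := h
    obtain ⟨q', κ', h1', h2', h3'⟩ := h'
    change LModHom R.free E.1.Q at q q'
    change LModHom R.syz E.1.K at κ κ'
    refine ⟨q - q', κ - κ', fun U x => ?_, fun U x => ?_, ih h3 h3'⟩
    · exact (map_sub _ _ _).trans (congrArg₂ _ (h1 U x) (h1' U x))
    · exact (congrArg₂ _ (h2 U x) (h2' U x)).trans (map_sub _ _ _).symm

lemma Null.zero (n : ℕ) (R : LModData k X G A) :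
    Null n R (0 : LModHom (syzIter n R.syz) N) := by
  induction n generalizing R with
  | zero => exact ⟨0, fun _ _ => rfl⟩
  | succ n ih => exact ih R.syz

lemma Null.sub {n : ℕ} {R : LModData k X G A} {φ ψ : LModHom (syzIter n R.syz) N}
    (h : Null n R φ) (h' : Null n R ψ) : Null n R (φ - ψ) := by
  induction n generalizing R with
  | zero =>
    obtain ⟨g, hg⟩ := h
    obtain ⟨g', hg'⟩ := h'
    exact ⟨g - g', fun U x => congrArg₂ _ (hg U x) (hg' U x)⟩
  | succ n ih => exact ih (R := R.syz) h h'

lemma Null.of_mor {n : ℕ} {R R' : LModData k X G A} {α : LModHom R.syz R'} {E : Splice N n R'}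
    {φ : LModHom (syzIter n R.syz) N} (h : Mor n α (freeSeq n R.syz φ) E)
    (β : LModHom R.free R') (hβ : ∀ U x, β.app U (R.syzι.app U x) = α.app U x) :
    Null n R φ := by
  induction n generalizing R R' with
  | zero =>
    refine ⟨E.down.comp β, fun U x => ?_⟩
    rw [LModHom.comp_app, hβ]
    exact h U x
  | succ n ih =>
    obtain ⟨q, κ, h1, h2, h3⟩ := h
    obtain ⟨b, hb⟩ := free_lift R E.1.ses.surj β
    change LModHom R.syz.free E.1.Q at q
    change LModHom R.syz.syz E.1.K at κ
    obtain ⟨γ, hγ⟩ := LModHom.exists_lift (f := q - (b.comp (R.syzι.comp R.syz.freeπ)))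
      E.1.ses.inj (fun U x => by
        rw [← E.1.ses.exact, LModHom.sub_app, map_sub, sub_eq_zero, LModHom.comp_app, hb,
          LModHom.comp_app, hβ]
        exact h1 U x)
    refine ih (R := R.syz) h3 γ (fun U x => E.1.ses.inj U ?_)
    rw [hγ]
    simp only [LModHom.sub_app, LModHom.comp_app, freeπ_syzι, map_zero, sub_zero]
    exact h2 U x

lemma Null.of_mor_zero {n : ℕ} {R R' : LModData k X G A} {E : Splice N (n + 1) R'}
    {φ : LModHom (syzIter (n + 1) R) N}
    (h : Mor (n + 1) (0 : LModHom R R') (freeSeq (n + 1) R φ) E) : Null n R φ := by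
  obtain ⟨q, κ, h1, h2, h3⟩ := h
  change LModHom R.free E.1.Q at q
  obtain ⟨γ, hγ⟩ := LModHom.exists_lift (f := q) E.1.ses.inj (fun U x => by
    rw [← E.1.ses.exact]
    exact h1 U x)
  refine Null.of_mor h3 γ (fun U x => E.1.ses.inj U ?_)
  rw [hγ]
  exact h2 U x

/-- The cocycle of a sequence is, modulo coboundaries, invariant under equivalence. -/
lemma null_sub_of_eqvGen {n : ℕ} {R : LModData k X G A} {E E' : Splice N (n + 1) R}
    (h : Relation.EqvGen (fun T T' => Mor (n + 1) (LModHom.id R) T T') E E')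
    {φ φ' : LModHom (syzIter (n + 1) R) N}
    (hφ : Mor (n + 1) (LModHom.id R) (freeSeq (n + 1) R φ) E)
    (hφ' : Mor (n + 1) (LModHom.id R) (freeSeq (n + 1) R φ') E') : Null n R (φ - φ') := by
  induction h generalizing φ φ' with
  | rel E E' h =>
    exact Null.of_mor_zero (((hφ.comp h).sub_freeSeq hφ').of_eq (fun U x => sub_self _))
  | refl E => exact Null.of_mor_zero ((hφ.sub_freeSeq hφ').of_eq (fun U x => sub_self _))
  | symm E E' _ ih =>
    have e : φ - φ' = 0 - (φ' - φ) := by ext U x; simp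
    rw [e]
    exact (Null.zero n R).sub (ih hφ' hφ)
  | trans E E' E'' _ _ ih ih' =>
    obtain ⟨ψ, hψ⟩ := exists_mor_freeSeq (LModHom.id R) E'
    have e : φ - φ' = (φ - ψ) - (0 - (ψ - φ')) := by ext U x; simp
    rw [e]
    exact (ih hφ hψ).sub ((Null.zero n R).sub (ih' hψ hφ'))

/-- Pushout of the last short exact sequence along the morphism to `N`. -/
lemma exists_genuine {n : ℕ} {R : LModData k X G A} (T : Splice N (n + 1) R) :
    ∃ T₀ : Splice N (n + 1) R, Genuine (n + 1) T₀ ∧ ∀ {R' : LModData k X G A} (α : LModHom R R')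
      (T' : Splice N (n + 1) R'), Genuine (n + 1) T' → Mor (n + 1) α T T' →
        Mor (n + 1) α T₀ T' := by
  induction n generalizing R with
  | zero =>
    obtain ⟨⟨K, Q, u, v, ses⟩, ⟨e⟩⟩ := T
    obtain ⟨C, p, hp, hpk⟩ := exists_coker (pair u (0 - e))
    let inl : LModHom Q (Q.prod N) := pair (LModHom.id Q) 0
    let inr : LModHom N (Q.prod N) := pair 0 (LModHom.id N)
    have hdec : ∀ U (z : (Q.prod N).sec U), z = inl.app U ((fst Q N).app U z) +
        inr.app U ((snd Q N).app U z) := fun U z => by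
      apply prod_ext <;> simp [inl, inr]
    obtain ⟨v₀, hv₀⟩ := LModHom.exists_desc (f := v.comp (fst Q N)) hp (fun U z hz => by
      obtain ⟨y, rfl⟩ := (hpk U z).1 hz
      simp [ses.v_u])
    have hs : IsSES (p.comp inr) v₀ := by
      refine ⟨LModHom.inj_of_eq_zero fun U m hm => ?_, fun U x => ?_, fun U z => ?_⟩
      · obtain ⟨y, hy⟩ := (hpk U _).1 hm
        have h1 : u.app U y = 0 := congrArg ((fst Q N).app U) hy
        have h2 : 0 - e.app U y = m := congrArg ((snd Q N).app U) hy
        rw [← h2, ses.inj U (h1.trans (map_zero _).symm), map_zero, sub_zero]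
      · obtain ⟨y, rfl⟩ := ses.surj U x
        exact ⟨p.app U (inl.app U y), hv₀ U _⟩
      · obtain ⟨z, rfl⟩ := hp U z
        rw [hv₀]
        constructor
        · intro hz
          obtain ⟨y, hy⟩ := (ses.exact U _).1 hz
          refine ⟨(snd Q N).app U z + e.app U y, ?_⟩
          rw [← sub_eq_zero, LModHom.comp_app, ← map_sub, hpk]
          refine ⟨0 - y, prod_ext ?_ ?_⟩ <;> simp [inr, hy]
        · rintro ⟨m, hm⟩
          rw [← sub_eq_zero, LModHom.comp_app, ← map_sub, hpk] at hm
          obtain ⟨y, hy⟩ := hm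
          have h1 : u.app U y = (fst Q N).app U (inr.app U m) - (fst Q N).app U z := by
            rw [← map_sub, ← hy]; rfl
          have h2 : (fst Q N).app U z = u.app U (0 - y) := by
            rw [map_sub, h1, map_zero]
            simp [inr]
          rw [LModHom.comp_app, h2, ses.v_u]
    refine ⟨⟨⟨N, C, p.comp inr, v₀, hs⟩, ⟨LModHom.id N⟩⟩, ⟨LModHom.id_inj, LModHom.id_surj⟩, ?_⟩
    rintro R' α ⟨⟨K', Q', u', v', ses'⟩, ⟨e'⟩⟩ ⟨hi, hsj⟩ ⟨q, κ, h1, h2, h3⟩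
    simp only at hi hsj q κ h1 h2 h3
    obtain ⟨i, hi1, hi2⟩ := LModHom.exists_inverse hi hsj
    have hie : ∀ U y, i.app U (e.app U y) = κ.app U y := fun U y => by
      have := h3 U y
      simp only at this
      rw [← this, hi1]
    obtain ⟨q₀, hq₀⟩ := LModHom.exists_desc
      (f := q.comp (fst Q N) + u'.comp (i.comp (snd Q N))) hp (fun U z hz => by
      obtain ⟨y, rfl⟩ := (hpk U z).1 hz
      simp [hie, h2])
    refine ⟨q₀, i, fun U z => ?_, fun U m => ?_, fun U m => ?_⟩
    · obtain ⟨z, rfl⟩ := hp U z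
      change v'.app U (q₀.app U (p.app U z)) = α.app U (v₀.app U (p.app U z))
      rw [hq₀, hv₀, LModHom.add_app, map_add, LModHom.comp_app, LModHom.comp_app, h1,
        ses'.v_u, add_zero]
      rfl
    · change q₀.app U (p.app U (inr.app U m)) = u'.app U (i.app U m)
      rw [hq₀]
      simp [inr]
    · exact hi2 U m
  | succ n ih =>
    obtain ⟨L, T⟩ := T
    obtain ⟨T₀, hT₀, h⟩ := ih T
    refine ⟨⟨L, T₀⟩, hT₀, ?_⟩
    rintro R' α T' hT' ⟨q, κ, h1, h2, h3⟩
    exact ⟨q, κ, h1, h2, h κ T'.2 hT' h3⟩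

lemma Mor.of_sub_lift {n : ℕ} {R R' : LModData k X G A} {α β : LModHom R R'}
    {E : Splice N (n + 1) R} {E' : Splice N (n + 1) R'} (h : Mor (n + 1) α E E')
    (l : LModHom R E'.1.Q) (hl : ∀ U x, E'.1.v.app U (l.app U x) = (α - β).app U x) :
    Mor (n + 1) β E E' := by
  obtain ⟨q, κ, h1, h2, h3⟩ := h
  refine ⟨q - l.comp E.1.v, κ, fun U x => ?_, fun U x => ?_, h3⟩
  · simp [h1, hl]
  · simp [h2, E.1.ses.v_u]

/-- Pullback of a sequence of positive length along a morphism of right ends. -/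
lemma exists_pullback {n : ℕ} {R R' : LModData k X G A} (L : Layer R') (T : Splice N n L.K)
    (α : LModHom R R') :
    ∃ L' : Layer R, ∃ T' : Splice N n L'.K,
      (∀ C : LModData k X G A → Prop, All C n T → All C n T') ∧
      (Genuine n T → Genuine n T') ∧
      (∃ i : LModHom L'.Q (R.prod L.Q), i.Inj ∧
        ∀ U x, (α.comp (fst R L.Q) - L.v.comp (snd R L.Q)).app U x = 0 ↔ ∃ y, i.app U y = x) ∧
      Mor (n + 1) α ⟨L', T'⟩ ⟨L, T⟩ ∧
      ∀ {S : LModData k X G A} (β : LModHom S R) (E : Splice N (n + 1) S),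
        Mor (n + 1) (α.comp β) E ⟨L, T⟩ → Mor (n + 1) β E ⟨L', T'⟩ := by
  obtain ⟨P, i, hi, hik⟩ := exists_ker (α.comp (fst R L.Q) - L.v.comp (snd R L.Q))
  have hP : ∀ U (x : R.sec U) (y : L.Q.sec U), α.app U x = L.v.app U y →
      ∃ z, (fst R L.Q).app U (i.app U z) = x ∧ (snd R L.Q).app U (i.app U z) = y := by
    intro U x y h
    obtain ⟨w, rfl, rfl⟩ := exists_prod_mk x y
    obtain ⟨z, rfl⟩ := (hik U w).1 (by rw [LModHom.sub_app, sub_eq_zero]; exact h)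
    exact ⟨z, rfl, rfl⟩
  have hP' : ∀ U z, α.app U ((fst R L.Q).app U (i.app U z)) =
      L.v.app U ((snd R L.Q).app U (i.app U z)) := fun U z => by
    have := (hik U _).2 ⟨z, rfl⟩
    rwa [LModHom.sub_app, sub_eq_zero] at this
  obtain ⟨u, hu⟩ := LModHom.exists_lift (f := pair (0 : LModHom L.K R) L.u) hi (fun U x => by
    rw [← hik]
    simp [L.ses.v_u])
  have hs : IsSES u ((fst R L.Q).comp i) := by
    refine ⟨fun U x y h => L.ses.inj U ?_, fun U x => ?_, fun U z => ⟨fun hz => ?_, ?_⟩⟩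
    · have := congrArg (fun z => (snd R L.Q).app U (i.app U z)) h
      simpa [hu] using this
    · obtain ⟨y, hy⟩ := L.ses.surj U (α.app U x)
      obtain ⟨z, hz, -⟩ := hP U x y hy.symm
      exact ⟨z, hz⟩
    · have h := hP' U z
      rw [LModHom.comp_app] at hz
      rw [hz, map_zero] at h
      obtain ⟨y, hy⟩ := (L.ses.exact U _).1 h.symm
      refine ⟨y, hi U ?_⟩
      rw [hu]
      exact prod_ext (by simp [hz]) (by simp [hy])
    · rintro ⟨y, rfl⟩
      simp [hu]
  refine ⟨⟨L.K, P, u, (fst R L.Q).comp i, hs⟩, T, fun _ h => h, fun h => h, ⟨i, hi, hik⟩,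
    ⟨(snd R L.Q).comp i, LModHom.id _, fun U x => (hP' U x).symm, fun U x => ?_, Mor.refl T⟩, ?_⟩
  · rw [LModHom.comp_app]
    exact congrArg ((snd R L.Q).app U) (hu U x)
  rintro S β E ⟨q, κ, h1, h2, h3⟩
  obtain ⟨q', hq'⟩ := LModHom.exists_lift (f := pair (β.comp E.1.v) q) hi (fun U x => by
    rw [← hik, LModHom.sub_app, sub_eq_zero]
    exact (h1 U x).symm)
  refine ⟨q', κ, fun U x => ?_, fun U x => hi U ?_, h3⟩
  · simp [hq']
  · refine prod_ext ?_ ?_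
    · simp [hq', hu, E.1.ses.v_u]
    · simpa [hq', hu] using h2 U x

end Splice

end

noncomputable section

variable {k : Type} [Field k] {X : Scheme.{0}} {G : Set X.Opens} {A : AlgData k X G}

open LModData

/-- `R` has no higher extensions by the objects satisfying `I`. -/
def Acyclic (I : LModData k X G A → Prop) (R : LModData k X G A) : Prop :=
  ∀ (n : ℕ) (J : LModData k X G A), I J → ∀ f : LModHom (syzIter n R).syz J,
    ∃ g : LModHom (syzIter n R).free J, ∀ U x, g.app U ((syzIter n R).syzι.app U x) = f.app U x

lemma Acyclic.syz {I : LModData k X G A → Prop} {R : LModData k X G A} (h : Acyclic I R) :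
    Acyclic I R.syz := fun n => h (n + 1)

/-- A class `C` of presheaves with enough objects `I` that are injective relative to `C` and
acyclic for `C` in the category of all presheaves. -/
structure Resolving (C I : LModData k X G A → Prop) : Prop where
  emb : ∀ R, C R → ∃ (J R' : LModData k X G A) (u : LModHom R J) (v : LModHom J R'),
    I J ∧ C J ∧ C R' ∧ IsSES u v
  inj : ∀ J, I J → ∀ {K Q : LModData k X G A}, C K → C Q → ∀ u : LModHom K Q, u.Inj →
    ∀ f : LModHom K J, ∃ g : LModHom Q J, ∀ U x, g.app U (u.app U x) = f.app U x
  acyclic : ∀ R, C R → Acyclic I R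
  ker : ∀ {K P Q : LModData k X G A} (i : LModHom K P) (f : LModHom P Q), C P → C Q → i.Inj →
    (∀ U x, f.app U x = 0 ↔ ∃ y, i.app U y = x) → C K
  prod : ∀ {P Q : LModData k X G A}, C P → C Q → C (P.prod Q)

namespace Splice

variable {N : LModData k X G A}

/-- A sequence through which the classes of extensions can be computed as pullbacks. -/
structure Universal (C I : LModData k X G A → Prop) (n : ℕ) {R : LModData k X G A}
    (T : Splice N n R) : Prop where
  genuine : Genuine n T
  all : All C n T
  exists_mor : ∀ {S : LModData k X G A}, Acyclic I S → ∀ φ : LModHom (syzIter n S) N,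
    ∃ ψ : LModHom S R, Mor n ψ (freeSeq n S φ) T
  exists_mor_of_all : ∀ {S : LModData k X G A} (E : Splice N n S), All C n E →
    ∃ ψ : LModHom S R, Mor n ψ E T

/-- Pulled back classes that vanish come from morphisms extending to the free cover. -/
def Extends (I : LModData k X G A → Prop) (n : ℕ) {R : LModData k X G A}
    (T : Splice N n R) : Prop :=
  ∀ {S : LModData k X G A}, Acyclic I S → ∀ (ψ : LModHom S.syz R)
    (φ : LModHom (syzIter n S.syz) N), Mor n ψ (freeSeq n S.syz φ) T → Null n S φ →
      ∃ χ : LModHom S.free R, ∀ U x, χ.app U (S.syzι.app U x) = ψ.app U x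

variable {C I : LModData k X G A → Prop}

lemma universal_zero (hN : C N) :
    Universal C I 0 (show Splice N 0 N from ⟨LModHom.id N⟩) ∧
      Extends I 0 (show Splice N 0 N from ⟨LModHom.id N⟩) := by
  refine ⟨⟨⟨LModHom.id_inj, LModHom.id_surj⟩, hN, fun _ φ => ⟨φ, fun _ _ => rfl⟩,
    fun E _ => ⟨E.down, fun _ _ => rfl⟩⟩, ?_⟩
  rintro S - ψ φ h ⟨g, hg⟩
  exact ⟨g, fun U x => (hg U x).trans (h U x).symm⟩

lemma exists_universal_succ (H : Resolving C I) {n : ℕ} {R : LModData k X G A} {T : Splice N n R}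
    (hT : Universal C I n T) (hT' : Extends I n T) :
    ∃ (R' : LModData k X G A) (T' : Splice N (n + 1) R'), Universal C I (n + 1) T' ∧
      (∀ {S : LModData k X G A}, Acyclic I S → ∀ ψ : LModHom S.syz R', ∀ χ : LModHom S.syz T'.1.Q,
        (∀ U x, T'.1.v.app U (χ.app U x) = ψ.app U x) →
        ∃ χ : LModHom S.free R', ∀ U x, χ.app U (S.syzι.app U x) = ψ.app U x) ∧
      ∀ {S : LModData k X G A}, Acyclic I S → ∀ (ψ : LModHom S R')
        (φ : LModHom (syzIter (n + 1) S) N), Mor (n + 1) ψ (freeSeq (n + 1) S φ) T' → Null n S φ →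
        ∃ χ : LModHom S T'.1.Q, ∀ U x, T'.1.v.app U (χ.app U x) = ψ.app U x := by
  obtain ⟨J, R', u, v, hJ, hCJ, hR', ses⟩ := H.emb R hT.all.right
  refine ⟨R', ⟨⟨R, J, u, v, ses⟩, T⟩, ⟨hT.genuine, ⟨hR', hCJ, hT.all⟩, ?_, ?_⟩, ?_, ?_⟩
  · intro S hS φ
    obtain ⟨κ, hκ⟩ := hT.exists_mor hS.syz φ
    obtain ⟨q, hq⟩ := hS 0 J hJ (u.comp κ)
    obtain ⟨ψ, hψ⟩ := (isSES_syz S).exists_quot ses q κ hq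
    exact ⟨ψ, q, κ, hψ, hq, hκ⟩
  · intro S E hE
    obtain ⟨κ, hκ⟩ := hT.exists_mor_of_all E.2 hE.2.2
    obtain ⟨q, hq⟩ := H.inj J hJ hE.2.2.right hE.2.1 E.1.u E.1.ses.inj (u.comp κ)
    obtain ⟨ψ, hψ⟩ := E.1.ses.exists_quot ses q κ hq
    exact ⟨ψ, q, κ, hψ, hq, hκ⟩
  · intro S hS ψ χ hχ
    obtain ⟨g, hg⟩ := hS 0 J hJ χ
    refine ⟨v.comp g, fun U x => ?_⟩
    rw [← hχ]
    exact congrArg (v.app U) (hg U x)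
  · intro S hS ψ φ h hφ
    obtain ⟨q, κ, h1, h2, h3⟩ := h
    change LModHom S.free J at q
    change LModHom S.syz R at κ
    obtain ⟨κ', hκ'⟩ := hT' hS κ φ h3 hφ
    obtain ⟨χ, hχ⟩ := LModHom.exists_desc (f := q - u.comp κ') S.freeπ_surj (fun U x hx => by
      obtain ⟨y, rfl⟩ := (S.freeπ_eq_zero_iff U x).1 hx
      rw [LModHom.sub_app, LModHom.comp_app, hκ', sub_eq_zero]
      exact h2 U y)
    refine ⟨χ, fun U x => ?_⟩
    obtain ⟨x, rfl⟩ := S.freeπ_surj U x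
    rw [hχ, LModHom.sub_app, map_sub, LModHom.comp_app]
    change v.app U _ - v.app U _ = _
    rw [ses.v_u, sub_zero]
    exact h1 U x

lemma exists_universal (H : Resolving C I) (hN : C N) (n : ℕ) :
    ∃ (R : LModData k X G A) (T : Splice N n R), Universal C I n T ∧ Extends I n T := by
  induction n with
  | zero => exact ⟨N, _, universal_zero hN⟩
  | succ n ih =>
    obtain ⟨R, T, hT, hT'⟩ := ih
    obtain ⟨R', T', h1, h2, h3⟩ := exists_universal_succ H hT hT'
    refine ⟨R', T', h1, fun {S} hS ψ φ hψ hφ => ?_⟩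
    obtain ⟨χ, hχ⟩ := h3 hS.syz ψ φ hψ hφ
    exact h2 hS ψ χ hχ

/-- Extensions in `C` compute the extensions among all presheaves. -/
theorem extensions_of_resolving (H : Resolving C I) {M : LModData k X G A} (hM : C M) (hN : C N)
    (n : ℕ) :
    (∀ T : Splice N (n + 1) M, Genuine (n + 1) T → ∃ T₀ T' : Splice N (n + 1) M,
      Genuine (n + 1) T₀ ∧ Genuine (n + 1) T' ∧ All C (n + 1) T' ∧
      Mor (n + 1) (LModHom.id M) T₀ T ∧ Mor (n + 1) (LModHom.id M) T₀ T') ∧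
    (∀ T₁ T₂ : Splice N (n + 1) M, All C (n + 1) T₁ → All C (n + 1) T₂ →
      Relation.EqvGen (fun T T' => Mor (n + 1) (LModHom.id M) T T') T₁ T₂ →
      ∃ T₁' T₂' : Splice N (n + 1) M, (Genuine (n + 1) T₁' ∧ All C (n + 1) T₁') ∧
        (Genuine (n + 1) T₂' ∧ All C (n + 1) T₂') ∧ Mor (n + 1) (LModHom.id M) T₁ T₁' ∧
        Mor (n + 1) (LModHom.id M) T₁' T₂' ∧ Mor (n + 1) (LModHom.id M) T₂ T₂') := by
  obtain ⟨R, T, hT, hT'⟩ := exists_universal H hN n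
  obtain ⟨R', ⟨L, D⟩, hU, -, hlift⟩ := exists_universal_succ H hT hT'
  have hpb : ∀ ψ : LModHom M R', ∃ T' : Splice N (n + 1) M, Genuine (n + 1) T' ∧
      All C (n + 1) T' ∧
      (∀ {S : LModData k X G A} (β : LModHom S M) (E : Splice N (n + 1) S),
        Mor (n + 1) (ψ.comp β) E ⟨L, D⟩ → Mor (n + 1) β E T') ∧
      Mor (n + 1) ψ T' ⟨L, D⟩ := by
    intro ψ
    obtain ⟨L', T', hC, hG, ⟨i, hi, hik⟩, hm, h⟩ := exists_pullback L D ψ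
    exact ⟨⟨L', T'⟩, hG hU.genuine, ⟨hM, H.ker i _ (H.prod hM hU.all.2.1) hU.all.1 hi hik,
      hC C hU.all.2.2⟩, h, hm⟩
  constructor
  · intro T hTg
    obtain ⟨φ, hφ⟩ := exists_mor_freeSeq (LModHom.id M) T
    obtain ⟨ψ, hψ⟩ := hU.exists_mor (H.acyclic M hM) φ
    obtain ⟨T', hg, hall, hT', -⟩ := hpb ψ
    obtain ⟨T₀, hT₀, h⟩ := exists_genuine (freeSeq (n + 1) M φ)
    exact ⟨T₀, T', hT₀, hg, hall, h _ T hTg hφ, h _ T' hg (hT' _ _ hψ)⟩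
  · intro T₁ T₂ h₁ h₂ heq
    obtain ⟨φ₁, hφ₁⟩ := exists_mor_freeSeq (LModHom.id M) T₁
    obtain ⟨φ₂, hφ₂⟩ := exists_mor_freeSeq (LModHom.id M) T₂
    have hnull := null_sub_of_eqvGen heq hφ₁ hφ₂
    obtain ⟨ψ₁, hψ₁⟩ := hU.exists_mor_of_all T₁ h₁
    obtain ⟨ψ₂, hψ₂⟩ := hU.exists_mor_of_all T₂ h₂
    have hsub := (hφ₁.comp hψ₁).sub_freeSeq (hφ₂.comp hψ₂)
    obtain ⟨l, hl⟩ := hlift (H.acyclic M hM) _ _ hsub hnull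
    obtain ⟨T₁', hg₁, hall₁, hT₁, hm₁⟩ := hpb ψ₁
    obtain ⟨T₂', hg₂, hall₂, hT₂, hm₂⟩ := hpb ψ₂
    exact ⟨T₁', T₂', ⟨hg₁, hall₁⟩, ⟨hg₂, hall₂⟩, hT₁ _ _ hψ₁,
      hT₂ _ _ (hm₁.of_sub_lift l hl), hT₂ _ _ hψ₂⟩

end Splice

end

noncomputable section

variable {k : Type} [Field k] {X : Scheme.{0}} {G : Set X.Opens} {A : AlgData k X G}

open LModData

namespace Splice

variable {N : LModData k X G A}

/-- The objects, except for the right end, of the extension defined by a spliced sequence. -/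
def tailObj : ∀ (n : ℕ) {R : LModData k X G A}, Splice N n R → ℕ → LModData k X G A
  | 0, _, _, 0 => N
  | 0, _, _, _ + 1 => zeroObj A
  | _ + 1, _, T, 0 => T.1.Q
  | n + 1, _, T, i + 1 => tailObj n T.2 i

open Classical in
/-- The inverse of the identification of the last kernel with `N`. -/
def endInv {R : LModData k X G A} (T : Splice N 0 R) : LModHom N R :=
  if h : ∃ g : LModHom N R, (∀ U x, g.app U (T.down.app U x) = x) ∧
    ∀ U y, T.down.app U (g.app U y) = y then h.choose else 0

lemma endInv_spec {R : LModData k X G A} {T : Splice N 0 R} (hT : Genuine 0 T) :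
    (∀ U x, (endInv T).app U (T.down.app U x) = x) ∧
      ∀ U y, T.down.app U ((endInv T).app U y) = y := by
  have h := LModHom.exists_inverse hT.1 hT.2
  rw [endInv, dif_pos h]
  exact h.choose_spec

/-- The last map of the extension defined by a spliced sequence. -/
def tailEnd : ∀ (n : ℕ) {R : LModData k X G A} (T : Splice N n R), LModHom (tailObj n T 0) R
  | 0, _, T => endInv T
  | _ + 1, _, T => T.1.v

/-- The maps of the extension defined by a spliced sequence. -/
def tailD : ∀ (n : ℕ) {R : LModData k X G A} (T : Splice N n R) (i : ℕ),
    LModHom (tailObj n T (i + 1)) (tailObj n T i)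
  | 0, _, _, _ => 0
  | n + 1, _, T, 0 => T.1.u.comp (tailEnd n T.2)
  | n + 1, _, T, i + 1 => tailD n T.2 i

/-- The identification of `N` with the left end. -/
def tailN : ∀ (n : ℕ) {R : LModData k X G A} (T : Splice N n R), LModHom N (tailObj n T n)
  | 0, _, _ => LModHom.id N
  | n + 1, _, T => tailN n T.2

lemma tailN_bij (n : ℕ) {R : LModData k X G A} (T : Splice N n R) (U : G) :
    Function.Bijective ((tailN n T).app U) := by
  induction n generalizing R with
  | zero => exact Function.bijective_id
  | succ n ih => exact ih T.2

/-- The extension defined by a spliced sequence. -/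
def toNExt {n : ℕ} {R : LModData k X G A} (T : Splice N n R) : NExt n R N where
  obj i := match i with
    | 0 => R
    | i + 1 => tailObj n T i
  d i := match i with
    | 0 => tailEnd n T
    | i + 1 => tailD n T i
  isoP := LModHom.id R
  isoP_bij _ := Function.bijective_id
  isoN := tailN n T
  isoN_bij := tailN_bij n T

lemma toNExt_exact {n : ℕ} {R : LModData k X G A} {T : Splice N n R} (hT : Genuine n T) :
    T.toNExt.SectionwiseExact := by
  induction n generalizing R with
  | zero =>
    obtain ⟨h1, h2⟩ := endInv_spec hT
    exact ⟨fun U => Function.LeftInverse.injective (h2 U), fun j hj => absurd hj (by omega),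
      fun U x => ⟨_, h1 U x⟩⟩
  | succ n ih =>
    obtain ⟨h1, h2, h3⟩ := ih (T := T.2) hT
    refine ⟨fun U => ?_, fun j hj U x => ?_, T.1.ses.surj⟩
    · cases n with
      | zero => exact (T.1.ses.inj U).comp (h1 U)
      | succ n => exact h1 U
    · match j, hj with
      | 0, _ =>
        refine (T.1.ses.exact U x).trans ⟨?_, ?_⟩
        · rintro ⟨y, rfl⟩
          obtain ⟨z, rfl⟩ := h3 U y
          exact ⟨z, rfl⟩
        · rintro ⟨z, rfl⟩
          exact ⟨_, rfl⟩
      | 1, hj =>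
        have : (T.toNExt.d 1).app U x = 0 ↔ (T.2.toNExt.d 0).app U x = 0 :=
          map_eq_zero_iff _ (T.1.ses.inj U)
        exact this.trans (h2 0 (by omega) U x)
      | j + 2, hj => exact h2 (j + 1) (by omega) U x

lemma toNExt_all {C : LModData k X G A → Prop} (h0 : C (zeroObj A)) (hN : C N) {n : ℕ}
    {R : LModData k X G A} {T : Splice N n R} (hT : All C n T) (i : ℕ) : C (T.toNExt.obj i) := by
  match i with
  | 0 => exact hT.right
  | i + 1 =>
    change C (tailObj n T i)
    induction n generalizing R i with
    | zero => cases i with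
      | zero => exact hN
      | succ i => exact h0
    | succ n ih => cases i with
      | zero => exact hT.2.1
      | succ i => exact ih hT.2.2 i

lemma Mor.exists_chain {n : ℕ} {R R' : LModData k X G A} {α : LModHom R R'} {T : Splice N n R}
    {T' : Splice N n R'} (hT : Genuine n T) (hT' : Genuine n T') (h : Mor n α T T') :
    ∃ f : ∀ i, LModHom (tailObj n T i) (tailObj n T' i),
      (∀ U x, α.app U ((tailEnd n T).app U x) = (tailEnd n T').app U ((f 0).app U x)) ∧
      (∀ i U x, (f i).app U ((tailD n T i).app U x) =
        (tailD n T' i).app U ((f (i + 1)).app U x)) ∧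
      ∀ U m, (f n).app U ((tailN n T).app U m) = (tailN n T').app U m := by
  induction n generalizing R R' with
  | zero =>
    refine ⟨fun i => match i with
      | 0 => LModHom.id N
      | i + 1 => LModHom.id _, fun U x => hT'.1 U ?_, fun i U x => ?_, fun _ _ => rfl⟩
    · exact (h U _).trans (((endInv_spec hT).2 U x).trans ((endInv_spec hT').2 U x).symm)
    · rw [zeroObj_eq x 0]
      exact (map_zero _).trans (map_zero _).symm
  | succ n ih =>
    obtain ⟨q, κ, h1, h2, h3⟩ := h
    obtain ⟨f, hf1, hf2, hf3⟩ := ih (T := T.2) (T' := T'.2) hT hT' h3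
    refine ⟨fun i => match i with
      | 0 => q
      | i + 1 => f i, fun U x => (h1 U x).symm, fun i U x => ?_, hf3⟩
    cases i with
    | zero =>
      exact (h2 U _).trans (congrArg (T'.1.u.app U) (hf1 U x))
    | succ i => exact hf2 i U x

lemma Mor.morRel {n : ℕ} {R : LModData k X G A} {T T' : Splice N n R}
    (hT : Genuine n T) (hT' : Genuine n T') (h : Mor n (LModHom.id R) T T') :
    NExt.MorRel T.toNExt T'.toNExt := by
  obtain ⟨f, hf1, hf2, hf3⟩ := h.exists_chain hT hT'
  refine ⟨fun i => match i with
    | 0 => LModHom.id R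
    | i + 1 => f i, fun i U x => ?_, fun _ _ => rfl, hf3⟩
  cases i with
  | zero => exact hf1 U x
  | succ i => exact hf2 i U x

end Splice

namespace LModData

variable {P Q R : LModData k X G A}

/-- The kernel of a morphism. -/
def kerObj (f : LModHom P Q) : LModData k X G A := (exists_ker f).choose

/-- The inclusion of the kernel. -/
def kerι (f : LModHom P Q) : LModHom (kerObj f) P := (exists_ker f).choose_spec.choose

lemma kerι_inj (f : LModHom P Q) : (kerι f).Inj := (exists_ker f).choose_spec.choose_spec.1

lemma eq_zero_iff_kerι (f : LModHom P Q) (U : G) (x : P.sec U) :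
    f.app U x = 0 ↔ ∃ y, (kerι f).app U y = x := (exists_ker f).choose_spec.choose_spec.2 U x

/-- The morphism to the kernel induced by a morphism with zero composition. -/
def kerLift (f : LModHom P Q) (g : LModHom R P) (h : ∀ U x, f.app U (g.app U x) = 0) :
    LModHom R (kerObj f) :=
  (LModHom.exists_lift (f := g) (kerι_inj f)
    (fun U x => (eq_zero_iff_kerι f U _).1 (h U x))).choose

@[simp] lemma kerι_kerLift (f : LModHom P Q) (g : LModHom R P)
    (h : ∀ U x, f.app U (g.app U x) = 0) (U : G) (x : R.sec U) :
    (kerι f).app U ((kerLift f g h).app U x) = g.app U x :=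
  (LModHom.exists_lift (f := g) (kerι_inj f)
    (fun U x => (eq_zero_iff_kerι f U _).1 (h U x))).choose_spec U x

end LModData

namespace NExt

variable {P P' N : LModData k X G A} {n : ℕ}

/-- Morphisms of extensions over a morphism of right ends. -/
def MorOver (α : LModHom P P') (E : NExt n P N) (E' : NExt n P' N) : Prop :=
  ∃ f : ∀ i : ℕ, LModHom (E.obj i) (E'.obj i),
    (∀ (i : ℕ) (U : G) (x : (E.obj (i + 1)).sec U),
      (f i).app U ((E.d i).app U x) = (E'.d i).app U ((f (i + 1)).app U x)) ∧
    (∀ (U : G) (x : (E.obj 0).sec U), E'.isoP.app U ((f 0).app U x) =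
      α.app U (E.isoP.app U x)) ∧
    (∀ (U : G) (m : N.sec U), (f (n + 1)).app U (E.isoN.app U m) = E'.isoN.app U m)

lemma SectionwiseExact.d_d {E : NExt (n + 1) P N} (h : E.SectionwiseExact) (U : G)
    (x : (E.obj 2).sec U) : (E.d 0).app U ((E.d 1).app U x) = 0 :=
  (h.2.1 0 (by omega) U _).2 ⟨x, rfl⟩

/-- The extension of the first syzygy obtained by removing the right end. -/
def trunc (E : NExt (n + 1) P N) (h : E.SectionwiseExact) : NExt n (kerObj (E.d 0)) N where
  obj i := match i with
    | 0 => kerObj (E.d 0)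
    | i + 1 => E.obj (i + 2)
  d i := match i with
    | 0 => kerLift (E.d 0) (E.d 1) h.d_d
    | i + 1 => E.d (i + 2)
  isoP := LModHom.id _
  isoP_bij _ := Function.bijective_id
  isoN := E.isoN
  isoN_bij := E.isoN_bij

lemma trunc_exact (E : NExt (n + 1) P N) (h : E.SectionwiseExact) :
    (E.trunc h).SectionwiseExact := by
  have hk : ∀ U x, (kerι (E.d 0)).app U (((E.trunc h).d 0).app U x) = (E.d 1).app U x :=
    kerι_kerLift (E.d 0) (E.d 1) h.d_d
  have h0 : ∀ U x, ((E.trunc h).d 0).app U x = 0 ↔ (E.d 1).app U x = 0 := fun U x => by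
    rw [← hk]
    exact (map_eq_zero_iff _ (kerι_inj _ U)).symm
  refine ⟨fun U => ?_, fun j hj U x => ?_, fun U y => ?_⟩
  · cases n with
    | zero =>
      refine (injective_iff_map_eq_zero _).2 fun x hx => ?_
      exact (map_eq_zero_iff _ (h.1 U)).1 ((h0 U x).1 hx)
    | succ n => exact h.1 U
  · cases j with
    | zero => exact (h0 U x).trans (h.2.1 1 (by omega) U x)
    | succ j => exact h.2.1 (j + 2) (by omega) U x
  · obtain ⟨x, hx⟩ := (h.2.1 0 (by omega) U _).1 ((eq_zero_iff_kerι (E.d 0) U _).2 ⟨y, rfl⟩)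
    exact ⟨x, kerι_inj _ U ((hk U x).trans hx)⟩

lemma SectionwiseExact.isSES {E : NExt (n + 1) P N} (h : E.SectionwiseExact) :
    IsSES (kerι (E.d 0)) (E.isoP.comp (E.d 0)) :=
  ⟨kerι_inj _, fun U => (E.isoP_bij U).2.comp (h.2.2 U), fun U x => by
    rw [← eq_zero_iff_kerι]
    exact map_eq_zero_iff _ (E.isoP_bij U).1⟩

lemma SectionwiseExact.exists_inverse {E : NExt 0 P N} (h : E.SectionwiseExact) :
    ∃ g : LModHom P N,
      (∀ U x, g.app U (E.isoP.app U ((E.d 0).app U (E.isoN.app U x))) = x) ∧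
      ∀ U y, E.isoP.app U ((E.d 0).app U (E.isoN.app U (g.app U y))) = y :=
  LModHom.exists_inverse (f := E.isoP.comp ((E.d 0).comp E.isoN))
    (fun U => (E.isoP_bij U).1.comp ((h.1 U).comp (E.isoN_bij U).1))
    (fun U => (E.isoP_bij U).2.comp ((h.2.2 U).comp (E.isoN_bij U).2))

/-- Decomposition of an exact sequence into short exact sequences. -/
def toSplice : ∀ (n : ℕ) {P : LModData k X G A} (E : NExt n P N), E.SectionwiseExact → Splice N n P
  | 0, _, _, h => ⟨h.exists_inverse.choose⟩
  | n + 1, _, E, h => ⟨⟨kerObj (E.d 0), E.obj 1, kerι (E.d 0), E.isoP.comp (E.d 0), h.isSES⟩,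
      toSplice n (E.trunc h) (E.trunc_exact h)⟩

lemma toSplice_genuine {n : ℕ} {P : LModData k X G A} {E : NExt n P N} (h : E.SectionwiseExact) :
    Splice.Genuine n (E.toSplice n h) := by
  induction n generalizing P with
  | zero =>
    obtain ⟨h1, h2⟩ := h.exists_inverse.choose_spec
    refine ⟨fun U => ?_, fun U x => ⟨_, h1 U x⟩⟩
    exact Function.LeftInverse.injective (g := fun y => E.isoP.app U ((E.d 0).app U
      (E.isoN.app U y))) (h2 U)
  | succ n ih => exact ih (E.trunc_exact h)

lemma toSplice_all {C I : LModData k X G A → Prop} (H : Resolving C I) {n : ℕ}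
    {P : LModData k X G A} {E : NExt n P N} (h : E.SectionwiseExact) (hP : C P)
    (hC : ∀ i, C (E.obj i)) : Splice.All C n (E.toSplice n h) := by
  induction n generalizing P with
  | zero => exact hP
  | succ n ih =>
    have hk : C (kerObj (E.d 0)) :=
      H.ker _ (E.d 0) (hC 1) (hC 0) (kerι_inj _) (eq_zero_iff_kerι (E.d 0))
    refine ⟨hP, hC 1, ih (E.trunc_exact h) hk fun i => ?_⟩
    cases i with
    | zero => exact hk
    | succ i => exact hC (i + 2)

lemma MorOver.toSplice {n : ℕ} {P P' : LModData k X G A} {α : LModHom P P'} {E : NExt n P N}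
    {E' : NExt n P' N} (h : E.SectionwiseExact) (h' : E'.SectionwiseExact)
    (hf : MorOver α E E') : Splice.Mor n α (E.toSplice n h) (E'.toSplice n h') := by
  induction n generalizing P P' with
  | zero =>
    obtain ⟨f, hf1, hf2, hf3⟩ := hf
    intro U x
    obtain ⟨h1, h2⟩ := h.exists_inverse.choose_spec
    obtain ⟨h1', h2'⟩ := h'.exists_inverse.choose_spec
    change h'.exists_inverse.choose.app U (α.app U x) = h.exists_inverse.choose.app U x
    rw [← h1' U (h.exists_inverse.choose.app U x), ← hf3, ← hf1, hf2, h2]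
  | succ n ih =>
    obtain ⟨f, hf1, hf2, hf3⟩ := hf
    have hq : ∀ U x, (E'.isoP.comp (E'.d 0)).app U ((f 1).app U x) =
        α.app U ((E.isoP.comp (E.d 0)).app U x) := fun U x => by
      rw [LModHom.comp_app, ← hf1, hf2]
      rfl
    obtain ⟨κ, hκ⟩ := h.isSES.exists_sub h'.isSES (f 1) α hq
    refine ⟨f 1, κ, hq, hκ, ih (E.trunc_exact h) (E'.trunc_exact h')
      ⟨fun i => match i with
        | 0 => κ
        | i + 1 => f (i + 2), fun i U x => ?_, fun _ _ => rfl, hf3⟩⟩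
    cases i with
    | zero =>
      refine kerι_inj _ U ?_
      refine (hκ U _).symm.trans ?_
      refine Eq.trans ?_ (kerι_kerLift (E'.d 0) (E'.d 1) h'.d_d U _).symm
      exact (congrArg ((f 1).app U) (kerι_kerLift (E.d 0) (E.d 1) h.d_d U x)).trans
        (hf1 1 U x)
    | succ i => exact hf1 (i + 2) U x

lemma morRel_toSplice {n : ℕ} {P : LModData k X G A} {E : NExt n P N} (h : E.SectionwiseExact) :
    MorRel (E.toSplice n h).toNExt E := by
  induction n generalizing P with
  | zero =>
    obtain ⟨i, hi1, hi2⟩ := LModHom.exists_inverse (f := E.isoP) (fun U => (E.isoP_bij U).1)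
      (fun U => (E.isoP_bij U).2)
    refine ⟨fun j => match j with
      | 0 => i
      | 1 => E.isoN
      | j + 2 => 0, fun j U x => ?_, fun U x => hi2 U x, fun _ _ => rfl⟩
    match j with
    | 0 =>
      refine (E.isoP_bij U).1 ((hi2 U _).trans ?_)
      obtain ⟨h1, h2⟩ := h.exists_inverse.choose_spec
      have h3 := (Splice.endInv_spec (toSplice_genuine h)).1 U
        (E.isoP.app U ((E.d 0).app U (E.isoN.app U x)))
      refine Eq.trans ?_ h3
      congr 1
      exact (h1 U x).symm
    | 1 =>
      rw [zeroObj_eq x 0]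
      refine ((congrArg _ (map_zero _)).trans (map_zero _)).trans
        ((congrArg _ (map_zero _)).trans (map_zero _)).symm
    | j + 2 =>
      rw [zeroObj_eq x 0]
      refine ((congrArg _ (map_zero _)).trans (map_zero _)).trans
        ((congrArg _ (map_zero _)).trans (map_zero _)).symm
  | succ n ih =>
    obtain ⟨i, hi1, hi2⟩ := LModHom.exists_inverse (f := E.isoP) (fun U => (E.isoP_bij U).1)
      (fun U => (E.isoP_bij U).2)
    obtain ⟨g, hg1, hg2, hg3⟩ := ih (E.trunc_exact h)
    refine ⟨fun j => match j with
      | 0 => i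
      | 1 => LModHom.id (E.obj 1)
      | j + 2 => g (j + 1), fun j U x => ?_, fun U x => hi2 U x, hg3⟩
    match j with
    | 0 => exact hi1 U _
    | 1 =>
      have h1 := hg1 0 U x
      have h2 := hg2 U (((toSplice n (E.trunc h) (E.trunc_exact h)).toNExt.d 0).app U x)
      have h3 := kerι_kerLift (E.d 0) (E.d 1) h.d_d U ((g 1).app U x)
      refine Eq.trans ?_ h3
      exact congrArg ((kerι (E.d 0)).app U) (h2.symm.trans h1)
    | j + 2 => exact hg1 (j + 1) U x

end NExt

end

noncomputable section

/-- The base change along `φ : R →+* R'` of a module over an `R`-ring `B`. -/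
def BC {R R' B : Type} [CommRing R] [CommRing R'] [Ring B] (φ : R →+* R') (s : R →+* B)
    (J : Type) [AddCommGroup J] [Module B J] : Type :=
  letI := φ.toAlgebra
  letI := Module.compHom J s
  TensorProduct R R' J

namespace BC

variable {R R' R'' B B' B'' : Type} [CommRing R] [CommRing R'] [CommRing R''] [Ring B] [Ring B']
  [Ring B''] {φ : R →+* R'} {s : R →+* B} {J J' J'' : Type} [AddCommGroup J] [Module B J]
  [AddCommGroup J'] [Module B J'] [AddCommGroup J''] [Module B J'']

instance : AddCommGroup (BC φ s J) :=
  letI := φ.toAlgebra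
  letI := Module.compHom J s
  (inferInstance : AddCommGroup (TensorProduct R R' J))

instance : Module R' (BC φ s J) :=
  letI := φ.toAlgebra
  letI := Module.compHom J s
  (inferInstance : Module R' (TensorProduct R R' J))

variable (φ s) in
/-- Pure tensors. -/
def mk : R' →+ J →+ BC φ s J :=
  letI := φ.toAlgebra
  letI := Module.compHom J s
  { toFun := fun c => (TensorProduct.mk R R' J c).toAddMonoidHom
    map_zero' := by ext; exact TensorProduct.zero_tmul _ _
    map_add' := fun _ _ => by ext; exact TensorProduct.add_tmul _ _ _ }

lemma smul_mk (c' c : R') (m : J) : c' • mk φ s c m = mk φ s (c' * c) m := rfl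

lemma mk_smul (c : R') (r : R) (m : J) : mk φ s c (s r • m) = mk φ s (φ r * c) m := by
  let := φ.toAlgebra
  let := Module.compHom J s
  exact (TensorProduct.smul_tmul r c m).symm

@[elab_as_elim]
lemma induction {p : BC φ s J → Prop} (x : BC φ s J) (h0 : p 0) (hmk : ∀ c m, p (mk φ s c m))
    (hadd : ∀ x y, p x → p y → p (x + y)) : p x :=
  let := φ.toAlgebra
  let := Module.compHom J s
  TensorProduct.induction_on (motive := p) x h0 hmk hadd

/-- Balanced biadditive maps define additive maps on the base change. -/
def lift {Y : Type} [AddCommGroup Y] (f : R' →+ J →+ Y)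
    (hf : ∀ c r m, f c (s r • m) = f (φ r * c) m) : BC φ s J →+ Y :=
  letI := φ.toAlgebra
  letI := Module.compHom J s
  TensorProduct.liftAddHom f (fun r c m => (hf c r m).symm)

@[simp] lemma lift_mk {Y : Type} [AddCommGroup Y] (f : R' →+ J →+ Y)
    (hf : ∀ c r m, f c (s r • m) = f (φ r * c) m) (c : R') (m : J) :
    lift f hf (mk φ s c m) = f c m := rfl

lemma hom_ext {Y : Type} [AddCommGroup Y] {f g : BC φ s J →+ Y}
    (h : ∀ c m, f (mk φ s c m) = g (mk φ s c m)) : f = g :=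
  AddMonoidHom.ext fun x => induction x (by simp) h (fun x y hx hy => by simp [hx, hy])

/-- Functoriality in the module. -/
def map (f : J →ₗ[B] J') : BC φ s J →+ BC φ s J' :=
  lift ((AddMonoidHom.compHom.flip f.toAddMonoidHom).comp (mk φ s))
    (fun c r m => by
      change mk φ s c (f (s r • m)) = mk φ s (φ r * c) (f m)
      rw [map_smul, mk_smul])

@[simp] lemma map_mk (f : J →ₗ[B] J') (c : R') (m : J) :
    map (φ := φ) (s := s) f (mk φ s c m) = mk φ s c (f m) := rfl

lemma map_surjective {f : J →ₗ[B] J'} (hf : Function.Surjective f) :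
    Function.Surjective (map (φ := φ) (s := s) f) := by
  intro y
  induction y using induction with
  | h0 => exact ⟨0, map_zero _⟩
  | hmk c m =>
    obtain ⟨m, rfl⟩ := hf m
    exact ⟨mk φ s c m, rfl⟩
  | hadd x y hx hy =>
    obtain ⟨⟨x, rfl⟩, ⟨y, rfl⟩⟩ := hx, hy
    exact ⟨x + y, map_add _ _ _⟩

/-- `f` as a linear map over the base ring. -/
def restrict (s : R →+* B) (f : J →ₗ[B] J') :
    letI := Module.compHom J s
    letI := Module.compHom J' s
    J →ₗ[R] J' :=
  letI := Module.compHom J s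
  letI := Module.compHom J' s
  { toFun := f
    map_add' := map_add f
    map_smul' := fun r m => map_smul f (s r) m }

lemma map_eq_lTensor (f : J →ₗ[B] J') (x : BC φ s J) :
    map f x =
      letI := φ.toAlgebra
      letI := Module.compHom J s
      letI := Module.compHom J' s
      (restrict s f).lTensor R' (show TensorProduct R R' J from x) := by
  let g : BC φ s J →+ BC φ s J' :=
    letI := φ.toAlgebra
    letI := Module.compHom J s
    letI := Module.compHom J' s
    ((restrict s f).lTensor R').toAddMonoidHom
  exact DFunLike.congr_fun (hom_ext (f := map f) (g := g) (fun c m => rfl)) x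

lemma map_injective (hφ : φ.Flat) {f : J →ₗ[B] J'} (hf : Function.Injective f) :
    Function.Injective (map (φ := φ) (s := s) f) := by
  let := φ.toAlgebra
  let := Module.compHom J s
  let := Module.compHom J' s
  have : Module.Flat R R' := hφ
  have h := Module.Flat.lTensor_preserves_injective_linearMap (M := R') (restrict s f) hf
  intro x y hxy
  rw [map_eq_lTensor, map_eq_lTensor] at hxy
  exact h hxy

lemma map_exact (hφ : φ.Flat) {f : J →ₗ[B] J'} {g : J' →ₗ[B] J''} (hfg : Function.Exact f g)
    (x : BC φ s J') (hx : map g x = 0) : ∃ y, map f y = x := by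
  let := φ.toAlgebra
  let := Module.compHom J s
  let := Module.compHom J' s
  let := Module.compHom J'' s
  have : Module.Flat R R' := hφ
  have h := Module.Flat.lTensor_exact (M := R') (f := restrict s f) (g := restrict s g) hfg
  rw [map_eq_lTensor] at hx
  obtain ⟨y, hy⟩ := (h _).1 hx
  exact ⟨y, (map_eq_lTensor f y).trans hy⟩

/-- Functoriality in the base ring. -/
def res {φ' : R →+* R''} (ψ : R' →+* R'') (h : ∀ r, ψ (φ r) = φ' r) : BC φ s J →+ BC φ' s J :=
  lift ((mk φ' s).comp ψ.toAddMonoidHom) (fun c r m => by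
    change mk φ' s (ψ c) (s r • m) = mk φ' s (ψ (φ r * c)) m
    rw [mk_smul, map_mul ψ, h])

@[simp] lemma res_mk {φ' : R →+* R''} (ψ : R' →+* R'') (h : ∀ r, ψ (φ r) = φ' r) (c : R')
    (m : J) : res (s := s) ψ h (mk φ s c m) = mk φ' s (ψ c) m := rfl

lemma exists_smul_eq_res {φ' : R →+* R''} {ψ : R' →+* R''} (h : ∀ r, ψ (φ r) = φ' r) {g : R'}
    (hg : @IsLocalization.Away R' _ g R'' _ ψ.toAlgebra) (y : BC φ' s J) :
    ∃ (n : ℕ) (x : BC φ s J), ψ g ^ n • y = res ψ h x := by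
  let := ψ.toAlgebra
  induction y using induction with
  | h0 => exact ⟨0, 0, by simp⟩
  | hmk c m =>
    obtain ⟨n, a, ha⟩ := IsLocalization.Away.surj g c
    refine ⟨n, mk φ s a m, ?_⟩
    rw [smul_mk, res_mk, mul_comm]
    exact congrArg (fun z => mk φ' s z m) ha
  | hadd x y hx hy =>
    obtain ⟨n, x', hx⟩ := hx
    obtain ⟨l, y', hy⟩ := hy
    have hr : ∀ (c : R') (z : BC φ s J), res ψ h (c • z) = ψ c • res ψ h z := by
      intro c z
      induction z using induction with
      | h0 => simp
      | hmk c' m => simp [smul_mk]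
      | hadd x y hx hy => simp [hx, hy]
    refine ⟨n + l, g ^ l • x' + g ^ n • y', ?_⟩
    rw [map_add, hr, hr, ← hx, ← hy, smul_add, pow_add, map_pow, map_pow, smul_smul, smul_smul,
      mul_comm (ψ g ^ l)]

lemma exists_smul_eq_zero {φ' : R →+* R''} {ψ : R' →+* R''} (h : ∀ r, ψ (φ r) = φ' r) {g : R'}
    (hg : @IsLocalization.Away R' _ g R'' _ ψ.toAlgebra) (x : BC φ s J) (hx : res ψ h x = 0) :
    ∃ n : ℕ, g ^ n • x = 0 := by
  let := φ.toAlgebra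
  let := φ'.toAlgebra
  let := ψ.toAlgebra
  let := Module.compHom J s
  have : IsScalarTower R R' R'' := IsScalarTower.of_algebraMap_eq fun r => (h r).symm
  let f := TensorProduct.AlgebraTensorModule.rTensor R J (Algebra.linearMap R' R'')
  have : IsLocalizedModule (Submonoid.powers g) (Algebra.linearMap R' R'') := inferInstance
  have : IsLocalizedModule (Submonoid.powers g) f := inferInstance
  have hf : ∀ x : BC φ s J, res ψ h x = f x := fun x =>
    DFunLike.congr_fun (hom_ext (f := res ψ h) (g := f.toAddMonoidHom) (fun c m => rfl)) x
  obtain ⟨⟨_, n, rfl⟩, hc⟩ := (IsLocalizedModule.eq_zero_iff (Submonoid.powers g) f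
    (m := x)).1 ((hf x).symm.trans hx)
  exact ⟨n, hc⟩

section Action

variable {s' : R' →+* B'} {ρ : B →+* B'} (hρ : ∀ r, ρ (s r) = s' (φ r))

/-- The comparison of the base change of `B` with `B'`. -/
def compare : BC φ s B →+ B' :=
  lift ((AddMonoidHom.compHom.flip ρ.toAddMonoidHom).comp
    ((AddMonoidHom.mul (R := B')).comp s'.toAddMonoidHom)) (fun c r m => by
      change s' c * ρ (s r • m) = s' (φ r * c) * ρ m
      rw [smul_eq_mul, map_mul, hρ, mul_comm (φ r), map_mul, mul_assoc])

variable {hρ}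

lemma algebra_induction (hβ : Function.Bijective (compare hρ)) {p : B' → Prop} (b : B')
    (h0 : p 0) (hmk : ∀ c a, p (s' c * ρ a))
    (hadd : ∀ x y, p x → p y → p (x + y)) : p b := by
  obtain ⟨x, rfl⟩ := hβ.2 b
  induction x using induction with
  | h0 => rwa [map_zero]
  | hmk c a => exact hmk c a
  | hadd x y hx hy => rw [map_add]; exact hadd _ _ hx hy

variable (hβ : Function.Bijective (compare hρ))

/-- The element `b ⊗ m` of `B' ⊗[B] J`, viewed in the base change of `J`. -/
def tens : B' →+ J →+ BC φ s J :=
  AddMonoidHom.mk' (fun b => AddMonoidHom.mk' (fun m =>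
      map (LinearMap.toSpanSingleton B J m) ((AddEquiv.ofBijective _ hβ).symm b))
    (fun m m' => by
      generalize (AddEquiv.ofBijective _ hβ).symm b = x
      induction x using induction with
      | h0 => simp
      | hmk c a => simp
      | hadd x y hx hy => simp only [map_add, hx, hy]; abel))
    (fun b b' => by ext m; simp)

lemma tens_mul (c : R') (a : B) (m : J) : tens hβ (s' c * ρ a) m = mk φ s c (a • m) := by
  have : (AddEquiv.ofBijective _ hβ).symm (s' c * ρ a) = mk φ s c a :=
    (AddEquiv.symm_apply_eq _).2 rfl
  change map (LinearMap.toSpanSingleton B J m) ((AddEquiv.ofBijective _ hβ).symm _) = _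
  rw [this]
  rfl

lemma tens_ring (c : R') (m : J) : tens hβ (s' c) m = mk φ s c m := by
  simpa using tens_mul hβ c 1 m

lemma tens_smul (b : B') (a : B) (m : J) : tens hβ b (a • m) = tens hβ (b * ρ a) m := by
  induction b using algebra_induction hβ with
  | h0 => simp
  | hmk c a' => rw [mul_assoc, ← map_mul, tens_mul, tens_mul, mul_smul]
  | hadd x y hx hy => simp only [map_add, add_mul, AddMonoidHom.add_apply, hx, hy]

/-- The action of `B'` on the base change of a `B`-module. -/
def act (b : B') : BC φ s J →+ BC φ s J :=
  lift ((tens hβ).comp ((AddMonoidHom.mulLeft b).comp s'.toAddMonoidHom)) (fun c r m => by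
    change tens hβ (b * s' c) (s r • m) = tens hβ (b * s' (φ r * c)) m
    rw [tens_smul, hρ, mul_comm (φ r), map_mul s', mul_assoc])

lemma act_mk (b : B') (c : R') (m : J) : act hβ b (mk φ s c m) = tens hβ (b * s' c) m := rfl

lemma act_tens (b b' : B') (m : J) : act hβ b (tens hβ b' m) = tens hβ (b * b') m := by
  induction b' using algebra_induction hβ with
  | h0 => simp
  | hmk c a' => rw [tens_mul, act_mk, tens_smul, mul_assoc]
  | hadd x y hx hy => simp only [map_add, mul_add, AddMonoidHom.add_apply, hx, hy]

/-- The base change of a `B`-module as a `B'`-module. -/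
@[reducible] def module : Module B' (BC φ s J) where
  smul b x := act hβ b x
  one_smul x := by
    change act hβ 1 x = x
    induction x using induction with
    | h0 => simp
    | hmk c a => rw [act_mk, one_mul, tens_ring]
    | hadd x y hx hy => rw [map_add, hx, hy]
  mul_smul b b' x := by
    change act hβ (b * b') x = act hβ b (act hβ b' x)
    induction x using induction with
    | h0 => simp
    | hmk c a => rw [act_mk, act_mk, act_tens, mul_assoc]
    | hadd x y hx hy => simp only [map_add, hx, hy]
  smul_zero b := map_zero (act hβ b)
  smul_add b := map_add (act hβ b)
  add_smul b b' x := by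
    change act hβ (b + b') x = act hβ b x + act hβ b' x
    induction x using induction with
    | h0 => simp
    | hmk c a => simp [act_mk, add_mul]
    | hadd x y hx hy => simp only [map_add, hx, hy]; abel
  zero_smul x := by
    change act hβ 0 x = 0
    induction x using induction with
    | h0 => simp
    | hmk c a => simp [act_mk]
    | hadd x y hx hy => rw [map_add, hx, hy, add_zero]

lemma act_ring (c : R') (x : BC φ s J) : act hβ (s' c) x = c • x := by
  induction x using induction with
  | h0 => simp
  | hmk c' a => rw [act_mk, ← map_mul, tens_ring, smul_mk]
  | hadd x y hx hy => rw [map_add, hx, hy, smul_add]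

/-- Criterion for additive maps on the base change to be semilinear. -/
lemma map_act {C Y : Type} [Ring C] [AddCommGroup Y] [Module C Y] (τ : B' →+* C) (t : R' →+* C)
    (ht : ∀ c, τ (s' c) = t c)
    (f : BC φ s J →+ Y) (h : J → Y) (hf : ∀ c m, f (mk φ s c m) = t c • h m)
    (hh : ∀ a m, h (a • m) = τ (ρ a) • h m) (b : B') (x : BC φ s J) :
    f (act hβ b x) = τ b • f x := by
  have key : ∀ b m, f (tens hβ b m) = τ b • h m := fun b m => by
    induction b using algebra_induction hβ with
    | h0 =>
      have h0 := hf 0 m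
      simp only [map_zero, AddMonoidHom.zero_apply, zero_smul] at h0 ⊢
    | hmk c a' => rw [tens_mul, hf, hh, smul_smul, map_mul, ht]
    | hadd x y hx hy => simp only [map_add, add_smul, AddMonoidHom.add_apply, hx, hy]
  induction x using induction with
  | h0 => simp
  | hmk c m => rw [act_mk, key, hf, map_mul, ht, mul_smul]
  | hadd x y hx hy => simp only [map_add, smul_add, hx, hy]

end Action

end BC

end

noncomputable section

variable {k : Type} [Field k] {X : Scheme.{0}} {G : Set X.Opens} {A : AlgData k X G}

/-- Restriction of functions. -/
def rs {U V : X.Opens} (h : V ≤ U) : Γ(X, U) →+* Γ(X, V) := (X.presheaf.map (homOfLE h).op).hom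

lemma rs_rs {U V W : X.Opens} (h : V ≤ U) (h' : W ≤ V) (c : Γ(X, U)) :
    rs h' (rs h c) = rs (h'.trans h) c := by
  have := X.presheaf.map_comp (homOfLE h).op (homOfLE h').op
  exact (congrArg (fun g => g.hom c) this).symm

lemma rs_id {U : X.Opens} (c : Γ(X, U)) : rs (le_refl U) c = c :=
  congrArg (fun g => g.hom c) (X.presheaf.map_id (Opposite.op U))

lemma basicOpen_rs {U V : X.Opens} (h : V ≤ U) (c : Γ(X, U)) :
    X.basicOpen (rs h c) = V ⊓ X.basicOpen c := X.basicOpen_res c (homOfLE h).op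

/-- Ideals of functions on an affine open subset containing powers of functions not vanishing at
any given point. -/
lemma ideal_eq_top_of_basicOpen {U : X.Opens} (hU : IsAffineOpen U) (I : Ideal Γ(X, U))
    (h : ∀ p ∈ U, ∃ (f : Γ(X, U)) (n : ℕ), p ∈ X.basicOpen f ∧ f ^ n ∈ I) : (1 : Γ(X, U)) ∈ I := by
  have h1 : Ideal.span (I.radical : Set Γ(X, U)) = ⊤ := by
    rw [← hU.self_le_iSup_basicOpen_iff]
    intro p hp
    obtain ⟨f, n, hf, hn⟩ := h p hp
    exact TopologicalSpace.Opens.mem_iSup.2 ⟨⟨f, n, hn⟩, hf⟩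
  rw [Ideal.span_eq, Ideal.radical_eq_top] at h1
  rw [h1]
  trivial

/-- Every submodule-like condition holds if it holds after multiplication by local functions. -/
lemma mem_of_basicOpen {U : X.Opens} (hU : IsAffineOpen U) {Y : Type}
    [AddCommGroup Y] [Module Γ(X, U) Y] (S : Submodule Γ(X, U) Y) (y : Y)
    (h : ∀ p ∈ U, ∃ (f : Γ(X, U)) (n : ℕ), p ∈ X.basicOpen f ∧ f ^ n • y ∈ S) : y ∈ S := by
  have := ideal_eq_top_of_basicOpen hU (S.comap (LinearMap.toSpanSingleton Γ(X, U) Y y))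
    (fun p hp => by
      obtain ⟨f, n, hp, hn⟩ := h p hp
      exact ⟨f, n, hp, by simpa using hn⟩)
  simpa using this

/-- Structure maps compatible with restriction. -/
def StrRes (t : ∀ U : G, Γ(X, U.1) →+* A.sec U) : Prop :=
  ∀ {U V : G} (h : V.1 ≤ U.1) (c : Γ(X, U.1)), A.res h (t U c) = t V (rs h c)

/-- The localization criterion for quasicoherence, on a family of open subsets. -/
def Loc (t : ∀ U : G, Γ(X, U.1) →+* A.sec U) (P : LModData k X G A) : Prop :=
  ∀ (U V : G) (_ : IsAffineOpen U.1) (f : Γ(X, U.1)) (_ : V.1 = X.basicOpen f) (h : V.1 ≤ U.1),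
    (∀ y : P.sec V, ∃ (p : ℕ) (m : P.sec U), t V (rs h f) ^ p • y = P.res h m) ∧
    ∀ m : P.sec U, P.res h m = 0 → ∃ p : ℕ, t U f ^ p • m = 0

lemma Loc.of_isQCohMod {A : AlgData k X Set.univ}
    {str : ∀ U : X.Opens, Γ(X, U) →+* A.sec ⟨U, trivial⟩} {M : LModData k X Set.univ A}
    (h : IsQCohMod str M) : Loc (fun U => str U.1) M := by
  intro U V hU f hV hle
  obtain ⟨U, _⟩ := U
  obtain ⟨V, _⟩ := V
  change V = _ at hV
  subst hV
  exact h U hU f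

lemma Loc.isQCohMod {A : AlgData k X Set.univ}
    {str : ∀ U : X.Opens, Γ(X, U) →+* A.sec ⟨U, trivial⟩} {M : LModData k X Set.univ A}
    (h : Loc (fun U => str U.1) M) : IsQCohMod str M := fun U hU f =>
  h ⟨U, trivial⟩ ⟨X.basicOpen f, trivial⟩ hU f rfl (X.basicOpen_le f)

/-- Sections as modules over the functions. -/
@[reducible] def LModData.funModule (t : ∀ U : G, Γ(X, U.1) →+* A.sec U) (P : LModData k X G A)
    (U : G) : Module Γ(X, U.1) (P.sec U) := Module.compHom _ (t U)

/-- A presheaf of algebras as a presheaf of modules over itself. -/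
def AlgData.self (A : AlgData k X G) : LModData k X G A :=
  LModData.ofModules A.sec (fun h => (A.res h : _ →+ _)) A.res_id A.res_comp
    (fun h a m => map_mul (A.res h) a m)

variable {t : ∀ U : G, Γ(X, U.1) →+* A.sec U}

/-- The comparison map from the base change of sections. -/
def LModData.ε (P : LModData k X G A) {U V : G} (h : V.1 ≤ U.1) (ht : StrRes t) :
    BC (rs h) (t U) (P.sec U) →+ P.sec V :=
  BC.lift ((AddMonoidHom.compHom.flip (P.res h).toAddMonoidHom).comp
    ((smulAddHom (A.sec V) (P.sec V)).comp (t V).toAddMonoidHom)) (fun c r m => by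
      change t V c • P.res h (t U r • m) = t V (rs h r * c) • P.res h m
      rw [P.res_smul, ht, smul_smul, ← map_mul, mul_comm])

@[simp] lemma LModData.ε_mk (ht : StrRes t) (P : LModData k X G A) {U V : G} (h : V.1 ≤ U.1) (c : Γ(X, V.1))
    (m : P.sec U) : P.ε h ht (BC.mk (rs h) (t U) c m) = t V c • P.res h m := rfl

lemma LModData.ε_smul (ht : StrRes t) (P : LModData k X G A) {U V : G} (h : V.1 ≤ U.1) (c : Γ(X, V.1))
    (x : BC (rs h) (t U) (P.sec U)) : P.ε h ht (c • x) = t V c • P.ε h ht x := by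
  induction x using BC.induction with
  | h0 => simp
  | hmk c' m => rw [BC.smul_mk, LModData.ε_mk, LModData.ε_mk, map_mul, mul_smul]
  | hadd x y hx hy => simp only [map_add, smul_add, hx, hy]

/-- Basic open neighbourhoods inside a smaller open subset. -/
lemma exists_basic_nhd (hG : ∀ U ∈ G, ∀ f : Γ(X, U), X.basicOpen f ∈ G)
    {U V : G} (h : V.1 ≤ U.1) (hU : IsAffineOpen U.1) {O : X.Opens} (hO : O ≤ V)
    {p : X} (hp : p ∈ O) :
    ∃ (f : Γ(X, U.1)) (D : G) (_ : D.1 ≤ V.1), D.1 ≤ O ∧ p ∈ D.1 ∧ D.1 = X.basicOpen f ∧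
      D.1 = X.basicOpen (rs h f) := by
  obtain ⟨f, hf, hpf⟩ := hU.exists_basicOpen_le (V := O) ⟨p, hp⟩ (h (hO hp))
  refine ⟨f, ⟨X.basicOpen f, hG U U.2 f⟩, hf.trans hO, hf, hpf, rfl, ?_⟩
  rw [basicOpen_rs]
  exact (inf_eq_right.2 (hf.trans hO)).symm

lemma exists_smul_eq_mk {U V D : G} (h : V.1 ≤ U.1) (hU : IsAffineOpen U.1)
    (hV : IsAffineOpen V.1) (hDV : D.1 ≤ V.1) {f : Γ(X, U.1)} (hD : D.1 = X.basicOpen f)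
    (hD' : D.1 = X.basicOpen (rs h f)) {J : Type} [AddCommGroup J] [Module (A.sec U) J]
    (z : BC (rs h) (t U) J) :
    ∃ (n : ℕ) (m : J), rs h f ^ n • z = BC.mk (rs h) (t U) 1 m := by
  have h1 := hU.isLocalization_of_eq_basicOpen f (homOfLE (hDV.trans h)) hD
  have h2 := hV.isLocalization_of_eq_basicOpen (rs h f) (homOfLE hDV) hD'
  induction z using BC.induction with
  | h0 => exact ⟨0, 0, by simp⟩
  | hmk c m =>
    obtain ⟨n, a, ha⟩ := @IsLocalization.Away.surj _ _ _ _ (_) f h1 (rs hDV c)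
    replace ha : rs hDV c * rs (hDV.trans h) f ^ n = rs (hDV.trans h) a := ha
    have hb : rs hDV (c * rs h f ^ n) = rs hDV (rs h a) := by
      rw [map_mul, map_pow, rs_rs, rs_rs, ha]
    obtain ⟨l, hl⟩ := @IsLocalization.Away.exists_of_eq _ _ _ _ (_) (rs h f) h2 _ _ hb
    refine ⟨l + n, t U (f ^ l * a) • m, ?_⟩
    rw [BC.smul_mk, BC.mk_smul]
    have hc : rs h f ^ (l + n) * c = rs h (f ^ l * a) * 1 := by
      rw [mul_one, map_mul (rs h), map_pow, ← hl, pow_add, mul_assoc, mul_comm c]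
    rw [hc]
  | hadd x y hx hy =>
    obtain ⟨n, m, hx⟩ := hx
    obtain ⟨n', m', hy⟩ := hy
    refine ⟨n + n', t U (f ^ n') • m + t U (f ^ n) • m', ?_⟩
    rw [map_add, BC.mk_smul, BC.mk_smul, ← BC.smul_mk, ← BC.smul_mk, ← hx, ← hy, smul_add,
      map_pow, map_pow, smul_smul, smul_smul, pow_add, mul_comm (rs h f ^ n')]

/-- Sections over a smaller affine open subset are computed by base change. -/
theorem Loc.ε_bijective (ht : StrRes t) (hG : ∀ U ∈ G, ∀ f : Γ(X, U), X.basicOpen f ∈ G)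
    {P : LModData k X G A} (hP : Loc t P) {U V : G} (h : V.1 ≤ U.1)
    (hU : IsAffineOpen U.1) (hV : IsAffineOpen V.1) : Function.Bijective (P.ε h ht) := by
  constructor
  · rw [injective_iff_map_eq_zero]
    intro z hz
    rw [← Submodule.mem_bot Γ(X, V.1)]
    refine mem_of_basicOpen hV _ z fun p hp => ?_
    obtain ⟨f, D, hDV, -, hpD, hD, hD'⟩ := exists_basic_nhd hG h hU le_rfl hp
    obtain ⟨n, m, hm⟩ := exists_smul_eq_mk h hU hV hDV hD hD' z
    have h0 : P.res h m = 0 := by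
      have := P.ε_smul ht h (rs h f ^ n) z
      rw [hz, smul_zero, hm, LModData.ε_mk, map_one, one_smul] at this
      exact this
    obtain ⟨q, hq⟩ := (hP U D hU f hD (hDV.trans h)).2 m (by rw [← P.res_comp hDV h, h0, map_zero])
    refine ⟨rs h f, q + n, hD' ▸ hpD, ?_⟩
    rw [Submodule.mem_bot, pow_add, mul_smul, hm, BC.smul_mk, ← map_pow, ← BC.mk_smul, map_pow, hq,
      map_zero]
  · intro y
    let := P.funModule t V
    let e : BC (rs h) (t U) (P.sec U) →ₗ[Γ(X, V.1)] P.sec V :=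
      { toFun := P.ε h ht
        map_add' := map_add _
        map_smul' := P.ε_smul ht h }
    change y ∈ LinearMap.range e
    refine mem_of_basicOpen hV _ y fun p hp => ?_
    obtain ⟨f, D, hDV, -, hpD, hD, hD'⟩ := exists_basic_nhd hG h hU le_rfl hp
    obtain ⟨n, m, hm⟩ := (hP U D hU f hD (hDV.trans h)).1 (P.res hDV y)
    obtain ⟨q, hq⟩ := (hP V D hV (rs h f) hD' hDV).2 (t V (rs h f) ^ n • y - P.res h m) (by
      rw [map_sub, P.res_smul, map_pow, ht, rs_rs, hm, P.res_comp, sub_self])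
    refine ⟨rs h f, q + n, hD' ▸ hpD, BC.mk (rs h) (t U) (rs h f ^ q) m, ?_⟩
    rw [smul_sub, sub_eq_zero, smul_smul, ← pow_add] at hq
    change P.ε h ht (BC.mk (rs h) (t U) (rs h f ^ q) m) = t V (rs h f ^ (q + n)) • y
    rw [LModData.ε_mk, map_pow, map_pow, hq]

/-- Sections of quasicoherent sheaves on affine open subsets that are locally in the image of a
morphism are in the image. -/
theorem Loc.mem_range (ht : StrRes t) (hG : ∀ U ∈ G, ∀ f : Γ(X, U), X.basicOpen f ∈ G)
    {P Q : LModData k X G A} (hP : Loc t P) (hQ : Loc t Q) (f : LModHom P Q)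
    {U : G} (hU : IsAffineOpen U.1) (x : Q.sec U)
    (hx : ∀ p ∈ U.1, ∃ (V : G) (hV : V.1 ≤ U.1), p ∈ V.1 ∧ Q.res hV x ∈ Set.range (f.app V)) :
    ∃ y, f.app U y = x := by
  let := Q.funModule t U
  let := P.funModule t U
  let e : P.sec U →ₗ[Γ(X, U.1)] Q.sec U :=
    { toFun := f.app U
      map_add' := map_add _
      map_smul' := fun c x => f.map_smul U (t U c) x }
  change x ∈ LinearMap.range e
  refine mem_of_basicOpen hU _ x fun p hp => ?_
  obtain ⟨V, hV, hpV, y, hy⟩ := hx p hp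
  obtain ⟨g, D, hDU, hDV, hpD, hD, -⟩ := exists_basic_nhd hG (le_refl U.1) hU hV hpV
  obtain ⟨n, m, hm⟩ := (hP U D hU g hD hDU).1 (P.res hDV y)
  obtain ⟨q, hq⟩ := (hQ U D hU g hD hDU).2 (t U g ^ n • x - f.app U m) (by
      rw [map_sub, Q.res_smul, map_pow, ht, ← f.comm_res, ← hm, LModHom.map_smul, f.comm_res, hy,
        Q.res_comp, sub_self])
  rw [smul_sub, sub_eq_zero, smul_smul, ← pow_add] at hq
  refine ⟨g, q + n, hD ▸ hpD, t U g ^ q • m, ?_⟩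
  change f.app U (t U g ^ q • m) = t U (g ^ (q + n)) • x
  rw [LModHom.map_smul, map_pow, hq]

end

noncomputable section

namespace BC

section

variable {R R' R'' B B' B'' : Type} [CommRing R] [CommRing R'] [CommRing R''] [Ring B] [Ring B']
  [Ring B''] {φ : R →+* R'} {φ' : R →+* R''} {s : R →+* B} {s' : R' →+* B'} {ρ : B →+* B'}
  {s'' : R'' →+* B''} {ρ' : B →+* B''}
  {hρ : ∀ r, ρ (s r) = s' (φ r)} {hρ' : ∀ r, ρ' (s r) = s'' (φ' r)}
  (hβ : Function.Bijective (compare hρ)) (hβ' : Function.Bijective (compare hρ'))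
  {J J' : Type} [AddCommGroup J] [Module B J] [AddCommGroup J'] [Module B J']

lemma act_one_mk (a : B) (m : J) : act hβ (ρ a) (mk φ s 1 m) = mk φ s 1 (a • m) := by
  have h := tens_mul hβ 1 a m
  rw [map_one, one_mul] at h
  rw [act_mk, map_one, mul_one, h]

lemma res_act {ψ : R' →+* R''} (h : ∀ r, ψ (φ r) = φ' r) (σ : B' →+* B'')
    (hσ : ∀ c, σ (s' c) = s'' (ψ c)) (hσ' : ∀ a, σ (ρ a) = ρ' a) (b : B') (x : BC φ s J) :
    res ψ h (act hβ b x) = act hβ' (σ b) (res ψ h x) := by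
  let := module (J := J) hβ'
  refine map_act hβ σ (s''.comp ψ) hσ (res ψ h) (fun m => mk φ' s 1 m) (fun c m => ?_)
    (fun a m => ?_) b x
  · refine Eq.trans ?_ (act_ring hβ' (ψ c) (mk φ' s 1 m)).symm
    rw [smul_mk, mul_one]
    rfl
  · refine Eq.trans (act_one_mk hβ' a m).symm ?_
    rw [hσ']
    rfl

lemma map_hom_act (f : J →ₗ[B] J') (b : B') (x : BC φ s J) :
    map f (act hβ b x) = act hβ b (map f x) := by
  let := module (J := J') hβ
  refine map_act hβ (RingHom.id B') s' (fun _ => rfl) (map f) (fun m => mk φ s 1 (f m))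
    (fun c m => ?_) (fun a m => ?_) b x
  · refine Eq.trans ?_ (act_ring hβ c (mk φ s 1 (f m))).symm
    rw [smul_mk, mul_one, map_mk]
  · rw [map_smul]
    exact (act_one_mk hβ a (f m)).symm

end

end BC

end

noncomputable section

variable {k : Type} [Field k] {X : Scheme.{0}} {G : Set X.Opens} {A : AlgData k X G}
  {t : ∀ U : G, Γ(X, U.1) →+* A.sec U} {U : G}

/-- Structure maps on a subfamily. -/
@[reducible] def reStr (t : ∀ U : G, Γ(X, U.1) →+* A.sec U) {G' : Set X.Opens} (h : G' ⊆ G)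
    (V : G') : Γ(X, V.1) →+* (A.reindex h).sec V := t ⟨V.1, h V.2⟩

/-- The affine members of a family of open subsets contained in a given one. -/
def Below (U : G) : Set X.Opens := {V | V ∈ G ∧ V ≤ U.1 ∧ IsAffineOpen V}

lemma below_subset (U : G) : Below U ⊆ G := fun _ h => h.1

/-- A member of `Below U` as a member of the ambient family. -/
@[reducible] def Below.val (V : Below U) : G := ⟨V.1, V.2.1⟩

/-- Sections on affine open subsets of `U` are obtained from sections on `U` by base change. -/
def HasBC (ht : StrRes t) (U : G) (P : LModData k X G A) : Prop :=
  ∀ (V : G) (h : V.1 ≤ U.1), IsAffineOpen V.1 → Function.Bijective (P.ε h ht)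

lemma compare_bijective {ht : StrRes t} (hA : HasBC ht U A.self) (V : Below U) :
    Function.Bijective (BC.compare (φ := rs V.2.2.1) (s := t U) (s' := t (Below.val V))
      (ρ := (A.res (V := Below.val V) V.2.2.1 : A.sec U →+* A.sec (Below.val V)))
      (fun r => ht _ r)) :=
  hA (Below.val V) V.2.2.1 V.2.2.2

/-- The module structure over the sections of `A` on the base change. -/
@[reducible] def assocModule {ht : StrRes t} (hA : HasBC ht U A.self) (J : Type) [AddCommGroup J]
    [Module (A.sec U) J] (V : Below U) :
    Module ((A.reindex (below_subset U)).sec V) (BC (rs V.2.2.1) (t U) J) :=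
  BC.module (compare_bijective hA V)

lemma assoc_res_act {ht : StrRes t} (hA : HasBC ht U A.self) {J : Type} [AddCommGroup J]
    [Module (A.sec U) J] {V V' : Below U} (h : V'.1 ≤ V.1) (a : A.sec (Below.val V))
    (x : BC (rs V.2.2.1) (t U) J) :
    BC.res (rs h) (fun r => rs_rs V.2.2.1 h r) (BC.act (compare_bijective hA V) a x) =
      BC.act (compare_bijective hA V') (A.res (U := Below.val V) (V := Below.val V') h a)
        (BC.res (rs h) (fun r => rs_rs V.2.2.1 h r) x) := by
  let σ : A.sec (Below.val V) →+* A.sec (Below.val V') :=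
    (A.res (U := Below.val V) (V := Below.val V') h : A.sec (Below.val V) →+* A.sec (Below.val V'))
  have h1 : ∀ c, σ (t (Below.val V) c) = t (Below.val V') (rs h c) :=
    fun c => ht (U := Below.val V) (V := Below.val V') h c
  have h2 : ∀ a, σ (A.res (V := Below.val V) V.2.2.1 a) = A.res (V := Below.val V') V'.2.2.1 a :=
    fun a => A.res_comp (V := Below.val V) (W := Below.val V') h V.2.2.1 a
  exact BC.res_act (compare_bijective hA V) (compare_bijective hA V') _ σ h1 h2 a x

/-- The presheaf on affine open subsets of `U` associated with a module over the sections of `A`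
on `U`. -/
def assoc {ht : StrRes t} (hA : HasBC ht U A.self) (J : Type) [AddCommGroup J]
    [Module (A.sec U) J] : LModData k X (Below U) (A.reindex (below_subset U)) :=
  let _ := assocModule hA J
  LModData.ofModules (fun V : Below U => BC (rs V.2.2.1) (t U) J)
    (fun {V V'} h => BC.res (rs h) (fun r => rs_rs V.2.2.1 h r))
    (fun V x => by
      induction x using BC.induction with
      | h0 => exact map_zero _
      | hmk c m => rw [BC.res_mk, rs_id]
      | hadd x y hx hy => rw [map_add, hx, hy])
    (fun h1 h2 x => by
      induction x using BC.induction with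
      | h0 => simp only [map_zero]
      | hmk c m => simp only [BC.res_mk, rs_rs]
      | hadd x y hx hy => simp only [map_add, hx, hy])
    (fun h a x => assoc_res_act hA h a x)

variable {ht : StrRes t} (hA : HasBC ht U A.self) {J J' J'' : Type} [AddCommGroup J]
  [Module (A.sec U) J] [AddCommGroup J'] [Module (A.sec U) J'] [AddCommGroup J'']
  [Module (A.sec U) J'']

lemma assoc_smul (V : Below U) (c : Γ(X, V.1)) (x : BC (rs V.2.2.1) (t U) J) :
    (assoc hA J).lsmul V (t (Below.val V) c) x = c • x :=
  BC.act_ring (compare_bijective hA V) c x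

/-- Functoriality of the associated presheaf. -/
def assocMap (f : J →ₗ[A.sec U] J') : LModHom (assoc hA J) (assoc hA J') :=
  LModHom.ofAddHom (fun _ => BC.map f)
    (fun {V V'} h x => by
      change BC.map f (BC.res (rs h) (fun r => rs_rs V.2.2.1 h r) x) =
        BC.res (rs h) (fun r => rs_rs V.2.2.1 h r) (BC.map f x)
      change BC _ _ J at x
      induction x using BC.induction with
      | h0 => simp only [map_zero]
      | hmk c m => simp only [BC.res_mk, BC.map_mk]
      | hadd x y hx hy => simp only [map_add, hx, hy])
    (fun V a x => BC.map_hom_act (compare_bijective hA V) f a x)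

/-- The comparison morphism from the presheaf associated with the sections on `U`. -/
def assocCounit (P : LModData k X G A) :
    LModHom (assoc hA (P.sec U)) (P.reindex (below_subset U)) :=
  LModHom.ofAddHom (fun V => P.ε (V := Below.val V) V.2.2.1 ht)
    (fun {V V'} h x => by
      change P.ε (V := Below.val V') V'.2.2.1 ht
          (BC.res (rs h) (fun r => rs_rs V.2.2.1 h r) x) =
        P.res (U := Below.val V) (V := Below.val V') h (P.ε (V := Below.val V) V.2.2.1 ht x)
      change BC _ _ (P.sec U) at x
      induction x using BC.induction with
      | h0 => simp only [map_zero]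
      | hmk c m =>
        rw [BC.res_mk, LModData.ε_mk, LModData.ε_mk, P.res_smul, P.res_comp, ht]
      | hadd x y hx hy => simp only [map_add, hx, hy])
    (fun V a x => by
      exact BC.map_act (compare_bijective hA V) (RingHom.id _) (t (Below.val V)) (fun _ => rfl)
        (P.ε (V := Below.val V) V.2.2.1 ht) (fun m => P.res V.2.2.1 m)
        (fun c m => P.ε_mk ht (V := Below.val V) V.2.2.1 c m)
        (fun b m => P.res_smul _ b m) a x)

lemma assoc_loc : Loc (reStr t (below_subset U)) (assoc hA J) := by
  intro V V' hV f hV' h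
  have hloc := hV.isLocalization_of_eq_basicOpen f (homOfLE h) hV'
  constructor
  · intro y
    obtain ⟨n, x, hx⟩ := BC.exists_smul_eq_res (s := t U) (fun r => rs_rs V.2.2.1 h r) hloc y
    exact ⟨n, x, ((congrArg (fun a => (assoc hA J).lsmul V' a y)
      (map_pow (t (Below.val V')) (rs h f) n).symm).trans (assoc_smul hA V' _ y)).trans hx⟩
  · intro x hx
    obtain ⟨n, hn⟩ := BC.exists_smul_eq_zero (s := t U) (fun r => rs_rs V.2.2.1 h r) hloc x hx
    exact ⟨n, ((congrArg (fun a => (assoc hA J).lsmul V a x)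
      (map_pow (t (Below.val V)) f n).symm).trans (assoc_smul hA V _ x)).trans hn⟩

end

noncomputable section

variable {k : Type} [Field k] {X : Scheme.{0}} {G : Set X.Opens} {A : AlgData k X G}
  {t : ∀ U : G, Γ(X, U.1) →+* A.sec U}

/-- Sections on affine open subsets are separated. -/
theorem Loc.eq_zero (hG : ∀ U ∈ G, ∀ f : Γ(X, U), X.basicOpen f ∈ G) {P : LModData k X G A}
    (hP : Loc t P) {V : G} (hV : IsAffineOpen V.1) (x : P.sec V)
    (hx : ∀ p ∈ V.1, ∃ (D : G) (hD : D.1 ≤ V.1), p ∈ D.1 ∧ P.res hD x = 0) : x = 0 := by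
  let := P.funModule t V
  rw [← Submodule.mem_bot Γ(X, V.1)]
  refine mem_of_basicOpen hV _ x fun p hp => ?_
  obtain ⟨D, hD, hpD, h0⟩ := hx p hp
  obtain ⟨f, D', hD'V, hD'D, hpD', hD', -⟩ := exists_basic_nhd hG (le_refl V.1) hV hD hpD
  obtain ⟨q, hq⟩ := (hP V D' hV f hD' hD'V).2 x (by rw [← P.res_comp hD'D hD, h0, map_zero])
  refine ⟨f, q, hD' ▸ hpD', ?_⟩
  rw [Submodule.mem_bot]
  change t V (f ^ q) • x = 0
  rw [map_pow, hq]

/-- Gluing of sections on affine open subsets. -/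
theorem Loc.glue (ht : StrRes t) (hG : ∀ U ∈ G, ∀ f : Γ(X, U), X.basicOpen f ∈ G)
    {P : LModData k X G A} (hP : Loc t P) {V : G} (hV : IsAffineOpen V.1) (D : G → Prop)
    (hDV : ∀ V', D V' → V'.1 ≤ V.1) (hDaff : ∀ V', D V' → IsAffineOpen V'.1)
    (hdown : ∀ V' V'' : G, D V' → V''.1 ≤ V'.1 → IsAffineOpen V''.1 → D V'')
    (hcov : ∀ p ∈ V.1, ∃ V', D V' ∧ p ∈ V'.1) (s : ∀ V', D V' → P.sec V')
    (hs : ∀ V' V'' (h' : D V') (h'' : D V'') (h : V''.1 ≤ V'.1), P.res h (s V' h') = s V'' h'') :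
    ∃ x : P.sec V, ∀ V' (h' : D V'), P.res (hDV V' h') x = s V' h' := by
  let I : Ideal Γ(X, V.1) :=
    { carrier := {r | ∃ x : P.sec V, ∀ V' (h' : D V'),
        P.res (hDV V' h') x = t V' (rs (hDV V' h') r) • s V' h'}
      add_mem' := by
        rintro r r' ⟨x, hx⟩ ⟨x', hx'⟩
        refine ⟨x + x', fun V' h' => ?_⟩
        rw [map_add, hx, hx', map_add, map_add, add_smul]
      zero_mem' := ⟨0, fun V' h' => by rw [map_zero, map_zero, map_zero, zero_smul]⟩
      smul_mem' := by
        rintro c r ⟨x, hx⟩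
        refine ⟨t V c • x, fun V' h' => ?_⟩
        rw [P.res_smul, hx, ht, smul_eq_mul, map_mul, map_mul, mul_smul] }
  suffices h1 : (1 : Γ(X, V.1)) ∈ I by
    obtain ⟨x, hx⟩ := h1
    refine ⟨x, fun V' h' => ?_⟩
    rw [hx, map_one, map_one, one_smul]
  refine ideal_eq_top_of_basicOpen hV I fun p hp => ?_
  obtain ⟨V₀, hV₀, hpV₀⟩ := hcov p hp
  obtain ⟨f, B, hBV, hBV₀, hpB, hB, -⟩ := exists_basic_nhd hG (le_refl V.1) hV (hDV _ hV₀) hpV₀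
  have hDB : D B := hdown V₀ B hV₀ hBV₀ (hB ▸ hV.basicOpen f)
  obtain ⟨n, m, hm⟩ := (hP V B hV f hB hBV).1 (s B hDB)
  have hloc : ∀ V' (h' : D V'), ∃ q : ℕ, t V' (rs (hDV V' h') f) ^ q •
      (P.res (hDV V' h') m - t V' (rs (hDV V' h') f) ^ n • s V' h') = 0 := by
    intro V' h'
    let B' : G := ⟨X.basicOpen (rs (hDV V' h') f), hG _ V'.2 _⟩
    have hBle : B'.1 ≤ V'.1 := X.basicOpen_le _
    have hB'B : B'.1 ≤ B.1 := by
      rw [hB]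
      change X.basicOpen (rs (hDV V' h') f) ≤ _
      rw [basicOpen_rs]
      exact inf_le_right
    have hDB' : D B' := hdown V' B' h' hBle ((hDaff V' h').basicOpen _)
    refine (hP V' B' (hDaff V' h') (rs (hDV V' h') f) rfl hBle).2 _ ?_
    rw [map_sub, P.res_comp, P.res_smul, map_pow, ht, rs_rs, hs V' B' h' hDB',
      ← P.res_comp hB'B hBV, ← hm, P.res_smul, map_pow, ht, rs_rs, hs B B' hDB hDB', sub_self]
  obtain ⟨q, hq⟩ : ∃ q : ℕ, ∀ V' (h' : D V'), ∀ p ∈ (V.1 : Set X), p ∈ V'.1 →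
      ∃ (B' : G) (hB' : B'.1 ≤ V'.1), p ∈ B'.1 ∧ P.res hB' (t V' (rs (hDV V' h') f) ^ q •
      (P.res (hDV V' h') m - t V' (rs (hDV V' h') f) ^ n • s V' h')) = 0 := by
    refine hV.isCompact.induction_on (p := fun S : Set X => ∃ q : ℕ, ∀ V' (h' : D V'), ∀ p ∈ S,
      p ∈ V'.1 → ∃ (B' : G) (hB' : B'.1 ≤ V'.1), p ∈ B'.1 ∧
      P.res hB' (t V' (rs (hDV V' h') f) ^ q •
      (P.res (hDV V' h') m - t V' (rs (hDV V' h') f) ^ n • s V' h')) = 0) ?_ ?_ ?_ ?_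
    · exact ⟨0, fun V' h' p hp => hp.elim⟩
    · rintro S T hST ⟨q, hq⟩
      exact ⟨q, fun V' h' p hp => hq V' h' p (hST hp)⟩
    · rintro S T ⟨q, hq⟩ ⟨q', hq'⟩
      refine ⟨q + q', fun V' h' p hp hpV' => ?_⟩
      rcases hp with hp | hp
      · obtain ⟨B', hB', hpB', h0⟩ := hq V' h' p hp hpV'
        refine ⟨B', hB', hpB', ?_⟩
        rw [add_comm q, pow_add, mul_smul, P.res_smul, h0, smul_zero]
      · obtain ⟨B', hB', hpB', h0⟩ := hq' V' h' p hp hpV'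
        refine ⟨B', hB', hpB', ?_⟩
        rw [pow_add, mul_smul, P.res_smul, h0, smul_zero]
    · intro p hp
      obtain ⟨V₁, hV₁, hpV₁⟩ := hcov p hp
      obtain ⟨q, hq⟩ := hloc V₁ hV₁
      refine ⟨V₁.1, mem_nhdsWithin_of_mem_nhds (V₁.1.isOpen.mem_nhds hpV₁), q,
        fun V' h' p hp hpV' => ?_⟩
      obtain ⟨g, B', hBle, hBinf, hpB', hB', -⟩ := exists_basic_nhd hG (le_refl V'.1)
        (hDaff V' h') (O := V'.1 ⊓ V₁.1) inf_le_left ⟨hpV', hp⟩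
      have hBinfR := hBinf.trans inf_le_right
      have hDB' : D B' := hdown V' B' h' hBle (hB' ▸ (hDaff V' h').basicOpen g)
      refine ⟨B', hBle, hpB', ?_⟩
      have h0 := congrArg (P.res hBinfR) hq
      rw [map_zero, P.res_smul, map_sub, P.res_comp, P.res_smul, map_pow, map_pow, ht, rs_rs,
        hs V₁ B' hV₁ hDB'] at h0
      rw [P.res_smul, map_sub, P.res_comp, P.res_smul, map_pow, map_pow, ht, rs_rs,
        hs V' B' h' hDB', h0]
  refine ⟨f, q + n, hB ▸ hpB, t V f ^ q • m, fun V' h' => ?_⟩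
  have h0 := hP.eq_zero hG (hDaff V' h') _ (fun p hp => hq V' h' p (hDV V' h' hp) hp)
  rw [smul_sub, sub_eq_zero, smul_smul, ← pow_add] at h0
  rw [P.res_smul, map_pow, ht, h0, map_pow, map_pow]

end

noncomputable section

variable {k : Type} [Field k] {X : Scheme.{0}}

lemma StrRes.reStr {G : Set X.Opens} {A : AlgData k X G} {t : ∀ U : G, Γ(X, U.1) →+* A.sec U}
    (ht : StrRes t) {G' : Set X.Opens} (h : G' ⊆ G) : StrRes (reStr t h) :=
  fun {U V} hVU c => ht (U := ⟨U.1, h U.2⟩) (V := ⟨V.1, h V.2⟩) hVU c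

variable {A : AlgData k X Set.univ} {t : ∀ U : (Set.univ : Set X.Opens), Γ(X, U.1) →+* A.sec U}
  {U : (Set.univ : Set X.Opens)}

lemma below_basicOpen (U : (Set.univ : Set X.Opens)) :
    ∀ V ∈ Below U, ∀ f : Γ(X, V), X.basicOpen f ∈ Below U := fun _ hV f =>
  ⟨trivial, (X.basicOpen_le f).trans hV.2.1, hV.2.2.basicOpen f⟩

/-- A presheaf on all open subsets whose sections are compatible families of sections on the
affine open subsets of `U`. -/
structure Extension (P : LModData k X (Below U) (A.reindex (below_subset U))) where
  obj : LModData k X Set.univ A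
  ev : ∀ (O : (Set.univ : Set X.Opens)) (V : Below U), V.1 ≤ O.1 → obj.sec O →+ P.sec V
  ev_res : ∀ {O O' : (Set.univ : Set X.Opens)} (h : O'.1 ≤ O.1) (V : Below U) (hV : V.1 ≤ O'.1)
    (x : obj.sec O), ev O' V hV (obj.res h x) = ev O V (hV.trans h) x
  ev_smul : ∀ (O : (Set.univ : Set X.Opens)) (V : Below U) (hV : V.1 ≤ O.1) (a : A.sec O)
    (x : obj.sec O), ev O V hV (a • x) = P.lsmul V (A.res hV a) (ev O V hV x)
  res_ev : ∀ (O : (Set.univ : Set X.Opens)) {V V' : Below U} (h : V'.1 ≤ V.1) (hV : V.1 ≤ O.1)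
    (x : obj.sec O), P.res h (ev O V hV x) = ev O V' (h.trans hV) x
  ext : ∀ (O : (Set.univ : Set X.Opens)) (x y : obj.sec O),
    (∀ V hV, ev O V hV x = ev O V hV y) → x = y
  glue : ∀ (O : (Set.univ : Set X.Opens)) (s : ∀ V : Below U, V.1 ≤ O.1 → P.sec V),
    (∀ (V V' : Below U) (h : V'.1 ≤ V.1) (hV : V.1 ≤ O.1),
      P.res h (s V hV) = s V' (h.trans hV)) → ∃ x : obj.sec O, ∀ V hV, ev O V hV x = s V hV

namespace Extension

variable (P : LModData k X (Below U) (A.reindex (below_subset U)))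

/-- Families of sections as a module. -/
@[reducible] def famModule (O : (Set.univ : Set X.Opens)) :
    Module (A.sec O) (∀ V : {V : Below U // V.1 ≤ O.1}, P.sec V.1) :=
  @Pi.module _ _ _ _ _ (fun V => Module.compHom (R := (A.reindex (below_subset U)).sec V.1)
    (P.sec V.1)
    (A.res (U := O) (V := Below.val V.1) V.2 : A.sec O →+* A.sec (Below.val V.1)))

/-- Compatible families. -/
def fam (O : (Set.univ : Set X.Opens)) :
    @Submodule (A.sec O) (∀ V : {V : Below U // V.1 ≤ O.1}, P.sec V.1) _ _ (famModule P O) :=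
  let _ := famModule P O
  { carrier := {s | ∀ (V V' : {V : Below U // V.1 ≤ O.1}) (h : V'.1.1 ≤ V.1.1),
      P.res h (s V) = s V'}
    add_mem' := fun hx hy V V' h => (map_add (P.res h) _ _).trans
      (congrArg₂ (· + ·) (hx V V' h) (hy V V' h))
    zero_mem' := fun V V' h => map_zero (P.res h)
    smul_mem' := fun a x hx V V' h => by
      refine (P.lsmul_res h _ _).trans ?_
      rw [hx V V' h]
      exact congrArg (fun b => P.lsmul V'.1 b (x V')) (A.res_comp (V := Below.val V.1)
        (W := Below.val V'.1) h V.2 a) }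

/-- The presheaf of compatible families. -/
def of : Extension P :=
  let _ := fun O => famModule P O
  { obj := LModData.ofModules (fun O => fam P O)
      (fun {O O'} h => AddMonoidHom.mk' (fun x => ⟨fun V => x.1 ⟨V.1, V.2.trans h⟩,
        fun V V' h' => x.2 ⟨V.1, V.2.trans h⟩ ⟨V'.1, V'.2.trans h⟩ h'⟩) (fun _ _ => rfl))
      (fun _ _ => rfl) (fun _ _ _ => rfl) (fun {O O'} h a x => by
        refine Subtype.ext (funext fun V => ?_)
        exact congrArg (fun b => P.lsmul V.1 b (x.1 ⟨V.1, V.2.trans h⟩)) (A.res_comp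
          (V := O') (W := Below.val V.1) V.2 h a).symm)
    ev := fun O V hV => AddMonoidHom.mk' (fun x : fam P O => x.1 ⟨V, hV⟩) (fun _ _ => rfl)
    ev_res := fun _ _ _ _ => rfl
    ev_smul := fun _ _ _ _ _ => rfl
    res_ev := fun O V V' h hV x => x.2 ⟨V, hV⟩ ⟨V', h.trans hV⟩ h
    ext := fun O x y h => Subtype.ext (funext fun V => h V.1 V.2)
    glue := fun O s hs => ⟨⟨fun V => s V.1 V.2, fun V V' h => hs V.1 V'.1 h V.2⟩, fun _ _ => rfl⟩ }

variable {P} (E : Extension P)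

lemma ev_bijective (O : (Set.univ : Set X.Opens)) (V : Below U) (hV : V.1 ≤ O.1)
    (h : O.1 ⊓ U.1 ≤ V.1) : Function.Bijective (E.ev O V hV) := by
  constructor
  · intro x y hxy
    refine E.ext O x y fun V' hV' => ?_
    have hle : V'.1 ≤ V.1 := (le_inf hV' V'.2.2.1).trans h
    rw [← E.res_ev O hle hV, hxy, E.res_ev]
  · intro y
    obtain ⟨x, hx⟩ := E.glue O (fun V' hV' => P.res ((le_inf hV' V'.2.2.1).trans h) y)
      (fun V₁ V₂ h' _ => P.res_comp _ _ _)
    exact ⟨x, (hx V hV).trans (P.res_id V y)⟩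

lemma res_bijective (O : (Set.univ : Set X.Opens)) :
    Function.Bijective (E.obj.res (U := O) (V := ⟨O.1 ⊓ U.1, trivial⟩) inf_le_left) := by
  constructor
  · intro x y hxy
    refine E.ext O x y fun V' hV' => ?_
    rw [← E.ev_res (O' := ⟨O.1 ⊓ U.1, trivial⟩) inf_le_left V' (le_inf hV' V'.2.2.1), hxy,
      E.ev_res]
  · intro y
    obtain ⟨x, hx⟩ := E.glue O (fun V' hV' => E.ev ⟨O.1 ⊓ U.1, trivial⟩ V'
      (le_inf hV' V'.2.2.1) y) (fun V₁ V₂ h' _ => E.res_ev _ _ _ _)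
    refine ⟨x, E.ext _ _ _ fun V hV => ?_⟩
    rw [E.ev_res, hx]

/-- The universal property of the presheaf of compatible families. -/
lemma exists_hom (M : LModData k X Set.univ A) (f : LModHom (M.reindex (below_subset U)) P) :
    ∃ g : LModHom M E.obj, ∀ (O : (Set.univ : Set X.Opens)) (x : M.sec O) (V : Below U)
      (hV : V.1 ≤ O.1), E.ev O V hV (g.app O x) =
        f.app V (M.res (U := O) (V := Below.val V) hV x) := by
  have key : ∀ (O : (Set.univ : Set X.Opens)) (x : M.sec O), ∃ y : E.obj.sec O,
      ∀ (V : Below U) (hV : V.1 ≤ O.1), E.ev O V hV y =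
        f.app V (M.res (U := O) (V := Below.val V) hV x) := fun O x =>
    E.glue O (fun V hV => f.app V (M.res (U := O) (V := Below.val V) hV x)) (fun V V' h hV =>
      (f.comm_res h _).symm.trans (congrArg (f.app V')
        (M.res_comp (V := Below.val V) (W := Below.val V') h hV x)))
  choose g hg using key
  refine ⟨LModHom.ofAddHom (fun O => AddMonoidHom.mk' (g O) fun x y => ?_) (fun {O O'} h x => ?_)
    (fun O a x => ?_), hg⟩
  · refine E.ext _ _ _ fun V hV => ?_
    rw [map_add, hg, hg, hg, map_add]
    exact map_add (f.app V) _ _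
  · refine E.ext _ _ _ fun V hV => ?_
    refine (hg O' _ V hV).trans ?_
    rw [E.ev_res]
    exact (congrArg (f.app V) (M.res_comp (W := Below.val V) hV h x)).trans (hg O x V _).symm
  · refine E.ext _ _ _ fun V hV => ?_
    refine (hg O _ V hV).trans ?_
    rw [E.ev_smul]
    refine (congrArg (f.app V) (M.res_smul (V := Below.val V) hV a x)).trans ?_
    refine (f.comm_lsmul V (A.res (V := Below.val V) hV a) _).trans ?_
    exact congrArg (P.lsmul V (A.res (V := Below.val V) hV a)) (hg O x V hV).symm

theorem isSheafCond (ht : StrRes t) (hP : Loc (reStr t (below_subset U)) P) :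
    E.obj.IsSheafCond := by
  intro O ι C hle hC s hs
  have hσ : ∀ V : Below U, (∃ i, V.1 ≤ (C i).1) → ∃ x : P.sec V, ∀ i (h : V.1 ≤ (C i).1),
      E.ev (C i) V h (s i) = x := by
    rintro V ⟨i, hi⟩
    refine ⟨E.ev (C i) V hi (s i), fun j hj => ?_⟩
    have := congrArg (E.ev (Below.val V) V le_rfl) (hs i j (Below.val V) hi hj)
    rw [E.ev_res, E.ev_res] at this
    exact this.symm
  choose σ hσ using hσ
  have hcov : ∀ V : Below U, V.1 ≤ O.1 → ∀ p ∈ V.1, ∃ V' : Below U,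
      (V'.1 ≤ V.1 ∧ ∃ i, V'.1 ≤ (C i).1) ∧ p ∈ V'.1 := by
    intro V hV p hp
    have hpO := hV hp
    rw [← hC] at hpO
    obtain ⟨i, hi⟩ := TopologicalSpace.Opens.mem_iSup.1 hpO
    obtain ⟨f, D, hDV, hDO, hpD, -, -⟩ := exists_basic_nhd (below_basicOpen U) (le_refl V.1)
      V.2.2.2 (O := V.1 ⊓ (C i).1) inf_le_left ⟨hp, hi⟩
    exact ⟨D, ⟨hDV, i, hDO.trans inf_le_right⟩, hpD⟩
  have hτ : ∀ (V : Below U) (hV : V.1 ≤ O.1), ∃ x : P.sec V,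
      ∀ (V' : Below U) (h' : V'.1 ≤ V.1) (hi : ∃ i, V'.1 ≤ (C i).1),
        P.res h' x = σ V' hi := by
    intro V hV
    obtain ⟨x, hx⟩ := hP.glue (ht.reStr _) (below_basicOpen U) V.2.2.2
      (fun V' => V'.1 ≤ V.1 ∧ ∃ i, V'.1 ≤ (C i).1) (fun V' h => h.1) (fun V' h => V'.2.2.2)
      (fun V' V'' h h' _ => ⟨h'.trans h.1, h.2.choose, h'.trans h.2.choose_spec⟩)
      (hcov V hV) (fun V' h => σ V' h.2) (fun V' V'' h' h'' h => by
        obtain ⟨-, i, hi⟩ := h'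
        rw [← hσ V' _ i hi, E.res_ev, hσ])
    exact ⟨x, fun V' h' hi => hx V' ⟨h', hi⟩⟩
  have huniq : ∀ (V : Below U) (hV : V.1 ≤ O.1) (x y : P.sec V),
      (∀ (V' : Below U) (h' : V'.1 ≤ V.1), (∃ i, V'.1 ≤ (C i).1) → P.res h' x = P.res h' y) →
      x = y := by
    intro V hV x y hxy
    rw [← sub_eq_zero]
    refine hP.eq_zero (below_basicOpen U) V.2.2.2 _ fun p hp => ?_
    obtain ⟨V', ⟨h', hi⟩, hp'⟩ := hcov V hV p hp
    exact ⟨V', h', hp', by rw [map_sub, hxy V' h' hi, sub_self]⟩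
  choose τ hτ using hτ
  obtain ⟨x, hx⟩ := E.glue O τ (fun V V' h hV => huniq V' (h.trans hV) _ _ fun V'' h'' hi => by
    rw [P.res_comp, hτ V hV V'' _ hi, hτ V' _ V'' _ hi])
  have hxs : ∀ i, E.obj.res (hle i) x = s i := fun i => E.ext _ _ _ fun V hV => by
    have h1 := hτ V (hV.trans (hle i)) V le_rfl ⟨i, hV⟩
    rw [P.res_id] at h1
    rw [E.ev_res, hx, h1, hσ]
  refine ⟨x, hxs, fun y hy => E.ext _ _ _ fun V hV => huniq V hV _ _ fun V' h' hi => ?_⟩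
  obtain ⟨i, hi⟩ := hi
  rw [E.res_ev, E.res_ev, ← E.ev_res (hle i) V' hi, ← E.ev_res (hle i) V' hi, hy i, hxs i]

theorem loc (ht : StrRes t) (hP : Loc (reStr t (below_subset U)) P)
    (hinf : ∀ V : X.Opens, IsAffineOpen V → IsAffineOpen (V ⊓ U.1)) : Loc t E.obj := by
  intro V V' hV f hV' h
  have hV'aff : IsAffineOpen V'.1 := hV' ▸ hV.basicOpen f
  let VU : Below U := ⟨V.1 ⊓ U.1, trivial, inf_le_right, hinf _ hV⟩
  let VU' : Below U := ⟨V'.1 ⊓ U.1, trivial, inf_le_right, hinf _ hV'aff⟩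
  have hle : VU'.1 ≤ VU.1 := inf_le_inf_right _ h
  have hres : VU.1 ≤ V.1 := inf_le_left
  have hres' : VU'.1 ≤ V'.1 := inf_le_left
  have hb : VU'.1 = X.basicOpen (rs hres f) := by
    rw [basicOpen_rs, ← hV']
    change V'.1 ⊓ U.1 = V.1 ⊓ U.1 ⊓ V'.1
    rw [inf_right_comm, inf_eq_right.2 h]
  have key := hP VU VU' VU.2.2.2 (rs hres f) hb hle
  have hpow : ∀ (O : (Set.univ : Set X.Opens)) (B : Below U) (hB : B.1 ≤ O.1) (g : Γ(X, O.1))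
      (p : ℕ) (x : E.obj.sec O), E.ev O B hB (t O g ^ p • x) =
        reStr t (below_subset U) B (rs hB g) ^ p • E.ev O B hB x := fun O B hB g p x => by
    rw [E.ev_smul]
    refine congrArg (fun a => P.lsmul B a (E.ev O B hB x)) ?_
    rw [map_pow]
    exact congrArg (· ^ p) (ht (V := Below.val B) hB g)
  constructor
  · intro y
    obtain ⟨p, m, hm⟩ := key.1 (E.ev V' VU' hres' y)
    obtain ⟨m', rfl⟩ := (E.ev_bijective V VU hres le_rfl).2 m
    refine ⟨p, m', (E.ev_bijective V' VU' hres' le_rfl).1 ?_⟩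
    rw [hpow, E.ev_res, ← E.res_ev V hle hres, ← hm, rs_rs, rs_rs]
  · intro m hm
    obtain ⟨p, hp⟩ := key.2 (E.ev V VU hres m) (by
      rw [E.res_ev V hle hres, ← E.ev_res h VU' hres', hm, map_zero])
    refine ⟨p, (E.ev_bijective V VU hres le_rfl).1 ?_⟩
    rw [hpow, hp, map_zero]

end Extension

end

noncomputable section

lemma rs_flat {X : Scheme.{0}} {U V : X.Opens} (h : V ≤ U) (hU : IsAffineOpen U)
    (hV : IsAffineOpen V) : (rs h).Flat := by
  have := Scheme.Hom.flat_appLE (𝟙 X) hU hV h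
  have h2 : (𝟙 X : X ⟶ X).appLE U V h = X.presheaf.map (homOfLE h).op := by
    simp only [Scheme.Hom.appLE, Scheme.Hom.id_app]
    exact Category.id_comp _
  rwa [h2] at this

variable {k : Type} [Field k] {X : Scheme.{0}}

lemma Loc.hasBC {G : Set X.Opens} {A : AlgData k X G} {t : ∀ U : G, Γ(X, U.1) →+* A.sec U}
    (ht : StrRes t) (hG : ∀ U ∈ G, ∀ f : Γ(X, U), X.basicOpen f ∈ G) {P : LModData k X G A}
    (hP : Loc t P) {U : G} (hU : IsAffineOpen U.1) : HasBC ht U P :=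
  fun _ h hV => hP.ε_bijective ht hG h hU hV

section

variable {G : Set X.Opens} {A : AlgData k X G} {t : ∀ U : G, Γ(X, U.1) →+* A.sec U}
  {ht : StrRes t} {U : G}

lemma HasBC.exists_inverse (hA : HasBC ht U A.self) {P : LModData k X G A} (hP : HasBC ht U P) :
    ∃ g : LModHom (P.reindex (below_subset U)) (assoc hA (P.sec U)),
      (∀ V x, g.app V ((assocCounit hA P).app V x) = x) ∧
      ∀ V y, (assocCounit hA P).app V (g.app V y) = y :=
  LModHom.exists_inverse (fun V => (hP (Below.val V) V.2.2.1 V.2.2.2).1)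
    (fun V => (hP (Below.val V) V.2.2.1 V.2.2.2).2)

lemma exists_assoc_equiv (hA : HasBC ht U A.self) (hU : IsAffineOpen U.1) (J : Type)
    [AddCommGroup J] [Module (A.sec U) J] :
    ∃ e : (assoc hA J).sec ⟨U.1, U.2, le_rfl, hU⟩ →+ J, Function.Injective e ∧
      (∀ m : J, e (BC.mk (rs (le_refl U.1)) (t U) 1 m) = m) ∧
      ∀ (a : A.sec U) x, e ((assoc hA J).lsmul ⟨U.1, U.2, le_rfl, hU⟩ a x) = a • e x := by
  let UU : Below U := ⟨U.1, U.2, le_rfl, hU⟩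
  let e : BC (rs (le_refl U.1)) (t U) J →+ J :=
    BC.lift ((smulAddHom (A.sec U) J).comp (t U).toAddMonoidHom) (fun c r m => by
      change t U c • t U r • m = t U (rs le_rfl r * c) • m
      rw [smul_smul, ← map_mul, rs_id, mul_comm])
  have he : ∀ c m, e (BC.mk (rs (le_refl U.1)) (t U) c m) = t U c • m := fun _ _ => rfl
  have h1 : ∀ x, BC.mk (rs (le_refl U.1)) (t U) 1 (e x) = x := by
    intro x
    induction x using BC.induction with
    | h0 => simp only [map_zero]
    | hmk c m => rw [he, BC.mk_smul, rs_id, mul_one]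
    | hadd x y hx hy => simp only [map_add, hx, hy]
  have h2 : ∀ m : J, e (BC.mk (rs (le_refl U.1)) (t U) 1 m) = m := fun m => by
    rw [he, map_one, one_smul]
  refine ⟨e, fun x y hxy => ?_, h2, fun a x => ?_⟩
  · rw [← h1 x, ← h1 y]
    exact congrArg _ hxy
  · have h3 := BC.act_one_mk (J := J) (compare_bijective hA UU) a (e x)
    replace h3 := (congrArg (BC.act (compare_bijective hA UU) _) (h1 x)).symm.trans h3
    refine (congrArg (fun b => e (BC.act (compare_bijective hA UU) b x))
      (A.res_id U a).symm).trans ((congrArg e h3).trans (h2 _))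

end

variable {A : AlgData k X Set.univ} {t : ∀ U : (Set.univ : Set X.Opens), Γ(X, U.1) →+* A.sec U}
  {U : (Set.univ : Set X.Opens)}

/-- Existence of sheaves coinduced from modules over the sections of `A` on an affine open
subset. -/
theorem exists_coinduced {ht : StrRes t} (hA : HasBC ht U A.self) (hU : IsAffineOpen U.1)
    (hinf : ∀ V : X.Opens, IsAffineOpen V → IsAffineOpen (V ⊓ U.1)) (J : Type)
    [AddCommGroup J] [Module (A.sec U) J] :
    ∃ Q : LModData k X Set.univ A, Q.IsSheafCond ∧ Loc t Q ∧
      (∀ O : (Set.univ : Set X.Opens),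
        Function.Bijective (Q.res (U := O) (V := ⟨O.1 ⊓ U.1, trivial⟩) inf_le_left)) ∧
      ∃ e : Q.sec U →ₗ[A.sec U] J, Function.Bijective e ∧
        ∀ M : LModData k X Set.univ A, HasBC ht U M → ∀ h : M.sec U →ₗ[A.sec U] J,
          ∃ f : LModHom M Q, ∀ x, e (f.app U x) = h x := by
  let UU : Below U := ⟨U.1, U.2, le_rfl, hU⟩
  obtain ⟨κ, hκ, hκ1, hκs⟩ := exists_assoc_equiv hA hU J
  let E := Extension.of (assoc hA J)
  have hE := E.ev_bijective U UU le_rfl inf_le_left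
  have hloc : Loc (reStr t (below_subset U)) (assoc hA J) := assoc_loc hA
  refine ⟨E.obj, E.isSheafCond ht hloc, E.loc ht hloc hinf, E.res_bijective,
    { toFun := fun x => κ (E.ev U UU le_rfl x)
      map_add' := fun x y => by rw [map_add, map_add]
      map_smul' := fun a x => ?_ }, ⟨fun x y h => hE.1 (hκ h), fun m => ?_⟩, fun M hM h => ?_⟩
  · rw [E.ev_smul]
    exact (congrArg (fun b => κ ((assoc hA J).lsmul UU b (E.ev U UU le_rfl x)))
      (A.res_id U a)).trans (hκs _ _)
  · obtain ⟨x, hx⟩ := hE.2 (BC.mk (rs (le_refl U.1)) (t U) 1 m)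
    exact ⟨x, (congrArg κ hx).trans (hκ1 m)⟩
  · obtain ⟨g, hg, -⟩ := HasBC.exists_inverse hA hM
    obtain ⟨f, hf⟩ := E.exists_hom M ((assocMap hA h).comp g)
    refine ⟨f, fun x => ?_⟩
    have h1 : g.app UU (M.res (U := U) (V := U) le_rfl x) =
        BC.mk (rs (le_refl U.1)) (t U) 1 x := by
      refine Eq.trans (congrArg (g.app UU) ?_) (hg UU _)
      change _ = M.ε (V := U) le_rfl ht (BC.mk (rs (le_refl U.1)) (t U) 1 x)
      rw [LModData.ε_mk, map_one, one_smul]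
    exact (congrArg κ ((hf U x UU le_rfl).trans (congrArg ((assocMap hA h).app UU) h1))).trans
      (hκ1 (h x))

end

noncomputable section

variable {k : Type} [Field k] {X : Scheme.{0}} {G : Set X.Opens} {A : AlgData k X G}
  {t : ∀ U : G, Γ(X, U.1) →+* A.sec U} {ht : StrRes t} {U : G}

/-- Families of affine open subsets closed under pairwise intersections. -/
structure AffStable (G : Set X.Opens) : Prop where
  aff : ∀ V ∈ G, IsAffineOpen V
  inf : ∀ V ∈ G, ∀ V' ∈ G, V ⊓ V' ∈ G

/-- The intersection with `U` as a member of `Below U`. -/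
@[reducible] def AffStable.inter (hG : AffStable G) (U V : G) : Below U :=
  ⟨V.1 ⊓ U.1, hG.inf _ V.2 _ U.2, inf_le_right, hG.aff _ (hG.inf _ V.2 _ U.2)⟩

namespace AffStable

lemma inter_le (hG : AffStable G) (U V : G) : (Below.val (hG.inter U V)).1 ≤ V.1 := inf_le_left

/-- Presheaves determined by their restriction to open subsets of `U`. -/
def Coind (hG : AffStable G) (U : G) (N : LModData k X G A) : Prop :=
  ∀ V : G, Function.Bijective (N.res (hG.inter_le U V))

variable {hG : AffStable G} {Y N : LModData k X G A}

lemma Coind.hom_ext (hN : hG.Coind U N) {f g : LModHom Y N}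
    (h : ∀ (V : Below U) (x : Y.sec (Below.val V)), f.app (Below.val V) x = g.app (Below.val V) x) :
    f = g := by
  ext V x
  refine (hN V).1 ?_
  rw [← f.comm_res, ← g.comm_res, h]

lemma Coind.exists_extend (hN : hG.Coind U N)
    (φ : LModHom (Y.reindex (below_subset U)) (N.reindex (below_subset U))) :
    ∃ ψ : LModHom Y N, ∀ (V : Below U) (x : Y.sec (Below.val V)),
      ψ.app (Below.val V) x = φ.app V x := by
  have key : ∀ (V : G) (x : Y.sec V), ∃ y : N.sec V, N.res (hG.inter_le U V) y =
      φ.app (hG.inter U V) (Y.res (hG.inter_le U V) x) := fun V x => (hN V).2 _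
  choose ψ hψ using key
  have comm : ∀ {V V' : Below U} (h : V'.1 ≤ V.1) (x : Y.sec (Below.val V)),
      φ.app V' (Y.res (U := Below.val V) (V := Below.val V') h x) =
        N.res (U := Below.val V) (V := Below.val V') h (φ.app V x) := fun h x => φ.comm_res h x
  have smul : ∀ {V : Below U} (a : A.sec (Below.val V)) (x : Y.sec (Below.val V)),
      φ.app V (Y.lsmul (Below.val V) a x) = N.lsmul (Below.val V) a (φ.app V x) :=
    fun a x => φ.comm_lsmul _ a x
  have hψadd : ∀ V x y, ψ V (x + y) = ψ V x + ψ V y := fun V x y => (hN V).1 (by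
    rw [map_add, hψ, hψ, hψ, map_add]
    exact map_add (φ.app (hG.inter U V)) _ _)
  refine ⟨LModHom.ofAddHom (fun V => AddMonoidHom.mk' (ψ V) (hψadd V)) ?_ ?_, ?_⟩
  · intro V V' h x
    refine (hN V').1 ?_
    have h' : (hG.inter U V').1 ≤ (hG.inter U V).1 := inf_le_inf_right _ h
    change N.res _ (ψ V' _) = N.res _ (N.res h (ψ V x))
    rw [hψ, N.res_comp, Y.res_comp]
    refine Eq.trans ?_ (N.res_comp (U := V) (V := Below.val (hG.inter U V))
      (W := Below.val (hG.inter U V')) h' (hG.inter_le U V) (ψ V x))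
    rw [hψ, ← comm h', Y.res_comp]
  · intro V a x
    refine (hN V).1 ?_
    change N.res _ (ψ V _) = N.res _ (a • ψ V x)
    rw [hψ, N.res_smul, hψ, Y.res_smul]
    exact smul _ _
  · intro V x
    have h' : V.1 ≤ (hG.inter U (Below.val V)).1 := le_inf le_rfl V.2.2.1
    have h1 := comm (V := V) (V' := hG.inter U (Below.val V)) inf_le_left x
    exact (hN (Below.val V)).1 ((hψ _ _).trans h1)

end AffStable

/-- Naturality of the comparison morphism. -/
lemma assocCounit_natural (hA : HasBC ht U A.self) {P Q : LModData k X G A} (f : LModHom P Q)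
    (V : Below U) (x : BC (rs V.2.2.1) (t U) (P.sec U)) :
    (assocCounit hA Q).app V ((assocMap hA (f.lin U)).app V x) =
      f.app (Below.val V) ((assocCounit hA P).app V x) := by
  change Q.ε (V := Below.val V) V.2.2.1 ht (BC.map (f.lin U) x) =
    f.app (Below.val V) (P.ε (V := Below.val V) V.2.2.1 ht x)
  induction x using BC.induction with
  | h0 => simp only [map_zero]
  | hmk c m =>
    rw [BC.map_mk, LModData.ε_mk, LModData.ε_mk, LModHom.map_smul, f.comm_res, f.lin_apply]
  | hadd x y hx hy => simp only [map_add, hx, hy]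

lemma assocMap_comp (hA : HasBC ht U A.self) {J J' J'' : Type} [AddCommGroup J]
    [Module (A.sec U) J] [AddCommGroup J'] [Module (A.sec U) J'] [AddCommGroup J'']
    [Module (A.sec U) J''] {f : J →ₗ[A.sec U] J'} {g : J' →ₗ[A.sec U] J''}
    {h : J →ₗ[A.sec U] J''} (hh : ∀ x, g (f x) = h x) (V : Below U)
    (x : BC (rs V.2.2.1) (t U) J) :
    (assocMap hA g).app V ((assocMap hA f).app V x) = (assocMap hA h).app V x := by
  change BC.map g (BC.map f x) = BC.map h x
  induction x using BC.induction with
  | h0 => simp only [map_zero]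
  | hmk c m => simp only [BC.map_mk, hh]
  | hadd x y hx hy => simp only [map_add, hx, hy]

namespace AffStable

variable {hG : AffStable G} {Y N : LModData k X G A}

/-- Morphisms into a coinduced presheaf are given by sections on `U`. -/
lemma Coind.exists_hom (hA : HasBC ht U A.self) (hN : hG.Coind U N) (hY : HasBC ht U Y)
    (h : Y.sec U →ₗ[A.sec U] N.sec U) : ∃ f : LModHom Y N, ∀ x, f.app U x = h x := by
  obtain ⟨g, hg, -⟩ := HasBC.exists_inverse hA hY
  obtain ⟨f, hf⟩ := hN.exists_extend
    ((assocCounit hA N).comp ((assocMap hA h).comp g))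
  refine ⟨f, fun x => ?_⟩
  let UU : Below U := ⟨U.1, U.2, le_rfl, hG.aff _ U.2⟩
  have h1 : g.app UU x = BC.mk (rs (le_refl U.1)) (t U) 1 x := by
    refine Eq.trans (congrArg (g.app UU) ?_) (hg UU _)
    change _ = Y.ε (V := U) le_rfl ht (BC.mk (rs (le_refl U.1)) (t U) 1 x)
    rw [LModData.ε_mk, map_one, one_smul, Y.res_id]
  refine (hf UU x).trans ((congrArg (fun z => (assocCounit hA N).app UU
    ((assocMap hA h).app UU z)) h1).trans ?_)
  change N.ε (V := U) le_rfl ht (BC.mk (rs (le_refl U.1)) (t U) 1 (h x)) = _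
  rw [LModData.ε_mk, map_one, one_smul, N.res_id]

lemma Coind.hom_ext_of_hasBC (hN : hG.Coind U N) (hY : HasBC ht U Y) {f g : LModHom Y N}
    (h : ∀ x, f.app U x = g.app U x) : f = g := by
  refine hN.hom_ext fun V x => ?_
  obtain ⟨z, rfl⟩ := (hY (Below.val V) V.2.2.1 V.2.2.2).2 x
  induction z using BC.induction with
  | h0 => simp only [map_zero]
  | hmk c m =>
    rw [LModData.ε_mk, LModHom.map_smul, LModHom.map_smul, f.comm_res, g.comm_res, h]
  | hadd x y hx hy => simp only [map_add, hx, hy]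

/-- Relative injectivity of coinduced presheaves. -/
lemma Coind.exists_extension (hA : HasBC ht U A.self) (hN : hG.Coind U N)
    (hJ : Module.Injective (A.sec U) (N.sec U)) {K Q : LModData k X G A} (hK : HasBC ht U K)
    (hQ : HasBC ht U Q) {u : LModHom K Q} (hu : u.Inj) (f : LModHom K N) :
    ∃ g : LModHom Q N, ∀ V x, g.app V (u.app V x) = f.app V x := by
  obtain ⟨h, hh⟩ := hJ.out (u.lin U) (hu U) (f.lin U)
  obtain ⟨g, hg⟩ := hN.exists_hom hA hQ h
  have := hN.hom_ext_of_hasBC hK (f := g.comp u) (g := f) (fun x => (hg _).trans (hh x))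
  exact ⟨g, fun V x => congrArg (fun φ : LModHom K N => φ.app V x) this⟩

/-- A presheaf which over open subsets of `U` is, up to a free presheaf, a direct summand of the
presheaf associated with its sections on `U`. -/
def Split (hA : HasBC ht U A.self) (Y : LModData k X G A) : Prop :=
  ∃ (a : LModHom (Y.reindex (below_subset U)) (assoc hA (Y.sec U)))
    (τ : LModHom (Y.reindex (below_subset U)) (Y.free.reindex (below_subset U))),
    ∀ V x, (assocCounit hA Y).app V (a.app V x) +
      (Y.freeπ.reindex (below_subset U)).app V (τ.app V x) = x

lemma Split.of_hasBC (hA : HasBC ht U A.self) (hY : HasBC ht U Y) : Split hA Y := by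
  obtain ⟨g, -, hg⟩ := HasBC.exists_inverse hA hY
  refine ⟨g, 0, fun V x => ?_⟩
  rw [hg, LModHom.zero_app, map_zero, add_zero]

lemma Split.exists_syz (hG : AffStable G) {hA : HasBC ht U A.self} (hY : Split hA Y) :
    ∃ (s : LModHom (Y.free.reindex (below_subset U)) (assoc hA (Y.free.sec U)))
      (s' : LModHom (Y.syz.reindex (below_subset U)) (assoc hA (Y.syz.sec U)))
      (h' : LModHom (Y.free.reindex (below_subset U)) (Y.syz.reindex (below_subset U))),
      (∀ V x, s.app V ((Y.syzι.reindex (below_subset U)).app V x) =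
        (assocMap hA (Y.syzι.lin U)).app V (s'.app V x)) ∧
      ∀ V x, (assocCounit hA Y.syz).app V (s'.app V x) +
          h'.app V ((Y.syzι.reindex (below_subset U)).app V x) = x := by
  obtain ⟨a, τ, hat⟩ := hY
  let π := Y.freeπ.reindex (below_subset U)
  let ι := Y.syzι.reindex (below_subset U)
  have hsurj : (assocMap hA (Y.freeπ.lin U)).Surj := fun V => BC.map_surjective (Y.freeπ_surj U)
  obtain ⟨s, hs⟩ := LModData.free_projective (below_subset U) Y (m := hG.inter U)
    (fun V V' h => le_inf h V'.2.2.1) (fun V => hG.inter_le U V) hsurj (a.comp π)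
  let h := LModHom.id _ - (assocCounit hA Y.free).comp s - τ.comp π
  have hh : ∀ V x, π.app V (h.app V x) = 0 := by
    intro V x
    have h1 : π.app V ((assocCounit hA Y.free).app V (s.app V x)) =
        (assocCounit hA Y).app V (a.app V (π.app V x)) :=
      (assocCounit_natural hA Y.freeπ V (s.app V x)).symm.trans
        (congrArg ((assocCounit hA Y).app V) (hs V x))
    have h2 : π.app V x = (assocCounit hA Y).app V (a.app V (π.app V x)) +
      π.app V (τ.app V (π.app V x)) := (hat V (π.app V x)).symm
    simp only [h, LModHom.sub_app, LModHom.comp_app, LModHom.id_app, map_sub]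
    rw [h1, sub_sub, sub_eq_zero]
    exact h2
  have hι : ι.Inj := fun V => Y.syzι_inj _
  obtain ⟨h', hh'⟩ := LModHom.exists_lift (f := h) hι
    (fun V x => (Y.freeπ_eq_zero_iff _ _).1 (hh V x))
  have hmι : (assocMap hA (Y.syzι.lin U)).Inj := fun V =>
    BC.map_injective (rs_flat V.2.2.1 (hG.aff _ U.2) V.2.2.2) (Y.syzι_inj U)
  obtain ⟨s', hs'⟩ := LModHom.exists_lift (f := s.comp ι) hmι (fun V x =>
    BC.map_exact (rs_flat V.2.2.1 (hG.aff _ U.2) V.2.2.2)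
      (f := Y.syzι.lin U) (g := Y.freeπ.lin U) (fun y => Y.freeπ_eq_zero_iff U y)
      (s.app V (ι.app V x))
      ((hs V (ι.app V x)).trans ((congrArg (a.app V) (Y.freeπ_syzι _ x)).trans
        (map_zero (a.app V)))))
  refine ⟨s, s', h', fun V x => (hs' V x).symm, fun V x => hι V ?_⟩
  have h1 : ι.app V ((assocCounit hA Y.syz).app V (s'.app V x)) =
      (assocCounit hA Y.free).app V (s.app V (ι.app V x)) :=
    (assocCounit_natural hA Y.syzι V (s'.app V x)).symm.trans
      (congrArg ((assocCounit hA Y.free).app V) (hs' V x))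
  have h2 : π.app V (ι.app V x) = 0 := Y.freeπ_syzι _ x
  refine (map_add (ι.app V) _ _).trans ?_
  refine (congrArg₂ (· + ·) h1 (hh' V (ι.app V x))).trans ?_
  simp only [h, LModHom.sub_app, LModHom.comp_app, LModHom.id_app]
  rw [h2, map_zero, sub_zero]
  exact add_sub_cancel _ _

lemma Split.syz (hG : AffStable G) {hA : HasBC ht U A.self} (hY : Split hA Y) :
    Split hA Y.syz := by
  obtain ⟨s, s', h', -, hs⟩ := hY.exists_syz hG
  obtain ⟨τ, hτ⟩ := LModData.free_projective (below_subset U) Y (m := hG.inter U)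
    (fun V V' h => le_inf h V'.2.2.1) (fun V => hG.inter_le U V)
    (p := Y.syz.freeπ.reindex (below_subset U)) (fun V => Y.syz.freeπ_surj _) h'
  refine ⟨s', τ.comp (Y.syzι.reindex (below_subset U)), fun V x => ?_⟩
  exact (congrArg _ (hτ V (Y.syzι.app (Below.val V) x))).trans (hs V x)

lemma Split.exists_extension (hN : hG.Coind U N) {hA : HasBC ht U A.self} (hY : Split hA Y)
    (hJ : Module.Injective (A.sec U) (N.sec U)) (f : LModHom Y.syz N) :
    ∃ g : LModHom Y.free N, ∀ V x, g.app V (Y.syzι.app V x) = f.app V x := by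
  obtain ⟨s, s', h', hs, hs'⟩ := hY.exists_syz hG
  obtain ⟨φ, hφ⟩ := hJ.out (Y.syzι.lin U) (Y.syzι_inj U) (f.lin U)
  obtain ⟨g, hg⟩ := hN.exists_extend
    ((assocCounit hA N).comp ((assocMap hA φ).comp s) +
      (f.reindex (below_subset U)).comp h')
  have key : g.comp Y.syzι = f := by
    refine hN.hom_ext fun V x => ?_
    refine (hg V _).trans ?_
    refine Eq.trans ?_ (congrArg ((f.reindex (below_subset U)).app V) (hs' V x))
    refine Eq.trans ?_ (map_add ((f.reindex (below_subset U)).app V) _ _).symm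
    refine congrArg (fun z => z + (f.reindex (below_subset U)).app V (h'.app V _)) ?_
    refine Eq.trans (congrArg (fun z => (assocCounit hA N).app V
      ((assocMap hA φ).app V z)) (hs V x)) ?_
    refine Eq.trans (congrArg ((assocCounit hA N).app V) ?_)
      (assocCounit_natural hA f V (s'.app V x))
    exact assocMap_comp hA hφ V _
  exact ⟨g, fun V x => congrArg (fun ψ : LModHom Y.syz N => ψ.app V x) key⟩

lemma Split.syzIter (hG : AffStable G) {hA : HasBC ht U A.self} (hY : Split hA Y) (n : ℕ) :
    Split hA (LModData.syzIter n Y) := by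
  induction n generalizing Y with
  | zero => exact hY
  | succ n ih => exact ih (hY.syz hG)

end AffStable

end

noncomputable section

variable {k : Type} [Field k] {X : Scheme.{0}} {G : Set X.Opens} {A : AlgData k X G}

namespace LModData

variable {P Q K : LModData k X G A}

lemma iSup_eq_of_nhds {U : X.Opens} {V : {p // p ∈ U} → X.Opens} (h : ∀ p, V p ≤ U)
    (hp : ∀ p, p.1 ∈ V p) :
    ⨆ p, V p = U :=
  le_antisymm (iSup_le h) fun p hpU => Opens.mem_iSup.2 ⟨⟨p, hpU⟩, hp _⟩

lemma IsSheafCond.eq_of_nhds (hP : P.IsSheafCond) {U : G} {x y : P.sec U}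
    (h : ∀ p ∈ U.1, ∃ (V : G) (hV : V.1 ≤ U.1), p ∈ V.1 ∧ P.res hV x = P.res hV y) : x = y := by
  choose V hV hp he using fun p : {p // p ∈ U.1} => h p.1 p.2
  refine (hP U {p // p ∈ U.1} V hV (iSup_eq_of_nhds hV hp) (fun p => P.res (hV p) x) ?_).unique
    (fun _ => rfl) (fun p => (he p).symm)
  intro p q V' h1 h2
  rw [P.res_comp, P.res_comp]

/-- Being in the image of a monomorphism of sheaves is a local property. -/
lemma IsSheafCond.mem_range (hP : P.IsSheafCond) (hQ : Q.IsSheafCond) {f : LModHom P Q}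
    (hf : f.Inj) {U : G} (x : Q.sec U)
    (h : ∀ p ∈ U.1, ∃ (V : G) (hV : V.1 ≤ U.1), p ∈ V.1 ∧ ∃ y, f.app V y = Q.res hV x) :
    ∃ y, f.app U y = x := by
  choose V hV hp y hy using fun p : {p // p ∈ U.1} => h p.1 p.2
  obtain ⟨z, hz, -⟩ := hP U {p // p ∈ U.1} V hV (iSup_eq_of_nhds hV hp) y (fun p q V' h1 h2 => hf V' (by
    rw [f.comm_res, f.comm_res, hy, hy, Q.res_comp, Q.res_comp]))
  refine ⟨z, hQ.eq_of_nhds fun p hpU => ⟨V ⟨p, hpU⟩, hV _, hp _, ?_⟩⟩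
  rw [← f.comm_res, hz, hy]

lemma isSheafCond_ker (hP : P.IsSheafCond) (hQ : Q.IsSheafCond) {i : LModHom K P}
    {f : LModHom P Q} (hi : i.Inj) (hf : ∀ U x, f.app U x = 0 ↔ ∃ y, i.app U y = x) :
    K.IsSheafCond := by
  intro U ι V hle hV s hs
  obtain ⟨x, hx, hx'⟩ := hP U ι V hle hV (fun j => i.app _ (s j)) (fun j l V' h1 h2 => by
    rw [← i.comm_res, ← i.comm_res, hs])
  obtain ⟨y, rfl⟩ := (hf U x).1 (by
    refine (hQ U ι V hle hV (fun _ => 0) (fun j l V' h1 h2 => by simp only [map_zero])).unique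
      (fun j => ?_) (fun j => map_zero _)
    rw [← f.comm_res, hx, hf]
    exact ⟨_, rfl⟩)
  refine ⟨y, fun j => hi _ (by rw [i.comm_res, hx]), fun z hz => hi _ ?_⟩
  exact hx' _ fun j => by rw [← i.comm_res, hz]

lemma isSheafCond_prod (hP : P.IsSheafCond) (hQ : Q.IsSheafCond) : (P.prod Q).IsSheafCond := by
  intro U ι V hle hV s hs
  obtain ⟨x, hx, hx'⟩ := hP U ι V hle hV (fun j => (fst P Q).app _ (s j))
    (fun j l V' h1 h2 => by rw [← (fst P Q).comm_res, ← (fst P Q).comm_res, hs])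
  obtain ⟨y, hy, hy'⟩ := hQ U ι V hle hV (fun j => (snd P Q).app _ (s j))
    (fun j l V' h1 h2 => by rw [← (snd P Q).comm_res, ← (snd P Q).comm_res, hs])
  obtain ⟨z, rfl, rfl⟩ := exists_prod_mk x y
  refine ⟨z, fun j => prod_ext ?_ ?_, fun w hw => prod_ext (hx' _ fun j => ?_) (hy' _ fun j => ?_)⟩
  · rw [(fst P Q).comm_res, hx]
  · rw [(snd P Q).comm_res, hy]
  · rw [← hw, (fst P Q).comm_res]
  · rw [← hw, (snd P Q).comm_res]

lemma isSheafCond_zeroObj : (zeroObj A).IsSheafCond :=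
  fun _ _ _ _ _ _ _ => ⟨0, fun _ => zeroObj_eq _ _, fun _ _ => zeroObj_eq _ _⟩

end LModData

namespace Loc

open LModData

variable {P Q K : LModData k X G A} {t : ∀ U : G, Γ(X, U.1) →+* A.sec U}

lemma ker (ht : StrRes t) (hP : Loc t P) (hQ : Loc t Q) {i : LModHom K P}
    {f : LModHom P Q} (hi : i.Inj) (hf : ∀ U x, f.app U x = 0 ↔ ∃ y, i.app U y = x) :
    Loc t K := by
  intro U V hU g hV h
  constructor
  · intro y
    obtain ⟨n, m, hm⟩ := (hP U V hU g hV h).1 (i.app V y)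
    obtain ⟨l, hl⟩ := (hQ U V hU g hV h).2 (f.app U m) (by
      rw [← f.comm_res, ← hm, f.map_smul, (hf V _).2 ⟨y, rfl⟩, smul_zero])
    rw [← f.map_smul, hf] at hl
    obtain ⟨z, hz⟩ := hl
    refine ⟨l + n, z, hi V ?_⟩
    rw [i.map_smul, pow_add, mul_smul, hm, i.comm_res, hz, P.res_smul, map_pow (A.res h), ht]
  · intro m hm
    obtain ⟨n, hn⟩ := (hP U V hU g hV h).2 (i.app U m) (by rw [← i.comm_res, hm, map_zero])
    exact ⟨n, hi U (by rw [i.map_smul, hn, map_zero])⟩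

lemma prod (ht : StrRes t) (hP : Loc t P) (hQ : Loc t Q) : Loc t (P.prod Q) := by
  intro U V hU g hV h
  constructor
  · intro y
    obtain ⟨n, m, hm⟩ := (hP U V hU g hV h).1 ((fst P Q).app V y)
    obtain ⟨n', m', hm'⟩ := (hQ U V hU g hV h).1 ((snd P Q).app V y)
    obtain ⟨z, hz, hz'⟩ := exists_prod_mk (t U g ^ n' • m) (t U g ^ n • m')
    refine ⟨n + n', z, prod_ext ?_ ?_⟩
    · rw [LModHom.map_smul, (fst P Q).comm_res, hz, P.res_smul, ← hm, smul_smul,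
        map_pow (A.res h), ht, ← pow_add, add_comm]
    · rw [LModHom.map_smul, (snd P Q).comm_res, hz', Q.res_smul, ← hm', smul_smul,
        map_pow (A.res h), ht, ← pow_add]
  · intro m hm
    obtain ⟨n, hn⟩ := (hP U V hU g hV h).2 ((fst P Q).app U m) (by
      rw [← (fst P Q).comm_res, hm, map_zero])
    obtain ⟨n', hn'⟩ := (hQ U V hU g hV h).2 ((snd P Q).app U m) (by
      rw [← (snd P Q).comm_res, hm, map_zero])
    refine ⟨n + n', prod_ext ?_ ?_⟩
    · rw [LModHom.map_smul, add_comm, pow_add, mul_smul, hn, smul_zero, map_zero]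
    · rw [LModHom.map_smul, pow_add, mul_smul, hn', smul_zero, map_zero]

lemma zeroObj : Loc t (zeroObj A) :=
  fun _ _ _ _ _ _ => ⟨fun _ => ⟨0, 0, zeroObj_eq _ _⟩, fun _ _ => ⟨0, zeroObj_eq _ _⟩⟩

end Loc

/-- Quasicoherent sheaves of modules. -/
structure IsMu (t : ∀ U : G, Γ(X, U.1) →+* A.sec U) (P : LModData k X G A) : Prop where
  sheaf : P.IsSheafCond
  loc : Loc t P

namespace IsMu

open LModData

variable {P Q K : LModData k X G A} {t : ∀ U : G, Γ(X, U.1) →+* A.sec U}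

lemma ker (ht : StrRes t) (hP : IsMu t P) (hQ : IsMu t Q) {i : LModHom K P}
    {f : LModHom P Q} (hi : i.Inj) (hf : ∀ U x, f.app U x = 0 ↔ ∃ y, i.app U y = x) : IsMu t K :=
  ⟨isSheafCond_ker hP.1 hQ.1 hi hf, hP.2.ker ht hQ.2 hi hf⟩

lemma prod (ht : StrRes t) (hP : IsMu t P) (hQ : IsMu t Q) : IsMu t (P.prod Q) :=
  ⟨isSheafCond_prod hP.1 hQ.1, hP.2.prod ht hQ.2⟩

lemma zeroObj : IsMu t (zeroObj A) := ⟨isSheafCond_zeroObj, Loc.zeroObj⟩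

end IsMu

end

noncomputable section

variable {k : Type} [Field k] {X : Scheme.{0}}

/-- Naturality of the comparison map. -/
lemma LModHom.app_ε {G : Set X.Opens} {A : AlgData k X G} {t : ∀ U : G, Γ(X, U.1) →+* A.sec U}
    (ht : StrRes t) {P Q : LModData k X G A} (f : LModHom P Q) {U V : G} (h : V.1 ≤ U.1)
    (x : BC (rs h) (t U) (P.sec U)) : f.app V (P.ε h ht x) = Q.ε h ht (BC.map (f.lin U) x) := by
  induction x using BC.induction with
  | h0 => simp only [map_zero]
  | hmk c m =>
    rw [BC.map_mk, LModData.ε_mk, LModData.ε_mk, LModHom.map_smul, f.comm_res, f.lin_apply]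
  | hadd x y hx hy => simp only [map_add, hx, hy]

lemma HasBC.of_bijective {G : Set X.Opens} {A : AlgData k X G}
    {t : ∀ U : G, Γ(X, U.1) →+* A.sec U} {ht : StrRes t} {U : G} {P Q : LModData k X G A}
    (hP : HasBC ht U P) {f : LModHom P Q} (hf : ∀ V, Function.Bijective (f.app V)) :
    HasBC ht U Q := by
  intro V h hV
  have h1 : Function.Bijective (Q.ε h ht ∘ BC.map (f.lin U)) := by
    have h3 : Q.ε h ht ∘ BC.map (f.lin U) = f.app V ∘ P.ε h ht :=
      funext fun x => (f.app_ε ht h x).symm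
    exact h3 ▸ Function.Bijective.comp (hf V) (hP V h hV)
  have h2 : Function.Bijective (BC.map (φ := rs h) (s := t U) (f.lin U)) :=
    ⟨h1.1.of_comp, BC.map_surjective (hf U).2⟩
  exact (Function.Bijective.of_comp_iff _ h2).1 h1

/-- Every module embeds into an injective one. -/
lemma exists_injective_module (R M : Type) [Ring R] [AddCommGroup M] [Module R M] :
    ∃ (J : Type) (_ : AddCommGroup J) (_ : Module R J) (i : M →ₗ[R] J),
      Function.Injective i ∧ Module.Injective R J := by
  let J := Injective.under (ModuleCat.of R M)
  have hJ : Injective (ModuleCat.of R J) := inferInstanceAs (Injective J)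
  refine ⟨J, inferInstance, inferInstance, (Injective.ι (ModuleCat.of R M)).hom, ?_,
    Module.injective_module_of_injective_object R J⟩
  exact (ModuleCat.mono_iff_injective _).1 inferInstance

lemma injective_of_bijective {R J J' : Type} [Ring R] [AddCommGroup J] [Module R J]
    [AddCommGroup J'] [Module R J'] (e : J' →ₗ[R] J) (he : Function.Bijective e)
    (hJ : Module.Injective R J) : Module.Injective R J' where
  out _ _ _ _ _ _ f hf g := by
    obtain ⟨h, hh⟩ := hJ.out f hf (e.comp g)
    refine ⟨(LinearEquiv.ofBijective e he).symm.toLinearMap.comp h, fun x => ?_⟩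
    refine (LinearEquiv.ofBijective e he).injective ?_
    simp [hh]

variable {A : AlgData k X Set.univ}

/-- A quasicoherent sheaf of algebras on a quasicompact scheme with affine diagonal, with a cover
by affine open subsets stable under intersections. -/
structure Standing (t : ∀ U : (Set.univ : Set X.Opens), Γ(X, U.1) →+* A.sec U)
    (W : Set X.Opens) : Prop where
  strRes : StrRes t
  locA : Loc t A.self
  stable : AffStable W
  cover : ⨆ U : W, U.1 = ⊤
  compact : CompactSpace X
  inf : ∀ U V : X.Opens, IsAffineOpen U → IsAffineOpen V → IsAffineOpen (U ⊓ V)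

namespace Standing

open LModData

variable {t : ∀ U : (Set.univ : Set X.Opens), Γ(X, U.1) →+* A.sec U} {W : Set X.Opens}

/-- A presheaf on `W` all of whose sections are compatible with base change. -/
def AllBC (S : Standing t W) (K : LModData k X W (A.reindex (Set.subset_univ W))) : Prop :=
  ∀ U : W, HasBC (StrRes.reStr S.strRes (Set.subset_univ W)) U K

lemma hasBC (S : Standing t W) {P : LModData k X Set.univ A} (hP : Loc t P)
    {U : (Set.univ : Set X.Opens)} (hU : IsAffineOpen U.1) : HasBC S.strRes U P :=
  hP.hasBC S.strRes (fun _ _ _ => trivial) hU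

lemma allBC_reindex (S : Standing t W) {P : LModData k X Set.univ A} (hP : Loc t P) :
    S.AllBC (P.reindex (Set.subset_univ W)) :=
  fun U V h hV => S.hasBC hP (U := ⟨U.1, trivial⟩) (S.stable.aff _ U.2) ⟨V.1, trivial⟩ h hV

lemma hasBC_self (S : Standing t W) (U : W) :
    HasBC (StrRes.reStr S.strRes (Set.subset_univ W)) U (A.reindex (Set.subset_univ W)).self :=
  S.allBC_reindex S.locA U

lemma exists_mem (S : Standing t W) (p : X) : ∃ U : W, p ∈ U.1 := by
  have : p ∈ (⨆ U : W, U.1 : X.Opens) := S.cover ▸ trivial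
  exact Opens.mem_iSup.1 this

/-- Morphisms to a sheaf vanishing on `W` vanish. -/
lemma eq_zero (S : Standing t W) {P Q : LModData k X Set.univ A} (hP : Loc t P)
    (hQ : Q.IsSheafCond) (f : LModHom P Q)
    (h : ∀ (U : W) (x : P.sec ⟨U.1, trivial⟩), f.app ⟨U.1, trivial⟩ x = 0)
    (O : (Set.univ : Set X.Opens)) (x : P.sec O) : f.app O x = 0 := by
  refine hQ.eq_of_nhds fun p hp => ?_
  obtain ⟨U, hU⟩ := S.exists_mem p
  obtain ⟨V, hV, hpV, hVU⟩ := Opens.isBasis_iff_nbhd.1 X.isBasis_affineOpens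
    (show p ∈ O.1 ⊓ U.1 from ⟨hp, hU⟩)
  refine ⟨⟨V, trivial⟩, hVU.trans inf_le_left, hpV, ?_⟩
  rw [← f.comm_res, map_zero]
  obtain ⟨z, hz⟩ := (S.hasBC hP (U := ⟨U.1, trivial⟩) (S.stable.aff _ U.2) ⟨V, trivial⟩
    (hVU.trans inf_le_right) hV).2 (P.res (hVU.trans inf_le_left) x)
  rw [← hz, f.app_ε S.strRes]
  have : (f.lin ⟨U.1, trivial⟩) = 0 := LinearMap.ext (h U)
  rw [this]
  clear hz
  induction z using BC.induction with
  | h0 => simp only [map_zero]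
  | hmk c m => rw [BC.map_mk, LinearMap.zero_apply, ε_mk, map_zero, smul_zero]
  | hadd x y hx hy => simp only [map_add, hx, hy, add_zero]

lemma hom_ext (S : Standing t W) {P Q : LModData k X Set.univ A} (hP : Loc t P)
    (hQ : Q.IsSheafCond) {f g : LModHom P Q}
    (h : ∀ (U : W) (x : P.sec ⟨U.1, trivial⟩), f.app ⟨U.1, trivial⟩ x = g.app ⟨U.1, trivial⟩ x) :
    f = g := by
  ext O x
  exact sub_eq_zero.1 (S.eq_zero hP hQ (f - g) (fun U x => sub_eq_zero.2 (h U x)) O x)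

/-- Quasicoherent sheaves which are injective and acyclic enough. -/
structure Good (S : Standing t W) (I : LModData k X Set.univ A) : Prop where
  mu : IsMu t I
  lift : ∀ M, IsMu t M → ∀ φ : LModHom (M.reindex (Set.subset_univ W))
    (I.reindex (Set.subset_univ W)), ∃ f : LModHom M I, f.reindex (Set.subset_univ W) = φ
  inj : ∀ {K Q : LModData k X W (A.reindex (Set.subset_univ W))}, S.AllBC K → S.AllBC Q →
    ∀ u : LModHom K Q, u.Inj → ∀ f : LModHom K (I.reindex (Set.subset_univ W)),
    ∃ g : LModHom Q (I.reindex (Set.subset_univ W)), ∀ U x, g.app U (u.app U x) = f.app U x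
  acyclic : ∀ {Y : LModData k X W (A.reindex (Set.subset_univ W))}, S.AllBC Y → ∀ (n : ℕ)
    (f : LModHom (syzIter n Y).syz (I.reindex (Set.subset_univ W))),
    ∃ g : LModHom (syzIter n Y).free (I.reindex (Set.subset_univ W)),
      ∀ U x, g.app U ((syzIter n Y).syzι.app U x) = f.app U x

lemma Good.zeroObj (S : Standing t W) : S.Good (zeroObj A) where
  mu := IsMu.zeroObj
  lift _ _ _ := ⟨0, LModHom.ext fun _ _ => zeroObj_eq _ _⟩
  inj _ _ _ _ _ := ⟨0, fun _ _ => zeroObj_eq _ _⟩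
  acyclic _ _ _ := ⟨0, fun _ _ => zeroObj_eq _ _⟩

lemma Good.prod {S : Standing t W} {I J : LModData k X Set.univ A} (hI : S.Good I)
    (hJ : S.Good J) : S.Good (I.prod J) where
  mu := hI.mu.prod S.strRes hJ.mu
  lift M hM φ := by
    obtain ⟨f, hf⟩ := hI.lift M hM (((fst I J).reindex _).comp φ)
    obtain ⟨g, hg⟩ := hJ.lift M hM (((snd I J).reindex _).comp φ)
    refine ⟨pair f g, LModHom.ext fun U x => prod_ext ?_ ?_⟩
    · exact congrArg (fun ψ : LModHom _ _ => ψ.app U x) hf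
    · exact congrArg (fun ψ : LModHom _ _ => ψ.app U x) hg
  inj hK hQ u hu φ := by
    obtain ⟨f, hf⟩ := hI.inj hK hQ u hu (((fst I J).reindex _).comp φ)
    obtain ⟨g, hg⟩ := hJ.inj hK hQ u hu (((snd I J).reindex _).comp φ)
    exact ⟨pair (P := I.reindex _) (Q := J.reindex _) f g,
      fun U x => prod_ext (hf U x) (hg U x)⟩
  acyclic hY n φ := by
    obtain ⟨f, hf⟩ := hI.acyclic hY n (((fst I J).reindex _).comp φ)
    obtain ⟨g, hg⟩ := hJ.acyclic hY n (((snd I J).reindex _).comp φ)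
    exact ⟨pair (P := I.reindex _) (Q := J.reindex _) f g,
      fun U x => prod_ext (hf U x) (hg U x)⟩

/-- Coinduced sheaves for injective modules. -/
lemma exists_good (S : Standing t W) (U : W) {J : Type} [AddCommGroup J]
    [Module (A.sec ⟨U.1, trivial⟩) J] (hJ : Module.Injective (A.sec ⟨U.1, trivial⟩) J) :
    ∃ I, S.Good I ∧ S.stable.Coind U (I.reindex (Set.subset_univ W)) ∧
      ∃ e : I.sec ⟨U.1, trivial⟩ →ₗ[A.sec ⟨U.1, trivial⟩] J, Function.Bijective e ∧
        ∀ M, IsMu t M → ∀ h : M.sec ⟨U.1, trivial⟩ →ₗ[A.sec ⟨U.1, trivial⟩] J,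
          ∃ f : LModHom M I, ∀ x, e (f.app ⟨U.1, trivial⟩ x) = h x := by
  have hU := S.stable.aff _ U.2
  obtain ⟨I, hI, hI', hbij, e, he, hlift⟩ := exists_coinduced (U := ⟨U.1, trivial⟩)
    (S.hasBC S.locA hU) hU (fun V hV => S.inf V _ hV hU) J
  have hC : S.stable.Coind U (I.reindex (Set.subset_univ W)) := fun V => hbij ⟨V.1, trivial⟩
  have hinj : Module.Injective (A.sec ⟨U.1, trivial⟩) (I.sec ⟨U.1, trivial⟩) :=
    injective_of_bijective e he hJ
  refine ⟨I, ⟨⟨hI, hI'⟩, fun M hM φ => ?_, fun hK hQ u hu f => ?_, fun hY n f => ?_⟩, hC, e, he,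
    fun M hM => hlift M (S.hasBC hM.loc hU)⟩
  · obtain ⟨f, hf⟩ := hlift M (S.hasBC hM.loc hU)
      (e.comp (show M.sec ⟨U.1, trivial⟩ →ₗ[A.sec ⟨U.1, trivial⟩] I.sec ⟨U.1, trivial⟩ from
        φ.lin U))
    refine ⟨f, hC.hom_ext_of_hasBC (ht := StrRes.reStr S.strRes (Set.subset_univ W))
      (S.allBC_reindex hM.loc U) fun x => he.1 (hf x)⟩
  · exact hC.exists_extension (S.hasBC_self U) hinj (hK U) (hQ U) hu f
  · exact (AffStable.Split.of_hasBC (S.hasBC_self U) (hY U)).syzIter S.stable n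
      |>.exists_extension hC hinj f

/-- A morphism of quasicoherent sheaves is, on any finite set of members of `W`, the kernel of a
morphism to a good sheaf. -/
lemma exists_coker_emb_finset (S : Standing t W) {P Q : LModData k X Set.univ A} (hP : IsMu t P)
    (hQ : IsMu t Q) (f : LModHom P Q) (s : Finset W) :
    ∃ (I : LModData k X Set.univ A) (g : LModHom Q I), S.Good I ∧
      (∀ O x, g.app O (f.app O x) = 0) ∧
      ∀ U ∈ s, ∀ y : Q.sec ⟨U.1, trivial⟩, g.app ⟨U.1, trivial⟩ y = 0 →
        ∃ x, f.app ⟨U.1, trivial⟩ x = y := by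
  classical
  induction s using Finset.induction_on with
  | empty => exact ⟨_, 0, Good.zeroObj S, fun _ _ => rfl, by simp⟩
  | insert U s _ ih =>
    obtain ⟨I, g, hI, hg, hs⟩ := ih
    obtain ⟨J, _, _, i, hi, hJ⟩ := exists_injective_module (A.sec ⟨U.1, trivial⟩)
      (Q.sec ⟨U.1, trivial⟩ ⧸ LinearMap.range (f.lin ⟨U.1, trivial⟩))
    obtain ⟨I', hI', hC, e, he, hlift⟩ := S.exists_good U hJ
    obtain ⟨g', hg'⟩ := hlift Q hQ
      (i.comp (LinearMap.range (f.lin ⟨U.1, trivial⟩)).mkQ)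
    have h0 : ∀ y, g'.app ⟨U.1, trivial⟩ y = 0 ↔ ∃ x, f.app ⟨U.1, trivial⟩ x = y := fun y => by
      rw [← he.1.eq_iff, hg', map_zero, LinearMap.comp_apply, map_eq_zero_iff i hi,
        Submodule.mkQ_apply, Submodule.Quotient.mk_eq_zero]
      rfl
    have h1 : (g'.comp f).reindex (Set.subset_univ W) = 0 :=
      hC.hom_ext_of_hasBC (ht := StrRes.reStr S.strRes (Set.subset_univ W))
      (S.allBC_reindex hP.loc U) fun x => (h0 _).2 ⟨x, rfl⟩
    have h2 : ∀ O x, g'.app O (f.app O x) = 0 := S.eq_zero hP.loc hI'.mu.sheaf (g'.comp f)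
      fun V x => congrArg (fun φ : LModHom (P.reindex (Set.subset_univ W))
        (I'.reindex (Set.subset_univ W)) => φ.app V x) h1
    refine ⟨I'.prod I, pair g' g, hI'.prod hI, fun O x => prod_ext ?_ ?_, fun V hV y hy => ?_⟩
    · rw [fst_pair, h2, map_zero]
    · rw [snd_pair, hg, map_zero]
    · rcases Finset.mem_insert.1 hV with rfl | hV
      · refine (h0 y).1 ?_
        rw [← fst_pair g' g, hy, map_zero]
      · refine hs V hV y ?_
        rw [← snd_pair g' g, hy, map_zero]

/-- Exactness of a sequence of quasicoherent sheaves is inherited by smaller affine open subsets. -/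
lemma exact_of_le (S : Standing t W) {P Q R : LModData k X Set.univ A} (hQ : Loc t Q)
    (hR : Loc t R) {f : LModHom P Q} {g : LModHom Q R} {U V : (Set.univ : Set X.Opens)}
    (hU : IsAffineOpen U.1) (hV : IsAffineOpen V.1) (hVU : V.1 ≤ U.1)
    (h : ∀ y, g.app U y = 0 ↔ ∃ x, f.app U x = y) (y : Q.sec V) (hy : g.app V y = 0) :
    ∃ x, f.app V x = y := by
  obtain ⟨z, rfl⟩ := (S.hasBC hQ hU V hVU hV).2 y
  have hz0 : BC.map (g.lin U) z = 0 := by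
    refine (S.hasBC hR hU V hVU hV).1 ?_
    rw [← g.app_ε S.strRes, hy, map_zero]
  obtain ⟨w, rfl⟩ := BC.map_exact (rs_flat hVU hU hV) (f := f.lin U) (g := g.lin U) h z hz0
  exact ⟨P.ε hVU S.strRes w, f.app_ε S.strRes hVU w⟩

/-- The cokernel of a morphism of quasicoherent sheaves embeds into a good sheaf. -/
theorem exists_coker_emb (S : Standing t W) {P Q : LModData k X Set.univ A} (hP : IsMu t P)
    (hQ : IsMu t Q) (f : LModHom P Q) :
    ∃ (I : LModData k X Set.univ A) (g : LModHom Q I), S.Good I ∧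
      ∀ V : (Set.univ : Set X.Opens), IsAffineOpen V.1 → ∀ y : Q.sec V,
        g.app V y = 0 ↔ ∃ x, f.app V x = y := by
  have := S.compact
  obtain ⟨s, hs⟩ := isCompact_univ.elim_finite_subcover (fun U : W => (U.1 : Set X))
    (fun U => U.1.isOpen) (fun p _ => Set.mem_iUnion.2 (S.exists_mem p))
  obtain ⟨I, g, hI, hg, hgs⟩ := S.exists_coker_emb_finset hP hQ f s
  refine ⟨I, g, hI, fun V hV y => ⟨fun hy => ?_, fun ⟨x, hx⟩ => hx ▸ hg V x⟩⟩
  refine hP.loc.mem_range S.strRes (fun _ _ _ => trivial) hQ.loc f hV y fun p hp => ?_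
  obtain ⟨U, hU, hpU⟩ : ∃ U ∈ s, p ∈ U.1 := by simpa using hs (Set.mem_univ p)
  have hUa := S.stable.aff _ U.2
  have hgy : g.app ⟨V.1 ⊓ U.1, trivial⟩ (Q.res (U := V) inf_le_left y) = 0 := by
    rw [g.comm_res, hy, map_zero]
  exact ⟨⟨V.1 ⊓ U.1, trivial⟩, inf_le_left, ⟨hp, hpU⟩,
    S.exact_of_le hQ.loc hI.mu.loc (U := ⟨U.1, trivial⟩) hUa (S.inf _ _ hV hUa) inf_le_right
      (fun y => ⟨hgs U hU y, fun ⟨x, hx⟩ => hx ▸ hg _ x⟩) _ hgy⟩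

end Standing

end

noncomputable section

variable {k : Type} [Field k] {X : Scheme.{0}} {A : AlgData k X Set.univ}

namespace Standing

open LModData

variable {t : ∀ U : (Set.univ : Set X.Opens), Γ(X, U.1) →+* A.sec U} {W : Set X.Opens}

/-- Exactness on `W` implies local exactness. -/
lemma exact_nhds (S : Standing t W) {P Q R : LModData k X Set.univ A} (hQ : Loc t Q)
    (hR : Loc t R) {f : LModHom P Q} {g : LModHom Q R}
    (h : ∀ (U : W) y, g.app ⟨U.1, trivial⟩ y = 0 ↔ ∃ x, f.app ⟨U.1, trivial⟩ x = y)
    (O : (Set.univ : Set X.Opens)) (y : Q.sec O) (hy : g.app O y = 0) (p : X) (hp : p ∈ O.1) :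
    ∃ (V : (Set.univ : Set X.Opens)) (hV : V.1 ≤ O.1), p ∈ V.1 ∧
      ∃ x, f.app V x = Q.res hV y := by
  obtain ⟨U, hU⟩ := S.exists_mem p
  obtain ⟨V, hV, hpV, hVU⟩ := Opens.isBasis_iff_nbhd.1 X.isBasis_affineOpens
    (show p ∈ O.1 ⊓ U.1 from ⟨hp, hU⟩)
  have hVO : V ≤ O.1 := hVU.trans inf_le_left
  refine ⟨⟨V, trivial⟩, hVO, hpV, S.exact_of_le hQ hR (U := ⟨U.1, trivial⟩)
    (V := ⟨V, trivial⟩)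
    (S.stable.aff _ U.2) hV (hVU.trans inf_le_right) (h U) _ ?_⟩
  rw [g.comm_res, hy, map_zero]

/-- Injectivity of morphisms of quasicoherent sheaves can be checked on `W`. -/
lemma inj_of_W (S : Standing t W) {P Q : LModData k X Set.univ A} (hP : IsMu t P) (hQ : Loc t Q)
    {f : LModHom P Q} (h : ∀ (U : W) x, f.app ⟨U.1, trivial⟩ x = 0 → x = 0) : f.Inj := by
  refine LModHom.inj_of_eq_zero fun O x hx => hP.sheaf.eq_of_nhds fun p hp => ?_
  obtain ⟨V, hV, hpV, y, hy⟩ := S.exact_nhds hP.loc hQ (f := (0 : LModHom (zeroObj A) P))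
    (fun U y => ⟨fun hy => ⟨0, (h U y hy).symm⟩, fun ⟨_, hy⟩ => hy ▸ map_zero _⟩) O x hx p hp
  exact ⟨V, hV, hpV, hy.symm.trans (map_zero _).symm⟩

/-- A quasicoherent sheaf is the kernel of a morphism of good sheaves. -/
lemma exists_resolution (S : Standing t W) {P : LModData k X Set.univ A} (hP : IsMu t P) :
    ∃ (I J : LModData k X Set.univ A) (u : LModHom P I) (v : LModHom I J),
      S.Good I ∧ S.Good J ∧ u.Inj ∧ ∀ O y, v.app O y = 0 ↔ ∃ x, u.app O x = y := by
  obtain ⟨I, u, hI, hu⟩ := S.exists_coker_emb IsMu.zeroObj hP 0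
  obtain ⟨J, v, hJ, hv⟩ := S.exists_coker_emb hP hI.mu u
  have hui : u.Inj := S.inj_of_W hP hI.mu.loc fun U x hx => by
    obtain ⟨y, rfl⟩ := (hu ⟨U.1, trivial⟩ (S.stable.aff _ U.2) x).1 hx
    rfl
  have hvW : ∀ (U : W) y, v.app ⟨U.1, trivial⟩ y = 0 ↔ ∃ x, u.app ⟨U.1, trivial⟩ x = y :=
    fun U => hv ⟨U.1, trivial⟩ (S.stable.aff _ U.2)
  refine ⟨I, J, u, v, hI, hJ, hui, fun O y => ⟨fun hy => ?_, fun ⟨x, hx⟩ => ?_⟩⟩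
  · exact hP.sheaf.mem_range hI.mu.sheaf hui y (S.exact_nhds hI.mu.loc hJ.mu.loc hvW O y hy)
  · rw [← hx]
    exact S.eq_zero hP.loc hJ.mu.sheaf (v.comp u) (fun U x => (hvW U _).2 ⟨x, rfl⟩) O x

/-- Restriction to `W` is full on quasicoherent sheaves. -/
lemma exists_reindex_eq (S : Standing t W) {M N : LModData k X Set.univ A} (hM : IsMu t M)
    (hN : IsMu t N) (φ : LModHom (M.reindex (Set.subset_univ W)) (N.reindex (Set.subset_univ W))) :
    ∃ f : LModHom M N, f.reindex (Set.subset_univ W) = φ := by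
  obtain ⟨I, J, u, v, hI, hJ, hu, hv⟩ := S.exists_resolution hN
  obtain ⟨h, hh⟩ := hI.lift M hM ((u.reindex _).comp φ)
  have hh' : ∀ (U : W) x, h.app ⟨U.1, trivial⟩ x = u.app ⟨U.1, trivial⟩ (φ.app U x) :=
    fun U x => congrArg (fun ψ : LModHom (M.reindex (Set.subset_univ W))
      (I.reindex (Set.subset_univ W)) => ψ.app U x) hh
  obtain ⟨f, hf⟩ := LModHom.exists_lift (f := h) hu fun O x => (hv O _).1
    (S.eq_zero hM.loc hJ.mu.sheaf (v.comp h) (fun U x => (hv _ _).2 ⟨φ.app U x, (hh' U x).symm⟩) O x)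
  exact ⟨f, LModHom.ext fun U x => hu _ ((hf _ x).trans (hh' U x))⟩

/-- Quasicoherent sheaves embed into good ones with quasicoherent quotient. -/
lemma exists_emb (S : Standing t W) {P : LModData k X Set.univ A} (hP : IsMu t P) :
    ∃ (I R : LModData k X Set.univ A) (u : LModHom P I) (v : LModHom I R), S.Good I ∧ IsMu t R ∧
      IsSES (u.reindex (Set.subset_univ W)) (v.reindex (Set.subset_univ W)) := by
  obtain ⟨I, J, u, v, hI, hJ, hu, hv⟩ := S.exists_resolution hP
  obtain ⟨J', w, hJ', hw⟩ := S.exists_coker_emb hI.mu hJ.mu v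
  obtain ⟨R, i, hi, hiw⟩ := exists_ker w
  have hwv : ∀ O x, w.app O (v.app O x) = 0 := S.eq_zero hI.mu.loc hJ'.mu.sheaf (w.comp v)
    fun U x => (hw _ (S.stable.aff _ U.2) _).2 ⟨x, rfl⟩
  obtain ⟨v', hv'⟩ := LModHom.exists_lift (f := v) hi fun O x => (hiw O _).1 (hwv O x)
  refine ⟨I, R, u, v', hI, hJ.mu.ker S.strRes hJ'.mu hi hiw, fun U => hu _, fun U x => ?_,
    fun U x => ?_⟩
  · obtain ⟨y, hy⟩ := (hw _ (S.stable.aff _ U.2) (i.app ⟨U.1, trivial⟩ x)).1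
      ((hiw _ _).2 ⟨x, rfl⟩)
    exact ⟨y, hi _ ((hv' _ y).trans hy)⟩
  · refine Iff.trans ?_ (hv ⟨U.1, trivial⟩ x)
    refine Iff.trans (map_eq_zero_iff (i.app ⟨U.1, trivial⟩) (hi _)).symm ?_
    exact (congrArg (· = 0) (hv' ⟨U.1, trivial⟩ x)).to_iff

/-- The essential image of the quasicoherent sheaves. -/
def InC (t : ∀ U : (Set.univ : Set X.Opens), Γ(X, U.1) →+* A.sec U) (W : Set X.Opens)
    (P : LModData k X W (A.reindex (Set.subset_univ W))) : Prop :=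
  ∃ Q, IsMu t Q ∧ ∃ e : LModHom (Q.reindex (Set.subset_univ W)) P,
    ∀ U, Function.Bijective (e.app U)

lemma inC_reindex {Q : LModData k X Set.univ A} (hQ : IsMu t Q) :
    InC t W (Q.reindex (Set.subset_univ W)) :=
  ⟨Q, hQ, LModHom.id _, fun _ => Function.bijective_id⟩

lemma InC.allBC (S : Standing t W) {P : LModData k X W (A.reindex (Set.subset_univ W))}
    (hP : InC t W P) : S.AllBC P := by
  obtain ⟨Q, hQ, e, he⟩ := hP
  exact fun U => HasBC.of_bijective (ht := StrRes.reStr S.strRes (Set.subset_univ W))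
    (S.allBC_reindex hQ.loc U) he

lemma InC.exists_inverse {P : LModData k X W (A.reindex (Set.subset_univ W))} (hP : InC t W P) :
    ∃ Q, IsMu t Q ∧ ∃ (e : LModHom (Q.reindex (Set.subset_univ W)) P)
      (e' : LModHom P (Q.reindex (Set.subset_univ W))),
        (∀ U x, e'.app U (e.app U x) = x) ∧ ∀ U y, e.app U (e'.app U y) = y := by
  obtain ⟨Q, hQ, e, he⟩ := hP
  exact ⟨Q, hQ, e, LModHom.exists_inverse (fun U => (he U).1) (fun U => (he U).2)⟩

lemma InC.zeroObj : InC t W (zeroObj (A.reindex (Set.subset_univ W))) :=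
  ⟨LModData.zeroObj A, IsMu.zeroObj, LModHom.id _, fun _ => Function.bijective_id⟩

lemma resolving (S : Standing t W) :
    Resolving (InC t W) (fun J => ∃ I, S.Good I ∧ J = I.reindex (Set.subset_univ W)) where
  emb R hR := by
    obtain ⟨Q, hQ, e, e', he, he'⟩ := hR.exists_inverse
    obtain ⟨I, R', u, v, hI, hR', h⟩ := S.exists_emb hQ
    refine ⟨_, _, (u.reindex _).comp e', v.reindex (Set.subset_univ W), ⟨I, hI, rfl⟩,
      inC_reindex hI.mu, inC_reindex hR', fun U x y hxy => ?_, h.surj, fun U x => ?_⟩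
    · rw [← he' U x, ← he' U y]
      exact congrArg (e.app U) (h.inj U hxy)
    · refine (h.exact U x).trans ⟨fun ⟨y, hy⟩ => ⟨e.app U y, ?_⟩, fun ⟨y, hy⟩ => ⟨_, hy⟩⟩
      exact (congrArg ((u.reindex (Set.subset_univ W)).app U) (he U y)).trans hy
  inj := by
    rintro _ ⟨I, hI, rfl⟩ K Q hK hQ
    exact hI.inj (hK.allBC S) (hQ.allBC S)
  acyclic := by
    rintro R hR n _ ⟨I, hI, rfl⟩
    exact hI.acyclic (hR.allBC S) n
  ker := by
    intro K P Q i f hP hQ hi hf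
    obtain ⟨P', hP', p, p', hp, hp'⟩ := hP.exists_inverse
    obtain ⟨Q', hQ', q, q', hq, hq'⟩ := hQ.exists_inverse
    obtain ⟨f', hf'⟩ := S.exists_reindex_eq hP' hQ' (q'.comp (f.comp p))
    have hf'' : ∀ (U : W) x, f'.app ⟨U.1, trivial⟩ x = q'.app U (f.app U (p.app U x)) :=
      fun U x => congrArg (fun ψ : LModHom (P'.reindex (Set.subset_univ W))
        (Q'.reindex (Set.subset_univ W)) => ψ.app U x) hf'
    obtain ⟨K', i', hi', hi''⟩ := exists_ker f'
    have hz : ∀ (U : W) x, f'.app ⟨U.1, trivial⟩ x = 0 ↔ f.app U (p.app U x) = 0 := fun U x => by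
      rw [hf'']
      exact map_eq_zero_iff (q'.app U) (Function.LeftInverse.injective (hq' U))
    obtain ⟨e, he⟩ := LModHom.exists_lift (f := p.comp (i'.reindex (Set.subset_univ W))) hi
      fun U x => (hf U _).1 ((hz U _).1 ((hi'' _ _).2 ⟨x, rfl⟩))
    refine ⟨K', hP'.ker S.strRes hQ' hi' hi'', e, fun U => ⟨fun x y hxy => ?_, fun x => ?_⟩⟩
    · refine hi' _ (Function.LeftInverse.injective (hp U) ?_)
      exact (he U x).symm.trans ((congrArg (i.app U) hxy).trans (he U y))
    · have h1 : f.app U (p.app U (p'.app U (i.app U x))) = 0 := by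
        rw [hp']
        exact (hf U _).2 ⟨x, rfl⟩
      obtain ⟨y, hy⟩ := (hi'' _ _).1 ((hz U _).2 h1)
      refine ⟨y, hi U ((he U y).trans ?_)⟩
      exact (congrArg (p.app U) hy).trans (hp' U _)
  prod := by
    rintro P Q ⟨P', hP', p, hp⟩ ⟨Q', hQ', q, hq⟩
    refine ⟨_, hP'.prod S.strRes hQ', pair (p.comp ((fst P' Q').reindex _))
      (q.comp ((snd P' Q').reindex _)), fun U => ⟨fun x y hxy => ?_, fun x => ?_⟩⟩
    · refine prod_ext (P := P') (Q := Q') ((hp U).1 ?_) ((hq U).1 ?_)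
      · exact congrArg ((fst P Q).app U) hxy
      · exact congrArg ((snd P Q).app U) hxy
    · obtain ⟨a, ha⟩ := (hp U).2 ((fst P Q).app U x)
      obtain ⟨b, hb⟩ := (hq U).2 ((snd P Q).app U x)
      obtain ⟨z, hz1, hz2⟩ := exists_prod_mk (P := P') (Q := Q') a b
      refine ⟨z, prod_ext ?_ ?_⟩
      · exact (congrArg (p.app U) hz1).trans ha
      · exact (congrArg (q.app U) hz2).trans hb

end Standing

end

noncomputable section

variable {k : Type} [Field k] {X : Scheme.{0}}

lemma NExt.MorRel.trans {G : Set X.Opens} {n : ℕ} {A : AlgData k X G} {P N : LModData k X G A}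
    {E E' E'' : NExt n P N} (h : MorRel E E') (h' : MorRel E' E'') : MorRel E E'' := by
  obtain ⟨f, hf1, hf2, hf3⟩ := h
  obtain ⟨g, hg1, hg2, hg3⟩ := h'
  refine ⟨fun i => (g i).comp (f i), fun i U x => ?_, fun U x => (hg2 U _).trans (hf2 U x),
    fun U m => (congrArg ((g (n + 1)).app U) (hf3 U m)).trans (hg3 U m)⟩
  exact (congrArg ((g i).app U) (hf1 i U x)).trans (hg1 i U _)

variable {A : AlgData k X Set.univ}

namespace Standing

open LModData

variable {t : ∀ U : (Set.univ : Set X.Opens), Γ(X, U.1) →+* A.sec U} {W : Set X.Opens}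
  {M N : LModData k X Set.univ A} {n : ℕ}

/-- Morphisms of quasicoherent sheaves which are bijective on `W` are bijective. -/
lemma bijective_of_W (S : Standing t W) {P Q : LModData k X Set.univ A} (hP : IsMu t P)
    (hQ : IsMu t Q) {f : LModHom P Q} (h : ∀ U : W, Function.Bijective (f.app ⟨U.1, trivial⟩))
    (O : (Set.univ : Set X.Opens)) : Function.Bijective (f.app O) := by
  have hf : f.Inj := S.inj_of_W hP hQ.loc fun U x => (injective_iff_map_eq_zero _).1 (h U).1 x
  refine ⟨hf O, fun y => hP.sheaf.mem_range hQ.sheaf hf y ?_⟩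
  exact S.exact_nhds hQ.loc Loc.zeroObj (g := (0 : LModHom Q (zeroObj A)))
    (fun U y => ⟨fun _ => (h U).2 y, fun _ => rfl⟩) O y rfl

/-- Restriction to `W` is exact. -/
lemma sectionwiseExact_reindex (S : Standing t W) {E : NExt n M N} (hE : ∀ i, IsMu t (E.obj i))
    (h : E.LocallyExact) : (E.reindex (Set.subset_univ W)).SectionwiseExact := by
  refine ⟨fun U => h.1 _, fun j hj U x => ⟨fun hx => ?_, ?_⟩, fun U x => ?_⟩
  · exact (hE (j + 2)).loc.mem_range S.strRes (fun _ _ _ => trivial) (hE (j + 1)).loc (E.d (j + 1))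
      (U := ⟨U.1, trivial⟩) (S.stable.aff _ U.2) x (h.2.2.1 j hj _ x hx)
  · rintro ⟨y, rfl⟩
    exact h.2.1 j hj _ y
  · exact (hE 1).loc.mem_range S.strRes (fun _ _ _ => trivial) (hE 0).loc (E.d 0)
      (U := ⟨U.1, trivial⟩) (S.stable.aff _ U.2) x (h.2.2.2 _ x)

/-- Exactness on `W` implies exactness. -/
lemma locallyExact_of_reindex (S : Standing t W) {E : NExt n M N} (hE : ∀ i, IsMu t (E.obj i))
    (h : (E.reindex (Set.subset_univ W)).SectionwiseExact) : E.LocallyExact := by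
  refine ⟨S.inj_of_W (hE _) (hE _).loc fun U x => (injective_iff_map_eq_zero _).1 (h.1 U) x,
    fun j hj => ?_, fun j hj => ?_, fun O x => ?_⟩
  · exact S.eq_zero (hE _).loc (hE _).sheaf ((E.d j).comp (E.d (j + 1)))
      fun U x => (h.2.1 j hj U _).2 ⟨x, rfl⟩
  · exact S.exact_nhds (hE _).loc (hE _).loc (h.2.1 j hj)
  · exact S.exact_nhds (hE _).loc Loc.zeroObj (g := (0 : LModHom (E.obj 0) (zeroObj A)))
      (fun U y => ⟨fun _ => h.2.2 U y, fun _ => rfl⟩) O x rfl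

/-- Morphisms of extensions of quasicoherent sheaves can be lifted from `W`. -/
lemma morRel_of_reindex (S : Standing t W) (hM : IsMu t M) (hN : IsMu t N) {E E' : NExt n M N}
    (hE : ∀ i, IsMu t (E.obj i)) (hE' : ∀ i, IsMu t (E'.obj i))
    (h : NExt.MorRel (E.reindex (Set.subset_univ W)) (E'.reindex (Set.subset_univ W))) :
    NExt.MorRel E E' := by
  obtain ⟨f, hf1, hf2, hf3⟩ := h
  choose g hg using fun i => S.exists_reindex_eq (hE i) (hE' i) (f i)
  obtain rfl : f = fun i => (g i).reindex (Set.subset_univ W) := funext fun i => (hg i).symm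
  refine ⟨g, fun i O x => ?_, fun O x => ?_, fun O x => ?_⟩
  · exact congrArg (fun ψ : LModHom _ _ => ψ.app O x) (S.hom_ext (hE _).loc (hE' _).sheaf
      (f := (g i).comp (E.d i)) (g := (E'.d i).comp (g (i + 1))) (hf1 i))
  · exact congrArg (fun ψ : LModHom _ _ => ψ.app O x) (S.hom_ext (hE _).loc hM.sheaf
      (f := E'.isoP.comp (g 0)) (g := E.isoP) hf2)
  · exact congrArg (fun ψ : LModHom _ _ => ψ.app O x) (S.hom_ext hN.loc (hE' _).sheaf
      (f := (g (n + 1)).comp E.isoN) (g := E'.isoN) hf3)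

/-- Extensions of presheaves on `W` with all terms restrictions of quasicoherent sheaves are
restrictions of extensions of quasicoherent sheaves. -/
lemma exists_reindex_nExt (S : Standing t W) (hM : IsMu t M) (hN : IsMu t N)
    {E : NExt n (M.reindex (Set.subset_univ W)) (N.reindex (Set.subset_univ W))}
    (h : E.SectionwiseExact) (hE : ∀ i, InC t W (E.obj i)) :
    ∃ F : NExt n M N, (∀ i, IsMu t (F.obj i)) ∧
      (F.reindex (Set.subset_univ W)).SectionwiseExact ∧
      NExt.MorRel (F.reindex (Set.subset_univ W)) E ∧
      NExt.MorRel E (F.reindex (Set.subset_univ W)) := by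
  choose Q hQ e e' he he' using fun i => (hE i).exists_inverse
  have hbij : ∀ i U, Function.Bijective ((e i).app U) := fun i U =>
    ⟨Function.LeftInverse.injective (he i U), Function.RightInverse.surjective (he' i U)⟩
  have hbij' : ∀ i U, Function.Bijective ((e' i).app U) := fun i U =>
    ⟨Function.LeftInverse.injective (he' i U), Function.RightInverse.surjective (he i U)⟩
  choose d hd using fun i => S.exists_reindex_eq (hQ (i + 1)) (hQ i)
    ((e' i).comp ((E.d i).comp (e (i + 1))))
  obtain ⟨a, ha⟩ := S.exists_reindex_eq (hQ 0) hM (E.isoP.comp (e 0))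
  obtain ⟨b, hb⟩ := S.exists_reindex_eq hN (hQ (n + 1)) ((e' (n + 1)).comp E.isoN)
  have hd' : ∀ i U x, ((d i).reindex (Set.subset_univ W)).app U x =
      (e' i).app U ((E.d i).app U ((e (i + 1)).app U x)) := fun i U x => by rw [hd]; rfl
  have ha' : ∀ U x, (a.reindex (Set.subset_univ W)).app U x = E.isoP.app U ((e 0).app U x) :=
    fun U x => by rw [ha]; rfl
  have hb' : ∀ U x, (b.reindex (Set.subset_univ W)).app U x =
      (e' (n + 1)).app U (E.isoN.app U x) := fun U x => by rw [hb]; rfl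
  let F : NExt n M N :=
    { obj := Q
      d := d
      isoP := a
      isoP_bij := S.bijective_of_W (hQ 0) hM fun U => by
        change Function.Bijective ((a.reindex (Set.subset_univ W)).app U)
        rw [ha]
        exact (E.isoP_bij U).comp (hbij 0 U)
      isoN := b
      isoN_bij := S.bijective_of_W hN (hQ (n + 1)) fun U => by
        change Function.Bijective ((b.reindex (Set.subset_univ W)).app U)
        rw [hb]
        exact (hbij' (n + 1) U).comp (E.isoN_bij U) }
  refine ⟨F, hQ, ⟨fun U => ?_, fun j hj U x => ?_, fun U => ?_⟩, ⟨e, fun i U x => ?_, fun U x => ?_,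
    fun U x => ?_⟩, ⟨e', fun i U x => ?_, fun U x => ?_, fun U x => ?_⟩⟩
  · change Function.Injective (((d n).reindex (Set.subset_univ W)).app U)
    rw [hd]
    exact (hbij' n U).1.comp ((h.1 U).comp (hbij (n + 1) U).1)
  · refine Iff.trans ?_ ((h.2.1 j hj U ((e (j + 1)).app U x)).trans ⟨?_, ?_⟩)
    · refine Iff.trans (congrArg (· = 0) (hd' j U x)).to_iff ?_
      exact map_eq_zero_iff ((e' j).app U) (hbij' j U).1
    · rintro ⟨y, hy⟩
      refine ⟨(e' (j + 2)).app U y, (hd' (j + 1) U _).trans ?_⟩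
      rw [he', hy]
      exact he (j + 1) U x
    · rintro ⟨y, hy⟩
      refine ⟨(e (j + 2)).app U y, (hbij' (j + 1) U).1 ?_⟩
      exact ((hd' (j + 1) U y).symm.trans hy).trans (he (j + 1) U x).symm
  · change Function.Surjective (((d 0).reindex (Set.subset_univ W)).app U)
    rw [hd]
    exact (hbij' 0 U).2.comp ((h.2.2 U).comp (hbij 1 U).2)
  · exact (congrArg ((e i).app U) (hd' i U x)).trans (he' i U _)
  · exact (ha' U x).symm
  · exact (congrArg ((e (n + 1)).app U) (hb' U x)).trans (he' (n + 1) U _)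
  · exact ((hd' i U _).trans (congrArg (fun y => (e' i).app U ((E.d i).app U y))
      (he' (i + 1) U x))).symm
  · exact (ha' U _).trans (congrArg (E.isoP.app U) (he' 0 U x))
  · exact (hb' U x).symm

/-- Every extension of presheaves on `W` is equivalent to the restriction of an extension of
quasicoherent sheaves. -/
lemma exists_eqvGen_reindex (S : Standing t W) (hM : IsMu t M) (hN : IsMu t N)
    (E : {E : NExt (n + 1) (M.reindex (Set.subset_univ W)) (N.reindex (Set.subset_univ W)) //
      E.SectionwiseExact}) :
    ∃ (F : NExt (n + 1) M N) (_ : ∀ i, IsMu t (F.obj i))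
      (h : (F.reindex (Set.subset_univ W)).SectionwiseExact),
      Relation.EqvGen (fun (E E' : {E : NExt (n + 1) (M.reindex (Set.subset_univ W))
        (N.reindex (Set.subset_univ W)) // E.SectionwiseExact}) => NExt.MorRel E.1 E'.1)
        ⟨F.reindex (Set.subset_univ W), h⟩ E := by
  obtain ⟨E, hE⟩ := E
  have hN' : InC t W (N.reindex (Set.subset_univ W)) := inC_reindex hN
  obtain ⟨T₀, T, h₀, hT, hT', m, m'⟩ := (Splice.extensions_of_resolving S.resolving
    (inC_reindex hM) hN' n).1 _ (NExt.toSplice_genuine hE)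
  obtain ⟨F, hF, hF', r, -⟩ := S.exists_reindex_nExt hM hN (Splice.toNExt_exact hT)
    (Splice.toNExt_all InC.zeroObj hN' hT')
  refine ⟨F, hF, hF', .trans _ ⟨_, Splice.toNExt_exact hT⟩ _ (.rel _ _ r) ?_⟩
  refine .trans _ ⟨_, Splice.toNExt_exact h₀⟩ _ (.symm _ _ (.rel _ _ (m'.morRel h₀ hT))) ?_
  exact .trans _ ⟨_, Splice.toNExt_exact (NExt.toSplice_genuine hE)⟩ _
    (.rel _ _ (m.morRel h₀ (NExt.toSplice_genuine hE))) (.rel _ _ (NExt.morRel_toSplice hE))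

/-- Extensions of quasicoherent sheaves that become equivalent on `W` are equivalent. -/
lemma eqvGen_of_reindex (S : Standing t W) (hM : IsMu t M) (hN : IsMu t N)
    {E E' : NExt (n + 1) M N} (hE : ∀ i, IsMu t (E.obj i)) (hE' : ∀ i, IsMu t (E'.obj i))
    (h : (E.reindex (Set.subset_univ W)).SectionwiseExact)
    (h' : (E'.reindex (Set.subset_univ W)).SectionwiseExact)
    (r : Relation.EqvGen (fun (E E' : {E : NExt (n + 1) (M.reindex (Set.subset_univ W))
        (N.reindex (Set.subset_univ W)) // E.SectionwiseExact}) => NExt.MorRel E.1 E'.1)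
        ⟨E.reindex (Set.subset_univ W), h⟩ ⟨E'.reindex (Set.subset_univ W), h'⟩) :
    Relation.EqvGen (fun (E E' : {E : NExt (n + 1) M N // (∀ i, IsMu t (E.obj i)) ∧
      E.LocallyExact}) => NExt.MorRel E.1 E'.1)
      ⟨E, hE, S.locallyExact_of_reindex hE h⟩ ⟨E', hE', S.locallyExact_of_reindex hE' h'⟩ := by
  have hN' : InC t W (N.reindex (Set.subset_univ W)) := inC_reindex hN
  have hM' : InC t W (M.reindex (Set.subset_univ W)) := inC_reindex hM
  have hC : Splice.All (InC t W) (n + 1) (NExt.toSplice _ _ h) :=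
    NExt.toSplice_all S.resolving h hM' fun i => inC_reindex (hE i)
  have hC' : Splice.All (InC t W) (n + 1) (NExt.toSplice _ _ h') :=
    NExt.toSplice_all S.resolving h' hM' fun i => inC_reindex (hE' i)
  have hS := NExt.toSplice_genuine h
  have hS' := NExt.toSplice_genuine h'
  have key : ∀ {D D' : {E : NExt (n + 1) (M.reindex (Set.subset_univ W))
      (N.reindex (Set.subset_univ W)) // E.SectionwiseExact}},
      Relation.EqvGen (fun E E' => NExt.MorRel E.1 E'.1) D D' →
      Relation.EqvGen (fun T T' => Splice.Mor (n + 1) (LModHom.id _) T T')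
        (D.1.toSplice _ D.2) (D'.1.toSplice _ D'.2) := by
    intro D D' h
    induction h with
    | rel D D' h => exact .rel _ _ (NExt.MorOver.toSplice D.2 D'.2 h)
    | refl D => exact .refl _
    | symm _ _ _ ih => exact .symm _ _ ih
    | trans _ _ _ _ _ ih ih' => exact .trans _ _ _ ih ih'
  obtain ⟨T, T', ⟨hT, hTC⟩, ⟨hT', hTC'⟩, m, m', m''⟩ := (Splice.extensions_of_resolving S.resolving
    hM' hN' n).2 _ _ hC hC' (key r)
  obtain ⟨F₁, hF₁, e₁, i₁, j₁⟩ := S.exists_reindex_nExt hM hN (Splice.toNExt_exact hS)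
    (Splice.toNExt_all InC.zeroObj hN' hC)
  obtain ⟨F₂, hF₂, e₂, i₂, j₂⟩ := S.exists_reindex_nExt hM hN (Splice.toNExt_exact hT)
    (Splice.toNExt_all InC.zeroObj hN' hTC)
  obtain ⟨F₃, hF₃, e₃, i₃, j₃⟩ := S.exists_reindex_nExt hM hN (Splice.toNExt_exact hT')
    (Splice.toNExt_all InC.zeroObj hN' hTC')
  obtain ⟨F₄, hF₄, e₄, i₄, j₄⟩ := S.exists_reindex_nExt hM hN (Splice.toNExt_exact hS')
    (Splice.toNExt_all InC.zeroObj hN' hC')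
  have r₁ := S.morRel_of_reindex hM hN hF₁ hE (i₁.trans (NExt.morRel_toSplice h))
  have r₂ := S.morRel_of_reindex hM hN hF₁ hF₂ (i₁.trans ((m.morRel hS hT).trans j₂))
  have r₃ := S.morRel_of_reindex hM hN hF₂ hF₃ (i₂.trans ((m'.morRel hT hT').trans j₃))
  have r₄ := S.morRel_of_reindex hM hN hF₄ hF₃ (i₄.trans ((m''.morRel hS' hT').trans j₃))
  have r₅ := S.morRel_of_reindex hM hN hF₄ hE' (i₄.trans (NExt.morRel_toSplice h'))
  refine .trans _ ⟨F₁, hF₁, S.locallyExact_of_reindex hF₁ e₁⟩ _ (.symm _ _ (.rel _ _ r₁)) ?_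
  refine .trans _ ⟨F₂, hF₂, S.locallyExact_of_reindex hF₂ e₂⟩ _ (.rel _ _ r₂) ?_
  refine .trans _ ⟨F₃, hF₃, S.locallyExact_of_reindex hF₃ e₃⟩ _ (.rel _ _ r₃) ?_
  refine .trans _ ⟨F₄, hF₄, S.locallyExact_of_reindex hF₄ e₄⟩ _ (.symm _ _ (.rel _ _ r₄)) ?_
  exact .rel _ _ r₅

/-- Restriction to `W` is bijective on Yoneda extensions of quasicoherent sheaves. -/
theorem exists_yExt_bijective (S : Standing t W) (hM : IsMu t M) (hN : IsMu t N) (hn : 1 ≤ n)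
    {Cond : NExt n M N → Prop}
    (hCond : ∀ E, Cond E ↔ (∀ i, IsMu t (E.obj i)) ∧ E.LocallyExact) :
    (∀ E : {E : NExt n M N // Cond E}, (E.1.reindex (Set.subset_univ W)).SectionwiseExact) ∧
      ∃ Φ : YExt n M N Cond →
          YExt n (M.reindex (Set.subset_univ W)) (N.reindex (Set.subset_univ W))
            (fun E' => E'.SectionwiseExact),
        Function.Bijective Φ ∧
        ∀ (E : {E : NExt n M N // Cond E})
          (E' : {E' : NExt n (M.reindex (Set.subset_univ W))
              (N.reindex (Set.subset_univ W)) // E'.SectionwiseExact}),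
          E'.1 = E.1.reindex (Set.subset_univ W) →
          Φ (Quot.mk _ E) = Quot.mk _ E' := by
  obtain rfl : Cond = fun E => (∀ i, IsMu t (E.obj i)) ∧ E.LocallyExact :=
    funext fun E => propext (hCond E)
  obtain ⟨n, rfl⟩ := Nat.exists_eq_succ_of_ne_zero (Nat.one_le_iff_ne_zero.1 hn)
  have hex : ∀ E : {E : NExt (n + 1) M N // (∀ i, IsMu t (E.obj i)) ∧ E.LocallyExact},
      (E.1.reindex (Set.subset_univ W)).SectionwiseExact :=
    fun E => S.sectionwiseExact_reindex E.2.1 E.2.2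
  refine ⟨hex, Quot.lift (fun E => Quot.mk _ ⟨E.1.reindex (Set.subset_univ W), hex E⟩) ?_,
    ⟨?_, ?_⟩, ?_⟩
  · rintro E E' ⟨f, hf1, hf2, hf3⟩
    exact Quot.sound ⟨fun i => (f i).reindex _, fun i U => hf1 i _, fun U => hf2 _, fun U => hf3 _⟩
  · rintro ⟨E⟩ ⟨E'⟩ h
    exact Quot.eqvGen_sound (S.eqvGen_of_reindex hM hN E.2.1 E'.2.1 (hex E) (hex E')
      (Quot.eqvGen_exact h))
  · rintro ⟨E'⟩
    obtain ⟨F, hF, h, r⟩ := S.exists_eqvGen_reindex hM hN E'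
    exact ⟨Quot.mk _ ⟨F, hF, S.locallyExact_of_reindex hF h⟩, Quot.eqvGen_sound r⟩
  · rintro E ⟨_, hE'⟩ rfl
    rfl

end Standing

end

theorem restriction_to_W_fully_faithful_on_Ext
    -- `Z` is a quasicompact separated scheme over `k`:
    (hqc : CompactSpace Z) (hsep : Z.IsSeparated)
    (kstr : ∀ U : Z.Opens, k →+* Γ(Z, U))
    (kstr_res : ∀ {U V : Z.Opens} (h : V ≤ U) (c : k),
      Z.presheaf.map (homOfLE h).op (kstr U c) = kstr V c)
    -- a quasicoherent sheaf of `k`-algebras `A_Z` on `Z`: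
    (A : AlgData k Z (Set.univ : Set Z.Opens))
    (hAsheaf : ∀ (U : (Set.univ : Set Z.Opens)) (ι : Type) (V : ι → (Set.univ : Set Z.Opens))
      (hle : ∀ i, (V i : Z.Opens) ≤ (U : Z.Opens)),
      ((⨆ i, (V i : Z.Opens)) = (U : Z.Opens)) →
      ∀ s : ∀ i, A.sec (V i),
        (∀ (i j : ι) (W' : (Set.univ : Set Z.Opens)) (h1 : (W' : Z.Opens) ≤ V i)
          (h2 : (W' : Z.Opens) ≤ V j), A.res h1 (s i) = A.res h2 (s j)) →
        ∃! t : A.sec U, ∀ i, A.res (hle i) t = s i)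
    (str : ∀ U : Z.Opens, Γ(Z, U) →+* A.sec ⟨U, trivial⟩)
    (str_res : ∀ {U V : Z.Opens} (h : V ≤ U) (c : Γ(Z, U)),
      A.res (U := ⟨U, trivial⟩) (V := ⟨V, trivial⟩) h (str U c) =
        str V (Z.presheaf.map (homOfLE h).op c))
    (str_k : ∀ (U : Z.Opens) (c : k), str U (kstr U c) = algebraMap k _ c)
    (hAqcoh : ∀ (U : Z.Opens), IsAffineOpen U → ∀ f : Γ(Z, U),
      (∀ y : A.sec ⟨Z.basicOpen f, trivial⟩, ∃ (p : ℕ) (m : A.sec ⟨U, trivial⟩),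
        (str (Z.basicOpen f) (Z.presheaf.map (homOfLE (Z.basicOpen_le f)).op f)) ^ p * y =
          A.res (U := ⟨U, trivial⟩) (V := ⟨Z.basicOpen f, trivial⟩) (Z.basicOpen_le f) m) ∧
      (∀ m : A.sec ⟨U, trivial⟩,
        A.res (U := ⟨U, trivial⟩) (V := ⟨Z.basicOpen f, trivial⟩) (Z.basicOpen_le f) m = 0 →
          ∃ p : ℕ, (str U f) ^ p * m = 0))
    -- `W ⊆ Aff(Z)`, closed under pairwise intersections, covering `Z`:
    (W : Set Z.Opens)
    (hWaff : W ⊆ Z.affineOpens)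
    (hWinter : ∀ U V : Z.Opens, U ∈ W → V ∈ W → U ⊓ V ∈ W)
    (hWcover : (⨆ U : W, (U : Z.Opens)) = ⊤)
    -- `M, N ∈ μ(A_Z)`:
    (M N : LModData k Z Set.univ A)
    (hM : M.IsSheafCond) (hMq : IsQCohMod str M)
    (hN : N.IsSheafCond) (hNq : IsQCohMod str N) :
    -- `n = 0`: `j*` is bijective on `Hom`:
    (Function.Bijective
      (fun φ : LModHom M N => φ.reindex (Set.subset_univ W))) ∧
    -- `n ≥ 1`: `j*` is exact (sends extensions in `μ(A_Z)` to sectionwise exact sequences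
    -- of presheaves of `A_W`-modules) and induces a bijection on Yoneda Ext:
    ∀ n : ℕ, 1 ≤ n →
      (∀ E : {E : NExt n M N //
          (∀ i, (E.obj i).IsSheafCond ∧ IsQCohMod str (E.obj i)) ∧ E.LocallyExact},
        (E.1.reindex (Set.subset_univ W)).SectionwiseExact) ∧
      ∃ Φ : YExt n M N
            (fun E => (∀ i, (E.obj i).IsSheafCond ∧ IsQCohMod str (E.obj i)) ∧
              E.LocallyExact) →
          YExt n (M.reindex (Set.subset_univ W)) (N.reindex (Set.subset_univ W))
            (fun E' => E'.SectionwiseExact),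
        Function.Bijective Φ ∧
        ∀ (E : {E : NExt n M N //
            (∀ i, (E.obj i).IsSheafCond ∧ IsQCohMod str (E.obj i)) ∧ E.LocallyExact})
          (E' : {E' : NExt n (M.reindex (Set.subset_univ W))
              (N.reindex (Set.subset_univ W)) // E'.SectionwiseExact}),
          E'.1 = E.1.reindex (Set.subset_univ W) →
          Φ (Quot.mk _ E) = Quot.mk _ E' := by
  have hdiag : IsAffineHom (Limits.pullback.diagonal (Limits.terminal.from Z)) := by
    have := hsep.isSeparated_terminal_from
    infer_instance
  have locA : Loc (fun U : (Set.univ : Set Z.Opens) => str U.1) A.self := by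
    rintro ⟨U, _⟩ ⟨V, _⟩ hU f hV hle
    change V = _ at hV
    subst hV
    exact hAqcoh U hU f
  have S : Standing (fun U : (Set.univ : Set Z.Opens) => str U.1) W :=
    { strRes := fun h c => str_res h c
      locA := locA
      stable := ⟨fun V hV => hWaff hV, fun V hV V' hV' => hWinter V V' hV hV'⟩
      cover := hWcover
      compact := hqc
      inf := fun _ _ hU hV => hU.inf hV }
  have hM' : IsMu (fun U : (Set.univ : Set Z.Opens) => str U.1) M := ⟨hM, .of_isQCohMod hMq⟩
  have hN' : IsMu (fun U : (Set.univ : Set Z.Opens) => str U.1) N := ⟨hN, .of_isQCohMod hNq⟩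
  refine ⟨⟨fun f g h => S.hom_ext hM'.loc hN fun U x => ?_, fun φ => S.exists_reindex_eq hM' hN' φ⟩,
    fun n hn => S.exists_yExt_bijective hM' hN' hn fun E => and_congr_left' (forall_congr' fun i =>
      ⟨fun h => ⟨h.1, .of_isQCohMod h.2⟩, fun h => ⟨h.sheaf, h.loc.isQCohMod⟩⟩)⟩
  exact congrArg (fun ψ : LModHom (M.reindex (Set.subset_univ W))
    (N.reindex (Set.subset_univ W)) => ψ.app U x) h

end
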